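/- Suppose α > max(d/2, 1) (so that 𝔼[z(0)] < ∞). Then for every R > 0, ℙ-almost surely, sup over x ∈ ℤ^{1+d} with |x| ≤ R t^{1/2} of |P^ω₀(X_t = x) / P̄₀(X_t = x) − 1| tends to 0 as t → ∞, where P̄₀(X_t = x) := P₀((S¹_{𝔼[z(0)]·t}, S²_t) = x) is the transition probability of the walk in the averaged conductance 𝔼[ω]. -/

import Mathlib

open MeasureTheory ProbabilityTheory Filter Set

noncomputable section

/-- `n`-step transition probabilities of the discrete-time simple random walk on `ℤ^m`. -/
def srwKernel (m : ℕ) : ℕ → (Fin m → ℤ) → (Fin m → ℤ) → ℝ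
  | 0, x, y => if x = y then 1 else 0
  | n + 1, x, y =>
      (∑ i : Fin m, (srwKernel m n (Function.update x i (x i + 1)) y
        + srwKernel m n (Function.update x i (x i - 1)) y)) / (2 * m)

/-- Transition kernel of the continuous-time simple random walk on `ℤ^m` which jumps to
each of its `2m` nearest neighbours at rate `1` (total jump rate `2m`). -/
def heatKernel (m : ℕ) (t : ℝ) (x y : Fin m → ℤ) : ℝ :=
  ∑' n : ℕ, Real.exp (-(2 * m) * t) * ((2 * m) * t) ^ n / n.factorial * srwKernel m n x y

/-- `(P, S)` is (a realization of) the continuous-time simple random walk on `ℤ^m`: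
under `P x` the process `S` starts at `x`, has right-continuous (piecewise constant)
paths, and its finite-dimensional distributions are given by the heat kernel. -/
structure IsCTSRW (m : ℕ) {Ω : Type*} [MeasurableSpace Ω]
    (P : (Fin m → ℤ) → Measure Ω) (S : ℝ → Ω → (Fin m → ℤ)) : Prop where
  prob : ∀ x, IsProbabilityMeasure (P x)
  meas : Measurable fun p : ℝ × Ω => S p.1 p.2
  start : ∀ x, ∀ᵐ ω ∂ P x, S 0 ω = x
  rightCont : ∀ x, ∀ᵐ ω ∂ P x, ∀ t : ℝ, 0 ≤ t →
    ∃ ε > (0 : ℝ), ∀ u, t ≤ u → u < t + ε → S u ω = S t ω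
  fdd : ∀ x (n : ℕ) (t : Fin (n + 1) → ℝ), 0 ≤ t 0 →
    (∀ i : Fin n, t i.castSucc ≤ t i.succ) →
    ∀ y : Fin (n + 1) → (Fin m → ℤ),
      (P x {ω | ∀ i, S (t i) ω = y i}).toReal
        = heatKernel m (t 0) x (y 0)
          * ∏ i : Fin n, heatKernel m (t i.succ - t i.castSucc) (y i.castSucc) (y i.succ)

/-- `z` is an i.i.d. nonnegative random scenery on `ℤ^d` whose common upper tail decays
like `r^{-α+o(1)}`. -/
structure IsScenery (d : ℕ) (α : ℝ) {Ω : Type*} [MeasurableSpace Ω]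
    (μ : Measure Ω) (z : (Fin d → ℤ) → Ω → ℝ) : Prop where
  prob : IsProbabilityMeasure μ
  meas : ∀ x, Measurable (z x)
  nonneg : ∀ x ω, 0 ≤ z x ω
  indep : iIndepFun z μ
  ident : ∀ x, IdentDistrib (z x) (z 0) μ μ
  tail : Tendsto (fun r : ℝ => Real.log (μ {ω | r < z 0 ω}).toReal / Real.log r)
    atTop (nhds (-α))

/-- The random walk in random scenery `A(t) = ∫₀ᵗ z(S_u) du`. -/
def rwrs {Ωz Ωw : Type*} (d : ℕ) (z : (Fin d → ℤ) → Ωz → ℝ)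
    (S : ℝ → Ωw → (Fin d → ℤ)) (t : ℝ) (ζ : Ωz) (ω : Ωw) : ℝ :=
  ∫ u in Set.Ioc (0 : ℝ) t, z (S u ω) ζ

end
open MeasureTheory ProbabilityTheory Filter Set

noncomputable section

/-- The clock process `A²(t) = ∫₀ᵗ z(S²_u) du`, where `S²` is the second (ℤ^d-valued)
component of the walk on `ℤ^{1+d}`. -/
def clock (d : ℕ) {Ωz Ωw : Type*} (z : (Fin d → ℤ) → Ωz → ℝ)
    (S : ℝ → Ωw → (Fin (d + 1) → ℤ)) (t : ℝ) (ζ : Ωz) (ω : Ωw) : ℝ :=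
  ∫ u in Set.Ioc (0 : ℝ) t, z (fun i => S u ω i.succ) ζ

/-- The variable-speed random walk `X_t = (S¹_{A²(t)}, S²_t)` in the layered conductance
field `ω(x, x±e₁) = z(x₂)`, `ω(x, x±e_i) = 1` for `i ≥ 2` (coordinate `0` of the walk on
`ℤ^{1+d}` is the ℤ-coordinate, coordinates `1,…,d` form the ℤ^d-coordinate). -/
def layeredWalk (d : ℕ) {Ωz Ωw : Type*} (z : (Fin d → ℤ) → Ωz → ℝ)
    (S : ℝ → Ωw → (Fin (d + 1) → ℤ)) (t : ℝ) (ζ : Ωz) (ω : Ωw) : ℤ × (Fin d → ℤ) :=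
  (S (clock d z S t ζ ω) ω 0, fun i => S t ω i.succ)

/-- Euclidean norm of a point of `ℤ^{1+d} = ℤ × ℤ^d`. -/
def euclNormProd (d : ℕ) (x : ℤ × (Fin d → ℤ)) : ℝ :=
  Real.sqrt ((x.1 : ℝ) ^ 2 + ∑ i, (x.2 i : ℝ) ^ 2)

end

open MeasureTheory ProbabilityTheory Filter Set

/-! ### Fourier representation of the kernels -/

/-- normalized Lebesgue measure on `(-π, π]`. -/
noncomputable def nuM : Measure ℝ :=
  ENNReal.ofReal (2 * Real.pi)⁻¹ • (volume.restrict (Set.Ioc (-Real.pi) Real.pi))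

instance nuM_prob : IsProbabilityMeasure nuM := by
  constructor
  have h : (0:ℝ) < 2 * Real.pi := by positivity
  simp only [nuM, Measure.smul_apply, Measure.restrict_apply MeasurableSet.univ, univ_inter,
    Real.volume_Ioc, smul_eq_mul]
  rw [← ENNReal.ofReal_mul (by positivity), show Real.pi - -Real.pi = 2 * Real.pi by ring,
    inv_mul_cancel₀ h.ne', ENNReal.ofReal_one]

lemma integral_nuM (f : ℝ → ℝ) :
    ∫ θ, f θ ∂nuM = (2 * Real.pi)⁻¹ * ∫ θ in (-Real.pi)..Real.pi, f θ := by
  have h : (0:ℝ) < Real.pi := by positivity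
  rw [nuM, integral_smul_measure, ENNReal.toReal_ofReal (by positivity),
    intervalIntegral.integral_of_le (by linarith), smul_eq_mul]

/-- one-dimensional heat kernel -/
noncomputable def qk (t : ℝ) (k : ℤ) : ℝ :=
  ∫ θ, Real.exp (-(2 * t * (1 - Real.cos θ))) * Real.cos (k * θ) ∂nuM

/-- `m`-dimensional heat kernel -/
noncomputable def pk (m : ℕ) (t : ℝ) (x : Fin m → ℤ) : ℝ := ∏ i, qk t (x i)

/-- product measure -/
noncomputable def nuP (m : ℕ) : Measure (Fin m → ℝ) := Measure.pi fun _ : Fin m => nuM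

instance nuP_prob (m : ℕ) : IsProbabilityMeasure (nuP m) := by
  unfold nuP; infer_instance

/-- The averaged cosine -/
noncomputable def phiM (m : ℕ) (θ : Fin m → ℝ) : ℝ := (∑ i, Real.cos (θ i)) / m

lemma phiM_abs (m : ℕ) (θ : Fin m → ℝ) : |phiM m θ| ≤ 1 := by
  unfold phiM
  rcases Nat.eq_zero_or_pos m with h | h
  · subst h; simp
  · have hm : (0:ℝ) < m := by exact_mod_cast h
    rw [abs_div, abs_of_pos hm, div_le_one hm]
    calc |∑ i, Real.cos (θ i)| ≤ ∑ i, |Real.cos (θ i)| := Finset.abs_sum_le_sum_abs _ _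
      _ ≤ ∑ i : Fin m, (1:ℝ) := Finset.sum_le_sum fun i _ => Real.abs_cos_le_one _
      _ = m := by simp

lemma phiM_meas (m : ℕ) : Continuous (phiM m) := by
  unfold phiM; fun_prop

lemma pk_eq (m : ℕ) (t : ℝ) (x : Fin m → ℤ) :
    pk m t x = ∫ θ, (∏ i, Real.exp (-(2 * t * (1 - Real.cos (θ i))))) *
      ∏ i, Real.cos (x i * θ i) ∂nuP m := by
  unfold pk qk nuP
  rw [← integral_fintype_prod_eq_prod (fun (i : Fin m) (θ : ℝ) =>
    Real.exp (-(2 * t * (1 - Real.cos θ))) * Real.cos (x i * θ))]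
  simp only [Finset.prod_mul_distrib]

lemma integral_cos_nuM (k : ℤ) : ∫ θ, Real.cos (k * θ) ∂nuM = if k = 0 then 1 else 0 := by
  split_ifs with h
  · subst h; simp
  · rw [integral_nuM]
    have hk : (k:ℝ) ≠ 0 := by exact_mod_cast h
    rw [intervalIntegral.integral_comp_mul_left (fun x => Real.cos x) hk, integral_cos]
    have h1 : Real.sin (k * Real.pi) = 0 := Real.sin_int_mul_pi k
    have h2 : Real.sin (k * -Real.pi) = 0 := by rw [mul_neg, Real.sin_neg, h1, neg_zero]
    simp [h1]

lemma prodcos_abs (m : ℕ) (a θ : Fin m → ℝ) : |∏ i, Real.cos (a i * θ i)| ≤ 1 := by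
  rw [Finset.abs_prod]
  exact Finset.prod_le_one (fun _ _ => abs_nonneg _) fun i _ => Real.abs_cos_le_one _

lemma prod_update_cos (m : ℕ) (g : Fin m → ℝ) (y x : Fin m → ℤ) (i : Fin m) :
    (∏ j, Real.cos (((y j - Function.update x i (x i + 1) j : ℤ) : ℝ) * g j))
     + (∏ j, Real.cos (((y j - Function.update x i (x i - 1) j : ℤ) : ℝ) * g j))
     = 2 * Real.cos (g i) * ∏ j, Real.cos (((y j - x j : ℤ) : ℝ) * g j) := by
  have key : ∀ v : ℤ, (∏ j, Real.cos (((y j - Function.update x i v j : ℤ) : ℝ) * g j))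
      = Real.cos (((y i - v : ℤ):ℝ) * g i) *
        ∏ j ∈ Finset.univ.erase i, Real.cos (((y j - x j : ℤ) : ℝ) * g j) := by
    intro v
    rw [← Finset.mul_prod_erase _ _ (Finset.mem_univ i)]
    congr 1
    · simp
    · apply Finset.prod_congr rfl
      intro j hj
      rw [Function.update_of_ne (Finset.ne_of_mem_erase hj)]
  rw [key, key, ← Finset.mul_prod_erase _ _ (Finset.mem_univ i), ← add_mul, ← mul_assoc]
  congr 1
  have e1 : ((y i - (x i + 1) : ℤ):ℝ) * g i = ((y i - x i : ℤ):ℝ) * g i - g i := by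
    push_cast; ring
  have e2 : ((y i - (x i - 1) : ℤ):ℝ) * g i = ((y i - x i : ℤ):ℝ) * g i + g i := by
    push_cast; ring
  rw [e1, e2, Real.cos_sub, Real.cos_add]; ring

lemma integrable_bdd {X : Type*} [MeasurableSpace X] (ν : Measure X) [IsFiniteMeasure ν]
    (f : X → ℝ) (hf : Measurable f) (C : ℝ) (h : ∀ x, |f x| ≤ C) : Integrable f ν :=
  Integrable.of_bound hf.aestronglyMeasurable C (Eventually.of_forall h)

lemma fourier_integrable (m n : ℕ) (a : Fin m → ℝ) :
    Integrable (fun θ => phiM m θ ^ n * ∏ i, Real.cos (a i * θ i)) (nuP m) := by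
  apply integrable_bdd _ _ _ 1
  · intro θ
    rw [abs_mul, abs_pow]
    exact mul_le_one₀ (pow_le_one₀ (abs_nonneg _) (phiM_abs m θ)) (abs_nonneg _)
      (prodcos_abs m a θ)
  · have := (phiM_meas m).measurable
    fun_prop

lemma srw_fourier (m : ℕ) (hm : 1 ≤ m) (n : ℕ) : ∀ x y : Fin m → ℤ,
    srwKernel m n x y = ∫ θ, phiM m θ ^ n * ∏ i, Real.cos (((y i - x i : ℤ):ℝ) * θ i) ∂nuP m := by
  induction n with
  | zero =>
    intro x y
    simp only [srwKernel, pow_zero, one_mul]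
    unfold nuP
    rw [integral_fintype_prod_eq_prod (fun (i : Fin m) (θ : ℝ) =>
      Real.cos (((y i - x i : ℤ):ℝ) * θ))]
    simp only [integral_cos_nuM, sub_eq_zero]
    rw [Finset.prod_ite_zero]
    simp only [Finset.mem_univ, true_implies, Finset.prod_const_one]
    congr 1
    rw [funext_iff]
    simp [eq_comm]
  | succ n ih =>
    intro x y
    have hm' : (m:ℝ) ≠ 0 := by positivity
    simp only [srwKernel, ih]
    have : ∀ i : Fin m, (∫ θ, phiM m θ ^ n * ∏ j, Real.cos (((y j - Function.update x i (x i + 1) j : ℤ):ℝ) * θ j) ∂nuP m)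
      + (∫ θ, phiM m θ ^ n * ∏ j, Real.cos (((y j - Function.update x i (x i - 1) j : ℤ):ℝ) * θ j) ∂nuP m)
      = ∫ θ, phiM m θ ^ n * (2 * Real.cos (θ i) * ∏ j, Real.cos (((y j - x j : ℤ) : ℝ) * θ j)) ∂nuP m := by
      intro i
      rw [← integral_add (fourier_integrable m n _) (fourier_integrable m n _)]
      congr 1; ext θ
      rw [← mul_add, prod_update_cos]
    simp only [this]
    rw [← integral_finsetSum, ← integral_div]
    · congr 1; ext θ
      rw [← Finset.mul_sum, ← Finset.sum_mul, ← Finset.mul_sum, pow_succ]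
      have : ∑ i, Real.cos (θ i) = m * phiM m θ := by unfold phiM; field_simp
      rw [this]; field_simp
    · intro i _
      apply integrable_bdd _ _ _ (1 * (2 * 1 * 1))
      · intro θ
        rw [abs_mul, abs_pow, abs_mul, abs_mul, abs_two]
        gcongr
        · exact pow_le_one₀ (abs_nonneg _) (phiM_abs m θ)
        · exact Real.abs_cos_le_one _
        · exact prodcos_abs m _ θ
      · have := (phiM_meas m).measurable
        fun_prop

lemma srw_nonneg (m n : ℕ) : ∀ x y : Fin m → ℤ, 0 ≤ srwKernel m n x y := by
  induction n with
  | zero => intro x y; simp only [srwKernel]; split_ifs <;> norm_num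
  | succ n ih =>
    intro x y
    simp only [srwKernel]
    apply div_nonneg _ (by positivity)
    exact Finset.sum_nonneg fun i _ => add_nonneg (ih _ _) (ih _ _)

lemma HasSum.conv {X : Type*} {f g : X → ℝ} {a b : ℝ} (h : HasSum f a) (h1 : ∀ x, g x = f x)
    (h2 : b = a) : HasSum g b := by
  rw [h2, funext h1]; exact h

/-- Poisson weights -/
noncomputable def poi (a : ℝ) (n : ℕ) : ℝ := Real.exp (-a) * a ^ n / n.factorial

lemma poi_hasSum (a ρ : ℝ) : HasSum (fun n => poi a n * ρ ^ n) (Real.exp (a * (ρ - 1))) := by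
  have h := (NormedSpace.expSeries_div_hasSum_exp (𝔸 := ℝ) (a * ρ)).mul_left (Real.exp (-a))
  have e : Real.exp (a * (ρ - 1)) = Real.exp (-a) * NormedSpace.exp (a * ρ) := by
    rw [← Real.exp_eq_exp_ℝ, ← Real.exp_add]; ring_nf
  refine h.conv (fun n => ?_) e
  unfold poi; rw [mul_pow]; ring

lemma poi_nonneg (a : ℝ) (ha : 0 ≤ a) (n : ℕ) : 0 ≤ poi a n := by unfold poi; positivity

lemma heat_eq_tsum (m : ℕ) (t : ℝ) (x y : Fin m → ℤ) :
    heatKernel m t x y = ∑' n, poi (2 * m * t) n * srwKernel m n x y := by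
  unfold heatKernel poi
  congr 1; ext n; ring_nf

lemma srw_le_one (m : ℕ) (hm : 1 ≤ m) (n : ℕ) (x y : Fin m → ℤ) : srwKernel m n x y ≤ 1 := by
  rw [srw_fourier m hm]
  refine (le_abs_self _).trans ?_
  rw [← Real.norm_eq_abs]
  refine (norm_integral_le_of_norm_le_const (C := 1) (Eventually.of_forall fun θ => ?_)).trans ?_
  · rw [Real.norm_eq_abs, abs_mul, abs_pow]
    exact mul_le_one₀ (pow_le_one₀ (abs_nonneg _) (phiM_abs m θ)) (abs_nonneg _)
      (prodcos_abs m _ θ)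
  · simp

lemma heat_hasSum (m : ℕ) (hm : 1 ≤ m) (t : ℝ) (x y : Fin m → ℤ) :
    HasSum (fun n => poi (2 * m * t) n * srwKernel m n x y) (pk m t (fun i => y i - x i)) := by
  have hs : Summable fun n => |poi (2 * m * t) n| := by
    have := (poi_hasSum (|2 * m * t|) 1).summable.mul_left (Real.exp (|2 * m * t|) * Real.exp (-(2 * m * t)))
    refine this.congr fun n => ?_
    unfold poi
    generalize 2 * m * t = b
    rw [abs_div, abs_mul, abs_pow, abs_of_pos (Real.exp_pos _), Real.exp_neg (|b|)]
    have : Real.exp (|b|) ≠ 0 := (Real.exp_pos _).ne'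
    simp only [one_pow, mul_one, Nat.abs_cast]
    field_simp
  have key := hasSum_integral_of_summable_integral_norm (μ := nuP m)
    (F := fun n θ => poi (2 * m * t) n * (phiM m θ ^ n * ∏ i, Real.cos (((y i - x i : ℤ):ℝ) * θ i)))
    (fun n => (fourier_integrable m n _).const_mul _) ?_
  · refine key.conv (fun n => ?_) ?_
    · rw [integral_const_mul, srw_fourier m hm]
    · rw [pk_eq]
      congr 1; ext θ
      have h1 := ((poi_hasSum (2 * m * t) (phiM m θ)).mul_right
        (∏ i, Real.cos (((y i - x i : ℤ):ℝ) * θ i))).tsum_eq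
      simp only [mul_assoc] at h1 ⊢
      rw [h1]
      congr 1
      rw [← Real.exp_sum]
      congr 1
      have hm' : (m:ℝ) ≠ 0 := by positivity
      unfold phiM
      simp only [Finset.sum_neg_distrib, ← Finset.mul_sum, Finset.sum_sub_distrib,
        Finset.sum_const, Finset.card_univ, Fintype.card_fin, nsmul_eq_mul]
      field_simp
      ring
  · refine Summable.of_nonneg_of_le (fun n => integral_nonneg fun _ => norm_nonneg _) (fun n => ?_) hs
    have : ∀ θ, ‖poi (2 * m * t) n * (phiM m θ ^ n * ∏ i, Real.cos (((y i - x i : ℤ):ℝ) * θ i))‖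
        ≤ |poi (2 * m * t) n| := by
      intro θ
      rw [Real.norm_eq_abs, abs_mul, abs_mul, abs_pow]
      exact mul_le_of_le_one_right (abs_nonneg _)
        (mul_le_one₀ (pow_le_one₀ (abs_nonneg _) (phiM_abs m θ)) (abs_nonneg _)
        (prodcos_abs m _ θ))
    calc _ ≤ ∫ θ, |poi (2 * m * t) n| ∂nuP m := by
          apply integral_mono_of_nonneg (Eventually.of_forall fun _ => norm_nonneg _)
            (integrable_const _) (Eventually.of_forall this)
      _ = _ := by simp

lemma heat_eq (m : ℕ) (hm : 1 ≤ m) (t : ℝ) (x y : Fin m → ℤ) :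
    heatKernel m t x y = pk m t (fun i => y i - x i) := by
  rw [heat_eq_tsum, (heat_hasSum m hm t x y).tsum_eq]

open MeasureTheory ProbabilityTheory Filter Set

/-! ### Eigenfunction sums, Chapman-Kolmogorov -/

/-- `G` is an eigenfunction of the averaging operator with eigenvalue `ρ`. -/
def IsEig (m : ℕ) (ρ : ℝ) (G : (Fin m → ℤ) → ℝ) : Prop :=
  ∀ x, ∑ i : Fin m, (G (Function.update x i (x i + 1)) + G (Function.update x i (x i - 1)))
    = 2 * m * ρ * G x

lemma srw_eig (m : ℕ) (hm : 1 ≤ m) (ρ : ℝ) (G : (Fin m → ℤ) → ℝ) (hG : IsEig m ρ G) (n : ℕ) :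
    ∀ x, HasSum (fun y => srwKernel m n x y * G y) (ρ ^ n * G x) := by
  induction n with
  | zero =>
    intro x
    have := hasSum_ite_eq x (G x)
    refine this.conv (fun y => ?_) (by simp)
    simp only [srwKernel]
    by_cases h : x = y
    · simp [h]
    · simp [h, Ne.symm h]
  | succ n ih =>
    intro x
    have hm' : (m:ℝ) ≠ 0 := by positivity
    have h := (hasSum_sum (s := Finset.univ) (fun i (_ : i ∈ Finset.univ) =>
      (ih (Function.update x i (x i + 1))).add (ih (Function.update x i (x i - 1))))).div_const
        (2 * (m:ℝ))
    refine h.conv (fun y => ?_) ?_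
    · simp only [srwKernel]
      rw [div_mul_eq_mul_div, Finset.sum_mul]
      simp only [add_mul]
    · simp only [← mul_add]
      rw [← Finset.mul_sum, hG x]
      field_simp
      ring

lemma pk_nonneg (m : ℕ) (hm : 1 ≤ m) (t : ℝ) (ht : 0 ≤ t) (x : Fin m → ℤ) : 0 ≤ pk m t x := by
  have h := heat_hasSum m hm t 0 x
  simp only [Pi.zero_apply, sub_zero] at h
  exact h.nonneg fun n => mul_nonneg (poi_nonneg _ (by positivity) n) (srw_nonneg _ _ _ _)

lemma pk_eig (m : ℕ) (hm : 1 ≤ m) (t : ℝ) (ht : 0 ≤ t) (ρ ρ' : ℝ) (G H : (Fin m → ℤ) → ℝ)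
    (hG : IsEig m ρ G) (hH : IsEig m ρ' H) (hGH : ∀ x, |G x| ≤ H x) (x : Fin m → ℤ) :
    HasSum (fun y : Fin m → ℤ => pk m t (fun i => y i - x i) * G y)
      (Real.exp (2 * m * t * (ρ - 1)) * G x) := by
  set a : ℝ := 2 * m * t with ha_def
  have ha : 0 ≤ a := by positivity
  have row : ∀ (ρ : ℝ) (G : (Fin m → ℤ) → ℝ), IsEig m ρ G → ∀ n,
      HasSum (fun y => poi a n * srwKernel m n x y * G y) (poi a n * ρ ^ n * G x) := by
    intro ρ G hG n
    refine ((srw_eig m hm ρ G hG n x).mul_left (poi a n)).conv (fun y => ?_) ?_ <;> ring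
  have hsum : Summable fun p : ℕ × (Fin m → ℤ) => poi a p.1 * srwKernel m p.1 x p.2 * G p.2 := by
    apply Summable.of_norm_bounded
      (g := fun p : ℕ × (Fin m → ℤ) => poi a p.1 * srwKernel m p.1 x p.2 * H p.2)
    · rw [summable_prod_of_nonneg]
      · refine ⟨fun n => (row ρ' H hH n).summable, ?_⟩
        simp only [fun n => (row ρ' H hH n).tsum_eq]
        exact (poi_hasSum a ρ').summable.mul_right _
      · intro p
        exact mul_nonneg (mul_nonneg (poi_nonneg _ ha _) (srw_nonneg _ _ _ _))
          ((abs_nonneg _).trans (hGH _))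
    · intro p
      rw [Real.norm_eq_abs, abs_mul, abs_of_nonneg
        (mul_nonneg (poi_nonneg _ ha _) (srw_nonneg _ _ _ _))]
      exact mul_le_mul_of_nonneg_left (hGH _) (mul_nonneg (poi_nonneg _ ha _) (srw_nonneg _ _ _ _))
  have h1 := hsum.hasSum.prod_fiberwise (row ρ G hG)
  have h2 : HasSum (fun n => poi a n * ρ ^ n * G x) (Real.exp (a * (ρ - 1)) * G x) :=
    (poi_hasSum a ρ).mul_right _
  have h3 := hsum.hasSum
  rw [h1.unique h2] at h3
  have h4 : HasSum (fun p : (Fin m → ℤ) × ℕ => poi a p.2 * srwKernel m p.2 x p.1 * G p.1)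
    (Real.exp (a * (ρ - 1)) * G x) := by
    exact (Equiv.prodComm _ _).hasSum_iff.mp h3
  exact h4.prod_fiberwise fun y => (heat_hasSum m hm t x y).mul_right (G y)

lemma isEig_one (m : ℕ) : IsEig m 1 (fun _ => 1) := by
  intro x; simp; ring

lemma isEig_cos (m : ℕ) (hm : 1 ≤ m) (k : Fin m → ℤ) (θ : Fin m → ℝ) :
    IsEig m (phiM m θ) (fun y => ∏ i, Real.cos (((k i - y i : ℤ):ℝ) * θ i)) := by
  intro x
  simp only [prod_update_cos]
  have hm' : (m:ℝ) ≠ 0 := by positivity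
  rw [← Finset.sum_mul, ← Finset.mul_sum]
  unfold phiM; field_simp

lemma isEig_cosh (m : ℕ) (hm : 1 ≤ m) (j : Fin m) (θ : ℝ) :
    IsEig m ((m - 1 + Real.cosh θ) / m) (fun y => Real.cosh (y j * θ)) := by
  intro x
  have hm' : (m:ℝ) ≠ 0 := by positivity
  have : ∀ i : Fin m, (Real.cosh ((Function.update x i (x i + 1) j : ℤ) * θ) +
     Real.cosh ((Function.update x i (x i - 1) j : ℤ) * θ)) =
      2 * Real.cosh (x j * θ) + if i = j then (2 * Real.cosh θ - 2) * Real.cosh (x j * θ) else 0 := by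
    intro i
    split_ifs with h
    · subst h
      simp only [Function.update_self]
      push_cast
      rw [add_mul, sub_mul, one_mul, Real.cosh_add, Real.cosh_sub]; ring
    · rw [Function.update_of_ne (Ne.symm h), Function.update_of_ne (Ne.symm h)]; ring
  simp only [this, Finset.sum_add_distrib, Finset.sum_const, Finset.card_univ, Fintype.card_fin,
    nsmul_eq_mul, Finset.sum_ite_eq', Finset.mem_univ, if_true]
  field_simp
  ring

lemma pk_sum (m : ℕ) (hm : 1 ≤ m) (t : ℝ) (ht : 0 ≤ t) : HasSum (pk m t) 1 := by
  have := pk_eig m hm t ht 1 1 _ _ (isEig_one m) (isEig_one m) (by simp) 0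
  refine this.conv (fun y => by simp) (by simp)

lemma pk_le_one (m : ℕ) (hm : 1 ≤ m) (t : ℝ) (ht : 0 ≤ t) (x : Fin m → ℤ) : pk m t x ≤ 1 :=
  le_hasSum (pk_sum m hm t ht) x fun y _ => pk_nonneg m hm t ht y

lemma pk_cosh (m : ℕ) (hm : 1 ≤ m) (t : ℝ) (ht : 0 ≤ t) (j : Fin m) (θ : ℝ) :
    HasSum (fun y => pk m t y * Real.cosh (y j * θ)) (Real.exp (2 * t * (Real.cosh θ - 1))) := by
  have := pk_eig m hm t ht _ _ _ _ (isEig_cosh m hm j θ) (isEig_cosh m hm j θ)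
    (fun x => by rw [abs_of_pos (Real.cosh_pos _)]) 0
  have hm' : (m:ℝ) ≠ 0 := by positivity
  refine this.conv (fun y => by simp) ?_
  simp only [Pi.zero_apply, Int.cast_zero, zero_mul, Real.cosh_zero, mul_one]
  congr 1; field_simp; ring

lemma pk_CK (m : ℕ) (hm : 1 ≤ m) (s t : ℝ) (hs : 0 ≤ s) (ht : 0 ≤ t) (k : Fin m → ℤ) :
    HasSum (fun y : Fin m → ℤ => pk m s y * pk m t (fun i => k i - y i)) (pk m (s + t) k) := by
  have hE : ∀ θ : Fin m → ℝ, |∏ i, Real.exp (-(2 * t * (1 - Real.cos (θ i))))| ≤ 1 := by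
    intro θ
    rw [Finset.abs_prod]
    apply Finset.prod_le_one (fun _ _ => abs_nonneg _)
    intro i _
    rw [abs_of_pos (Real.exp_pos _), Real.exp_le_one_iff]
    have := Real.cos_le_one (θ i)
    have : 0 ≤ 2 * t * (1 - Real.cos (θ i)) := mul_nonneg (by positivity) (by linarith)
    linarith
  have key := hasSum_integral_of_summable_integral_norm (μ := nuP m)
    (F := fun (y : Fin m → ℤ) θ => pk m s y * ((∏ i, Real.exp (-(2 * t * (1 - Real.cos (θ i))))) *
      ∏ i, Real.cos (((k i - y i : ℤ):ℝ) * θ i))) ?_ ?_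
  · refine key.conv (fun y => ?_) ?_
    · rw [integral_const_mul, pk_eq m t]
    · rw [pk_eq]
      congr 1; ext θ
      have h := pk_eig m hm s hs _ _ _ _ (isEig_cos m hm k θ) (isEig_one m)
        (fun x => prodcos_abs m _ θ) 0
      have h2 := (h.mul_left (∏ i, Real.exp (-(2 * t * (1 - Real.cos (θ i)))))).tsum_eq
      simp only [Pi.zero_apply, sub_zero] at h2
      have h3 : ∀ y : Fin m → ℤ, pk m s y * ((∏ i, Real.exp (-(2 * t * (1 - Real.cos (θ i))))) *
          ∏ i, Real.cos (((k i - y i : ℤ):ℝ) * θ i)) =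
          (∏ i, Real.exp (-(2 * t * (1 - Real.cos (θ i))))) * (pk m s y *
          ∏ i, Real.cos (((k i - y i : ℤ):ℝ) * θ i)) := fun y => by ring
      simp only [h3]
      rw [h2, ← mul_assoc]
      congr 1
      rw [← Real.exp_sum, ← Real.exp_sum, ← Real.exp_add]
      congr 1
      have hm' : (m:ℝ) ≠ 0 := by positivity
      unfold phiM
      simp only [Finset.sum_neg_distrib, ← Finset.mul_sum, Finset.sum_sub_distrib,
        Finset.sum_const, Finset.card_univ, Fintype.card_fin, nsmul_eq_mul]
      field_simp
      ring
  · intro y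
    apply Integrable.const_mul
    apply integrable_bdd _ _ _ 1
    · intro θ
      rw [abs_mul]
      exact mul_le_one₀ (hE θ) (abs_nonneg _) (prodcos_abs m _ θ)
    · fun_prop
  · refine Summable.of_nonneg_of_le (fun n => integral_nonneg fun _ => norm_nonneg _) (fun y => ?_)
      (pk_sum m hm s hs).summable
    have : ∀ θ : Fin m → ℝ, ‖pk m s y * ((∏ i, Real.exp (-(2 * t * (1 - Real.cos (θ i))))) *
      ∏ i, Real.cos (((k i - y i : ℤ):ℝ) * θ i))‖ ≤ pk m s y := by
      intro θ
      rw [Real.norm_eq_abs, abs_mul, abs_mul, abs_of_nonneg (pk_nonneg m hm s hs y)]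
      exact mul_le_of_le_one_right (pk_nonneg m hm s hs y)
        (mul_le_one₀ (hE θ) (abs_nonneg _) (prodcos_abs m _ θ))
    calc _ ≤ ∫ θ, pk m s y ∂nuP m := by
          apply integral_mono_of_nonneg (Eventually.of_forall fun _ => norm_nonneg _)
            (integrable_const _) (Eventually.of_forall this)
      _ = _ := by simp

lemma pk_zero_ge (m : ℕ) (hm : 1 ≤ m) (t : ℝ) (ht : 0 ≤ t) :
    Real.exp (-(2 * m * t)) ≤ pk m t 0 := by
  have h := heat_hasSum m hm t 0 0
  have h2 := le_hasSum h 0 fun n _ =>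
    mul_nonneg (poi_nonneg _ (by positivity) n) (srw_nonneg _ _ _ _)
  simpa [poi, srwKernel, Pi.zero_def] using h2

lemma pk_one (t : ℝ) (x : Fin 1 → ℤ) : pk 1 t x = qk t (x 0) := by simp [pk]

lemma qk_nonneg (t : ℝ) (ht : 0 ≤ t) (k : ℤ) : 0 ≤ qk t k := by
  have := pk_nonneg 1 le_rfl t ht (fun _ => k)
  rwa [pk_one] at this

lemma qk_sum (t : ℝ) (ht : 0 ≤ t) : HasSum (qk t) 1 := by
  have h := pk_sum 1 le_rfl t ht
  rw [← (Equiv.funUnique (Fin 1) ℤ).symm.hasSum_iff] at h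
  refine h.conv (fun k => ?_) rfl
  simp [pk]

lemma qk_le_one (t : ℝ) (ht : 0 ≤ t) (k : ℤ) : qk t k ≤ 1 :=
  le_hasSum (qk_sum t ht) k fun y _ => qk_nonneg t ht y

open MeasureTheory ProbabilityTheory Filter Set

/-! ### Analytic bounds on the one-dimensional kernel -/

lemma one_sub_cos_nonneg (θ : ℝ) : 0 ≤ 1 - Real.cos θ := by linarith [Real.cos_le_one θ]

lemma qk_integrable (t : ℝ) (ht : 0 ≤ t) (k : ℤ) :
    Integrable (fun θ => Real.exp (-(2 * t * (1 - Real.cos θ))) * Real.cos (k * θ)) nuM := by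
  apply integrable_bdd _ _ _ 1
  · intro θ
    rw [abs_mul, abs_of_pos (Real.exp_pos _)]
    refine mul_le_one₀ ?_ (abs_nonneg _) (Real.abs_cos_le_one _)
    rw [Real.exp_le_one_iff]
    have := mul_nonneg (mul_nonneg zero_le_two ht) (one_sub_cos_nonneg θ)
    linarith
  · fun_prop

lemma qk_zero_eq (t : ℝ) : qk t 0 = ∫ θ, Real.exp (-(2 * t * (1 - Real.cos θ))) ∂nuM := by
  simp [qk]

lemma qk_zero_integrable (t : ℝ) (ht : 0 ≤ t) :
    Integrable (fun θ => Real.exp (-(2 * t * (1 - Real.cos θ)))) nuM := by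
  have := qk_integrable t ht 0
  simpa using this

lemma qk_zero_le (t : ℝ) (ht : 0 < t) : qk t 0 ≤ 1 / Real.sqrt t := by
  rw [qk_zero_eq, integral_nuM]
  have hpi := Real.pi_pos
  set b : ℝ := 4 * t / Real.pi ^ 2 with hb
  have hb0 : 0 < b := by positivity
  have h1 : ∫ θ in (-Real.pi)..Real.pi, Real.exp (-(2 * t * (1 - Real.cos θ)))
      ≤ ∫ θ in (-Real.pi)..Real.pi, Real.exp (-b * θ ^ 2) := by
    apply intervalIntegral.integral_mono_on (by linarith)
    · exact Continuous.intervalIntegrable (by fun_prop) _ _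
    · exact Continuous.intervalIntegrable (by fun_prop) _ _
    · intro θ hθ
      apply Real.exp_le_exp.mpr
      have := Real.cos_le_one_sub_mul_cos_sq (x := θ) (abs_le.mpr hθ)
      have h2 : b * θ ^ 2 = 2 * t * (2 / Real.pi ^ 2 * θ ^ 2) := by rw [hb]; ring
      have h3 : 2 * t * (2 / Real.pi ^ 2 * θ ^ 2) ≤ 2 * t * (1 - Real.cos θ) := by
        apply mul_le_mul_of_nonneg_left _ (by positivity); linarith
      linarith
  have h2 : ∫ θ in (-Real.pi)..Real.pi, Real.exp (-b * θ ^ 2) ≤ Real.sqrt (Real.pi / b) := by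
    rw [← integral_gaussian, intervalIntegral.integral_of_le (by linarith)]
    apply setIntegral_le_integral (integrable_exp_neg_mul_sq hb0)
    exact Eventually.of_forall fun _ => (Real.exp_pos _).le
  have h3 : Real.sqrt (Real.pi / b) ≤ 2 * Real.pi * (1 / Real.sqrt t) := by
    have : Real.pi / b = Real.pi ^ 3 / 4 / t := by rw [hb]; field_simp
    rw [this, Real.sqrt_div' _ ht.le, mul_one_div]
    gcongr
    rw [Real.sqrt_le_left (by positivity)]
    nlinarith [Real.pi_le_four, sq_nonneg Real.pi]
  calc (2 * Real.pi)⁻¹ * _ ≤ (2 * Real.pi)⁻¹ * (2 * Real.pi * (1 / Real.sqrt t)) := by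
        gcongr; exact h1.trans (h2.trans h3)
    _ = _ := by field_simp

lemma qk_le_zero (t : ℝ) (ht : 0 ≤ t) (k : ℤ) : qk t k ≤ qk t 0 := by
  rw [qk_zero_eq]
  apply integral_mono (qk_integrable t ht k) (qk_zero_integrable t ht)
  intro θ
  exact mul_le_of_le_one_right (Real.exp_pos _).le (Real.cos_le_one _)

lemma qk_le (t : ℝ) (ht : 0 < t) (k : ℤ) : qk t k ≤ 1 / Real.sqrt t :=
  (qk_le_zero t ht.le k).trans (qk_zero_le t ht)

lemma qk_lip (s s' : ℝ) (hs : 0 < s) (h : s ≤ s') (k : ℤ) :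
    |qk s' k - qk s k| ≤ 4 * (s' - s) / (s * Real.sqrt s) := by
  have hb : |qk s' k - qk s k| ≤ 2 * (s' - s) / s * qk (s / 2) 0 := by
    unfold qk
    rw [← integral_sub (qk_integrable s' (hs.le.trans h) k) (qk_integrable s hs.le k),
      ← integral_const_mul, ← Real.norm_eq_abs]
    refine norm_integral_le_of_norm_le
      ((qk_integrable (s / 2) (by positivity) 0).const_mul _) (Eventually.of_forall fun θ => ?_)
    set f := 1 - Real.cos θ with hf
    have hf0 : 0 ≤ f := one_sub_cos_nonneg θ
    rw [Real.norm_eq_abs, ← sub_mul, abs_mul]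
    simp only [Int.cast_zero, zero_mul, Real.cos_zero, mul_one]
    have e1 : Real.exp (-(2 * s' * f)) = Real.exp (-(2 * s * f)) * Real.exp (-(2 * (s' - s) * f)) := by
      rw [← Real.exp_add]; ring_nf
    have e2 : Real.exp (-(2 * s * f)) = Real.exp (-(2 * (s / 2) * f)) * Real.exp (-(s * f)) := by
      rw [← Real.exp_add]; ring_nf
    have e3 : s * f * Real.exp (-(s * f)) ≤ 1 := by
      have := Real.add_one_le_exp (s * f)
      rw [Real.exp_neg, ← div_eq_mul_inv, div_le_one (Real.exp_pos _)]; linarith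
    have e4 : 1 - Real.exp (-(2 * (s' - s) * f)) ≤ 2 * (s' - s) * f := by
      have := Real.add_one_le_exp (-(2 * (s' - s) * f)); linarith
    have e5 : Real.exp (-(2 * (s' - s) * f)) ≤ 1 := by
      rw [Real.exp_le_one_iff]
      have := mul_nonneg (mul_nonneg zero_le_two (sub_nonneg.mpr h)) hf0
      linarith
    calc |Real.exp (-(2 * s' * f)) - Real.exp (-(2 * s * f))| * |Real.cos (k * θ)|
        ≤ |Real.exp (-(2 * s' * f)) - Real.exp (-(2 * s * f))| * 1 := by
          gcongr; exact Real.abs_cos_le_one _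
      _ = Real.exp (-(2 * s * f)) * (1 - Real.exp (-(2 * (s' - s) * f))) := by
          rw [mul_one, e1, abs_sub_comm, abs_of_nonneg]
          · ring
          · have := mul_le_of_le_one_right (Real.exp_pos (-(2 * s * f))).le e5
            linarith
      _ ≤ Real.exp (-(2 * s * f)) * (2 * (s' - s) * f) := by gcongr
      _ = 2 * (s' - s) / s * Real.exp (-(2 * (s / 2) * f)) * (s * f * Real.exp (-(s * f))) := by
          rw [e2]; field_simp
      _ ≤ 2 * (s' - s) / s * Real.exp (-(2 * (s / 2) * f)) * 1 := by
          have : 0 ≤ s' - s := sub_nonneg.mpr h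
          gcongr
      _ = _ := by rw [mul_one]
  have h2 := qk_zero_le (s / 2) (by positivity)
  have h3 : 1 / Real.sqrt (s / 2) ≤ 2 / Real.sqrt s := by
    rw [Real.sqrt_div hs.le, one_div_div]
    gcongr
    rw [Real.sqrt_le_left (by norm_num)]; norm_num
  have h4 : 0 ≤ s' - s := sub_nonneg.mpr h
  calc _ ≤ 2 * (s' - s) / s * qk (s / 2) 0 := hb
    _ ≤ 2 * (s' - s) / s * (2 / Real.sqrt s) := by gcongr; exact h2.trans h3
    _ = _ := by rw [div_mul_div_comm]; ring

lemma gaussian_cos (y : ℝ) : ∫ φ : ℝ, Real.cos (y * φ) * Real.exp (-φ ^ 2)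
    = Real.sqrt Real.pi * Real.exp (-y ^ 2 / 4) := by
  have h := fourierIntegral_gaussian (b := 1) (by simp) (y : ℂ)
  have h2 := congrArg Complex.re h
  have hintg : Integrable fun x : ℝ => Complex.exp (Complex.I * y * x) * Complex.exp (-1 * (x:ℂ) ^ 2) := by
    have h0 : Integrable fun x : ℝ => Real.exp (-1 * x ^ 2) := integrable_exp_neg_mul_sq one_pos
    refine h0.mono (by fun_prop) (Eventually.of_forall fun x => ?_)
    rw [norm_mul, show Complex.I * y * x = ((y * x : ℝ):ℂ) * Complex.I by push_cast; ring,
      Complex.norm_exp_ofReal_mul_I, one_mul, Complex.norm_exp,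
      Real.norm_of_nonneg (Real.exp_pos _).le]
    apply Real.exp_le_exp.mpr
    rw [show (-1 * (x:ℂ) ^ 2) = ((-1 * x ^ 2 : ℝ):ℂ) by push_cast; ring, Complex.ofReal_re]
  have h3 := integral_re hintg
  simp only [RCLike.re_to_complex] at h3
  rw [← h3] at h2
  convert h2 using 1
  · congr 1; ext φ
    rw [show Complex.I * y * φ = ((y * φ : ℝ):ℂ) * Complex.I by push_cast; ring,
      show (-1 * (φ:ℂ) ^ 2) = ((- φ ^ 2 : ℝ):ℂ) by push_cast; ring, ← Complex.ofReal_exp,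
      Complex.re_mul_ofReal, Complex.exp_ofReal_mul_I_re]
  · rw [show (-(y:ℂ) ^ 2 / (4 * 1)) = ((-y ^ 2 / 4 : ℝ):ℂ) by push_cast; ring, ← Complex.ofReal_exp,
      Complex.re_mul_ofReal, div_one, ← Complex.ofReal_one, ← Complex.ofReal_ofNat,
      ← Complex.ofReal_div, ← Complex.ofReal_cpow Real.pi_pos.le, Complex.ofReal_re,
      Real.sqrt_eq_rpow]

open MeasureTheory ProbabilityTheory Filter Set

/-! ### Local CLT lower bound -/

/-- rescaled Fourier density -/
noncomputable def gT (t φ : ℝ) : ℝ :=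
  (Set.Ioc (-(Real.pi * Real.sqrt t)) (Real.pi * Real.sqrt t)).indicator
    (fun φ => Real.exp (-(2 * t * (1 - Real.cos (φ / Real.sqrt t))))) φ

lemma gT_meas (t : ℝ) : Measurable (gT t) := by
  unfold gT
  apply Measurable.indicator (by fun_prop) measurableSet_Ioc

lemma gT_bound (t : ℝ) (ht : 0 < t) (φ : ℝ) :
    |gT t φ| ≤ Real.exp (-(4 / Real.pi ^ 2) * φ ^ 2) := by
  unfold gT
  have hs := Real.sqrt_pos.mpr ht
  by_cases h : φ ∈ Set.Ioc (-(Real.pi * Real.sqrt t)) (Real.pi * Real.sqrt t)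
  · rw [indicator_of_mem h, abs_of_pos (Real.exp_pos _)]
    apply Real.exp_le_exp.mpr
    have h1 : |φ / Real.sqrt t| ≤ Real.pi := by
      rw [abs_div, abs_of_pos hs, div_le_iff₀ hs, abs_le]
      exact ⟨h.1.le, h.2⟩
    have h2 := Real.cos_le_one_sub_mul_cos_sq h1
    rw [div_pow, Real.sq_sqrt ht.le] at h2
    have h3 : 2 * t * (2 / Real.pi ^ 2 * (φ ^ 2 / t)) ≤ 2 * t * (1 - Real.cos (φ / Real.sqrt t)) := by
      apply mul_le_mul_of_nonneg_left _ (by positivity); linarith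
    have h4 : 2 * t * (2 / Real.pi ^ 2 * (φ ^ 2 / t)) = (4 / Real.pi ^ 2) * φ ^ 2 := by
      field_simp; ring
    linarith
  · rw [indicator_of_notMem h, abs_zero]; exact (Real.exp_pos _).le

lemma gT_integrable (t : ℝ) (ht : 0 < t) : Integrable (gT t) := by
  have hpi := Real.pi_pos
  refine (integrable_exp_neg_mul_sq (b := 4 / Real.pi ^ 2) (by positivity)).mono
    (gT_meas t).aestronglyMeasurable (Eventually.of_forall fun φ => ?_)
  rw [Real.norm_eq_abs, Real.norm_of_nonneg (Real.exp_pos _).le]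
  exact gT_bound t ht φ

lemma qk_scaled (t : ℝ) (ht : 0 < t) (k : ℤ) :
    Real.sqrt t * qk t k = (2 * Real.pi)⁻¹ * ∫ φ, Real.cos (k / Real.sqrt t * φ) * gT t φ := by
  have hs := Real.sqrt_pos.mpr ht
  have hpi := Real.pi_pos
  unfold qk
  rw [integral_nuM]
  have h := intervalIntegral.integral_comp_div
    (fun θ => Real.exp (-(2 * t * (1 - Real.cos θ))) * Real.cos (k * θ)) hs.ne'
    (a := -(Real.pi * Real.sqrt t)) (b := Real.pi * Real.sqrt t)
  have e1 : -(Real.pi * Real.sqrt t) / Real.sqrt t = -Real.pi := by field_simp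
  have e2 : (Real.pi * Real.sqrt t) / Real.sqrt t = Real.pi := by field_simp
  rw [e1, e2, smul_eq_mul] at h
  rw [mul_left_comm, ← h, intervalIntegral.integral_of_le (by nlinarith [mul_pos hpi hs]),
    ← integral_indicator measurableSet_Ioc]
  congr 2; ext φ
  unfold gT
  by_cases hφ : φ ∈ Set.Ioc (-(Real.pi * Real.sqrt t)) (Real.pi * Real.sqrt t)
  · rw [indicator_of_mem hφ, indicator_of_mem hφ, mul_comm]
    congr 2; ring
  · rw [indicator_of_notMem hφ, indicator_of_notMem hφ, mul_zero]

lemma gT_tendsto (φ : ℝ) : Tendsto (fun t => gT t φ) atTop (nhds (Real.exp (-φ ^ 2))) := by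
  have hpi := Real.pi_pos
  have h1 : Tendsto (fun t : ℝ => 2 * t * (1 - Real.cos (φ / Real.sqrt t))) atTop (nhds (φ ^ 2)) := by
    rw [tendsto_iff_norm_sub_tendsto_zero]
    have hlim : Tendsto (fun t : ℝ => φ ^ 4 * t⁻¹) atTop (nhds 0) := by
      simpa using (tendsto_inv_atTop_zero (𝕜 := ℝ)).const_mul (φ ^ 4)
    refine squeeze_zero' (Eventually.of_forall fun _ => norm_nonneg _) ?_ hlim
    filter_upwards [eventually_ge_atTop (φ ^ 2), eventually_gt_atTop 0] with t ht ht0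
    have hs := Real.sqrt_pos.mpr ht0
    have hx : |φ / Real.sqrt t| ≤ 1 := by
      rw [abs_div, abs_of_pos hs, div_le_one hs]
      exact Real.abs_le_sqrt ht
    have h := Real.cos_bound hx
    have e4 : |φ / Real.sqrt t| ^ 4 = φ ^ 4 / t ^ 2 := by
      rw [show |φ / Real.sqrt t| ^ 4 = (|φ / Real.sqrt t| ^ 2) ^ 2 by ring, sq_abs, div_pow,
        Real.sq_sqrt ht0.le]; ring
    have e2 : (φ / Real.sqrt t) ^ 2 = φ ^ 2 / t := by rw [div_pow, Real.sq_sqrt ht0.le]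
    rw [e4, e2] at h
    have : 2 * t * (1 - Real.cos (φ / Real.sqrt t)) - φ ^ 2
        = -(2 * t) * (Real.cos (φ / Real.sqrt t) - (1 - φ ^ 2 / t / 2)) := by field_simp; ring
    rw [Real.norm_eq_abs, this, abs_mul, abs_neg, abs_of_pos (by positivity : 0 < 2 * t)]
    calc 2 * t * _ ≤ 2 * t * (φ ^ 4 / t ^ 2 * (5 / 96)) := by gcongr
      _ = φ ^ 4 * t⁻¹ * (10 / 96) := by field_simp; ring
      _ ≤ φ ^ 4 * t⁻¹ * 1 := by
        apply mul_le_mul_of_nonneg_left (by norm_num) (by positivity)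
      _ = _ := mul_one _
  have h2 := (Real.continuous_exp.tendsto _).comp h1.neg
  refine h2.congr' ?_
  filter_upwards [eventually_gt_atTop (φ ^ 2), eventually_gt_atTop 0] with t ht ht0
  have hs := Real.sqrt_pos.mpr ht0
  have habs : |φ| < Real.sqrt t := by
    rw [← Real.sqrt_sq_eq_abs]; exact Real.sqrt_lt_sqrt (sq_nonneg _) ht
  have h3 : Real.sqrt t ≤ Real.pi * Real.sqrt t := by
    nlinarith [Real.pi_gt_three]
  have hmem : φ ∈ Set.Ioc (-(Real.pi * Real.sqrt t)) (Real.pi * Real.sqrt t) := by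
    rw [abs_lt] at habs
    exact ⟨by linarith, by linarith⟩
  unfold gT
  rw [indicator_of_mem hmem]; rfl

lemma gT_L1 : Tendsto (fun t => ∫ φ, |gT t φ - Real.exp (-φ ^ 2)|) atTop (nhds 0) := by
  have hpi := Real.pi_pos
  have hg : Integrable fun φ : ℝ => Real.exp (-φ ^ 2) := by
    simpa using integrable_exp_neg_mul_sq (b := 1) one_pos
  have := tendsto_integral_filter_of_dominated_convergence (μ := volume) (l := (atTop : Filter ℝ))
    (F := fun t φ => |gT t φ - Real.exp (-φ ^ 2)|) (f := fun _ => 0)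
    (fun φ => Real.exp (-(4 / Real.pi ^ 2) * φ ^ 2) + Real.exp (-φ ^ 2)) ?_ ?_ ?_ ?_
  · simpa using this
  · refine Eventually.of_forall fun t => Measurable.aestronglyMeasurable ?_
    have := gT_meas t
    fun_prop
  · filter_upwards [eventually_gt_atTop 0] with t ht
    refine Eventually.of_forall fun φ => ?_
    rw [Real.norm_eq_abs, abs_abs]
    refine (abs_sub _ _).trans ?_
    rw [abs_of_pos (Real.exp_pos (-φ ^ 2))]
    gcongr
    exact gT_bound t ht φ
  · exact (integrable_exp_neg_mul_sq (b := 4 / Real.pi ^ 2) (by positivity)).add hg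
  · refine Eventually.of_forall fun φ => ?_
    have := ((gT_tendsto φ).sub_const (Real.exp (-φ ^ 2))).abs
    simpa using this

lemma qk_lower (ρ : ℝ) : ∃ c > 0, ∀ᶠ t in (atTop : Filter ℝ), ∀ k : ℤ,
    |(k:ℝ)| ≤ ρ * Real.sqrt t → c / Real.sqrt t ≤ qk t k := by
  have hpi := Real.pi_pos
  set e : ℝ := Real.sqrt Real.pi * Real.exp (-ρ ^ 2 / 4) with he
  have he0 : 0 < e := by positivity
  have hg : Integrable fun φ : ℝ => Real.exp (-φ ^ 2) := by
    simpa using integrable_exp_neg_mul_sq (b := 1) one_pos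
  refine ⟨(2 * Real.pi)⁻¹ * (e / 2), by positivity, ?_⟩
  filter_upwards [gT_L1.eventually (gt_mem_nhds (half_pos he0)), eventually_gt_atTop 0] with t h1 ht k hk
  have hs := Real.sqrt_pos.mpr ht
  rw [div_le_iff₀ hs, mul_comm (qk t k), qk_scaled t ht]
  gcongr
  set y : ℝ := k / Real.sqrt t with hy
  have hy1 : y ^ 2 ≤ ρ ^ 2 := by
    have : |y| ≤ ρ := by rw [hy, abs_div, abs_of_pos hs, div_le_iff₀ hs]; exact hk
    exact sq_le_sq' (by linarith [(abs_le.mp this).1]) (abs_le.mp this).2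
  have hG := gaussian_cos y
  have hcosg : Integrable fun φ : ℝ => Real.cos (y * φ) * gT t φ := by
    refine (gT_integrable t ht).mono ?_ (Eventually.of_forall fun φ => ?_)
    · have := gT_meas t
      exact Measurable.aestronglyMeasurable (by fun_prop)
    · rw [norm_mul]; exact mul_le_of_le_one_left (norm_nonneg _) (Real.abs_cos_le_one _)
  have hcose : Integrable fun φ : ℝ => Real.cos (y * φ) * Real.exp (-φ ^ 2) := by
    refine hg.mono ?_ (Eventually.of_forall fun φ => ?_)
    · exact Measurable.aestronglyMeasurable (by fun_prop)
    · rw [norm_mul]; exact mul_le_of_le_one_left (norm_nonneg _) (Real.abs_cos_le_one _)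
  have hdiff : (∫ φ, Real.cos (y * φ) * Real.exp (-φ ^ 2)) - ∫ φ, Real.cos (y * φ) * gT t φ
      ≤ ∫ φ, |gT t φ - Real.exp (-φ ^ 2)| := by
    rw [← integral_sub hcose hcosg]
    apply integral_mono (hcose.sub hcosg) ((gT_integrable t ht).sub hg).abs
    intro φ
    simp only [Pi.sub_apply]
    rw [← mul_sub]
    refine (le_abs_self _).trans ?_
    rw [abs_mul, abs_sub_comm]
    exact mul_le_of_le_one_left (abs_nonneg _) (Real.abs_cos_le_one _)
  have he2 : e ≤ ∫ φ, Real.cos (y * φ) * Real.exp (-φ ^ 2) := by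
    rw [hG, he]; gcongr
  linarith

open MeasureTheory ProbabilityTheory Filter Set

/-! ### Multidimensional consequences -/

/-- extended nonnegative version of `pk` -/
noncomputable def pE (m : ℕ) (t : ℝ) (x : Fin m → ℤ) : ENNReal := ENNReal.ofReal (pk m t x)

lemma pE_tsum_of (m : ℕ) (f : (Fin m → ℤ) → ℝ) (a : ℝ) (hf : ∀ x, 0 ≤ f x) (h : HasSum f a) :
    ∑' x, ENNReal.ofReal (f x) = ENNReal.ofReal a := by
  rw [← ENNReal.ofReal_tsum_of_nonneg hf h.summable, h.tsum_eq]

lemma pE_sum (m : ℕ) (hm : 1 ≤ m) (t : ℝ) (ht : 0 ≤ t) : ∑' x, pE m t x = 1 := by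
  unfold pE
  rw [pE_tsum_of m _ 1 (pk_nonneg m hm t ht) (pk_sum m hm t ht), ENNReal.ofReal_one]

lemma pE_sum_sub (m : ℕ) (hm : 1 ≤ m) (t : ℝ) (ht : 0 ≤ t) (x : Fin m → ℤ) :
    ∑' y, pE m t (y - x) = 1 := by
  rw [← pE_sum m hm t ht]
  exact (Equiv.subRight x).tsum_eq (pE m t)

lemma pE_sum_sub' (m : ℕ) (hm : 1 ≤ m) (t : ℝ) (ht : 0 ≤ t) (x : Fin m → ℤ) :
    ∑' y, pE m t (x - y) = 1 := by
  rw [← pE_sum m hm t ht]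
  exact (Equiv.subLeft x).tsum_eq (pE m t)

lemma pE_CK (m : ℕ) (hm : 1 ≤ m) (s t : ℝ) (hs : 0 ≤ s) (ht : 0 ≤ t) (k : Fin m → ℤ) :
    ∑' y, pE m s y * pE m t (k - y) = pE m (s + t) k := by
  unfold pE
  rw [← pE_tsum_of m _ _ ?_ (pk_CK m hm s t hs ht k)]
  · congr 1; ext y
    rw [ENNReal.ofReal_mul (pk_nonneg m hm s hs y)]; rfl
  · intro y; exact mul_nonneg (pk_nonneg m hm s hs y) (pk_nonneg m hm t ht _)

lemma pE_le_one (m : ℕ) (hm : 1 ≤ m) (t : ℝ) (ht : 0 ≤ t) (x : Fin m → ℤ) : pE m t x ≤ 1 := by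
  unfold pE; rw [ENNReal.ofReal_le_one]; exact pk_le_one m hm t ht x

lemma pk_le (m : ℕ) (t : ℝ) (ht : 0 < t) (x : Fin m → ℤ) :
    pk m t x ≤ (1 / Real.sqrt t) ^ m := by
  unfold pk
  calc ∏ i, qk t (x i) ≤ ∏ i : Fin m, (1 / Real.sqrt t) :=
        Finset.prod_le_prod (fun i _ => qk_nonneg t ht.le _) fun i _ => qk_le t ht _
    _ = _ := by simp

lemma pk_lower (m : ℕ) (ρ : ℝ) : ∃ c > 0, ∀ᶠ t in (atTop : Filter ℝ), ∀ x : Fin m → ℤ,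
    (∀ i, |(x i:ℝ)| ≤ ρ * Real.sqrt t) → c * (1 / Real.sqrt t) ^ m ≤ pk m t x := by
  obtain ⟨c, hc, h⟩ := qk_lower ρ
  refine ⟨c ^ m, by positivity, ?_⟩
  filter_upwards [h, eventually_gt_atTop 0] with t ht ht0 x hx
  unfold pk
  calc c ^ m * (1 / Real.sqrt t) ^ m = ∏ i : Fin m, (c / Real.sqrt t) := by
        rw [← mul_pow, mul_one_div]; simp only [Finset.prod_const, Finset.card_univ, Fintype.card_fin]
    _ ≤ _ := Finset.prod_le_prod (fun i _ => by positivity) fun i _ => ht _ (hx i)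

lemma pk_time_ge (m : ℕ) (hm : 1 ≤ m) (t h : ℝ) (ht : 0 ≤ t) (hh : 0 ≤ h) (x : Fin m → ℤ) :
    Real.exp (-(2 * m * h)) * pk m t x ≤ pk m (t + h) x := by
  have h1 := le_hasSum (pk_CK m hm h t hh ht x) 0 fun y _ =>
    mul_nonneg (pk_nonneg m hm h hh y) (pk_nonneg m hm t ht _)
  simp only [Pi.zero_apply, sub_zero] at h1
  rw [add_comm t h]
  refine le_trans ?_ h1
  exact mul_le_mul_of_nonneg_right (pk_zero_ge m hm h hh) (pk_nonneg m hm t ht _)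

lemma pk_time_le (m : ℕ) (hm : 1 ≤ m) (t h : ℝ) (ht : 0 < t) (hh : 0 ≤ h) (x : Fin m → ℤ) :
    pk m (t + h) x ≤ pk m t x + 2 * m * h * (1 / Real.sqrt t) ^ m := by
  have h1 := pk_CK m hm h t hh ht.le x
  rw [add_comm t h]
  set B := (1 / Real.sqrt t) ^ m with hB
  have hB0 : 0 ≤ B := by positivity
  have h2 : HasSum (fun y : Fin m → ℤ => pk m h y * B - (if y = 0 then pk m h 0 * (B - pk m t x) else 0))
      (1 * B - pk m h 0 * (B - pk m t x)) :=
    ((pk_sum m hm h hh).mul_right B).sub (hasSum_ite_eq 0 _)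
  have h3 : pk m (h + t) x ≤ 1 * B - pk m h 0 * (B - pk m t x) := by
    refine hasSum_le (fun y => ?_) h1 h2
    by_cases hy : y = 0
    · subst hy; simp only [Pi.zero_apply, sub_zero, if_true]
      apply le_of_eq; ring
    · simp only [hy, if_false, sub_zero]
      exact mul_le_mul_of_nonneg_left (pk_le m t ht _) (pk_nonneg m hm h hh y)
  have h4 := pk_zero_ge m hm h hh
  have h5 := Real.add_one_le_exp (-(2 * m * h))
  have h6 := pk_le m t ht x
  have h7 := pk_nonneg m hm t ht.le x
  have h8 := pk_le_one m hm h hh 0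
  have h9 : (1 - pk m h 0) * (B - pk m t x) ≤ (2 * m * h) * B := by
    apply mul_le_mul (by linarith) (by linarith) (by linarith)
    positivity
  nlinarith

lemma cosh_sub_one_le (x : ℝ) (hx : |x| ≤ 1) : Real.cosh x - 1 ≤ x ^ 2 := by
  have h1 := Real.cosh_le_exp_half_sq x
  have hx2 : x ^ 2 ≤ 1 := by rw [← sq_abs]; exact pow_le_one₀ (abs_nonneg _) hx
  have h2 := Real.abs_exp_sub_one_le (x := x ^ 2 / 2) (by rw [abs_of_nonneg (by positivity)]; linarith)
  rw [abs_of_nonneg (by positivity : 0 ≤ x ^ 2 / 2)] at h2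
  have := (abs_le.mp h2).2
  linarith

/-- coordinates far away -/
def farSet (m : ℕ) (L : ℝ) : Set (Fin m → ℤ) := {y | ∃ i, L < |(y i : ℝ)|}

lemma pE_tail (m : ℕ) (hm : 1 ≤ m) (t u L : ℝ) (ht : 1 ≤ t) (hu : 0 ≤ u) (hut : u ≤ t) :
    ∑' y, (farSet m L).indicator (pE m u) y
      ≤ ENNReal.ofReal (2 * m * Real.exp 2 * Real.exp (-(L / Real.sqrt t))) := by
  have hs : 0 < Real.sqrt t := Real.sqrt_pos.mpr (by linarith)
  have hs1 : 1 ≤ Real.sqrt t := Real.one_le_sqrt.mpr ht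
  set θ : ℝ := 1 / Real.sqrt t with hθ
  have hθ0 : 0 < θ := by positivity
  set g : Fin m → (Fin m → ℤ) → ℝ := fun j y =>
    pk m u y * Real.cosh (y j * θ) * (2 * Real.exp (-(L / Real.sqrt t))) with hg
  have hg0 : ∀ j y, 0 ≤ g j y := fun j y => mul_nonneg (mul_nonneg (pk_nonneg m hm u hu y)
    (Real.cosh_pos _).le) (by positivity)
  have hsum : ∀ j, HasSum (g j) (Real.exp (2 * u * (Real.cosh θ - 1)) * (2 * Real.exp (-(L / Real.sqrt t)))) :=
    fun j => (pk_cosh m hm u hu j θ).mul_right _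
  have hS := hasSum_sum (s := Finset.univ) fun j (_ : j ∈ Finset.univ) => hsum j
  calc ∑' y, (farSet m L).indicator (pE m u) y ≤ ∑' y, ENNReal.ofReal (∑ j, g j y) := by
        apply ENNReal.tsum_le_tsum
        intro y
        by_cases hy : y ∈ farSet m L
        · rw [indicator_of_mem hy]
          obtain ⟨i, hi⟩ := hy
          unfold pE
          apply ENNReal.ofReal_le_ofReal
          refine le_trans ?_ (Finset.single_le_sum (fun j _ => hg0 j y) (Finset.mem_univ i))
          simp only [hg]
          rw [mul_assoc]
          apply le_mul_of_one_le_right (pk_nonneg m hm u hu y)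
          have h1 : Real.exp (|(y i:ℝ)| * θ) / 2 ≤ Real.cosh (y i * θ) := by
            rw [← Real.cosh_abs, abs_mul, abs_of_pos hθ0, Real.cosh_eq]
            have := Real.exp_pos (-(|(y i:ℝ)| * θ))
            linarith
          have h2 : Real.exp (L / Real.sqrt t) ≤ Real.exp (|(y i:ℝ)| * θ) := by
            apply Real.exp_le_exp.mpr
            rw [hθ, mul_one_div]; gcongr
          have h3 : Real.exp (L / Real.sqrt t) * Real.exp (-(L / Real.sqrt t)) = 1 := by
            rw [← Real.exp_add]; simp
          have h4 := Real.exp_pos (-(L / Real.sqrt t))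
          nlinarith
        · rw [indicator_of_notMem hy]; exact zero_le
    _ = ENNReal.ofReal (∑ j : Fin m, Real.exp (2 * u * (Real.cosh θ - 1)) * (2 * Real.exp (-(L / Real.sqrt t)))) :=
        pE_tsum_of m _ _ (fun y => Finset.sum_nonneg fun j _ => hg0 j y) hS
    _ ≤ _ := by
        apply ENNReal.ofReal_le_ofReal
        rw [Finset.sum_const, Finset.card_univ, Fintype.card_fin, nsmul_eq_mul]
        have h1 : Real.exp (2 * u * (Real.cosh θ - 1)) ≤ Real.exp 2 := by
          apply Real.exp_le_exp.mpr
          have hc := cosh_sub_one_le θ (by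
            rw [abs_of_pos hθ0, hθ, div_le_one hs]; exact hs1)
          have hθ2 : t * θ ^ 2 = 1 := by
            rw [hθ, div_pow, Real.sq_sqrt (by linarith)]; field_simp
          have hc0 : 0 ≤ Real.cosh θ - 1 := by linarith [Real.one_le_cosh θ]
          nlinarith [mul_le_mul_of_nonneg_left hc (by linarith : 0 ≤ t), mul_le_mul_of_nonneg_right hut hc0]
        calc (m:ℝ) * (Real.exp (2 * u * (Real.cosh θ - 1)) * (2 * Real.exp (-(L / Real.sqrt t))))
            ≤ m * (Real.exp 2 * (2 * Real.exp (-(L / Real.sqrt t)))) := by gcongr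
          _ = _ := by ring

lemma qk_cont (k : ℤ) : ContinuousOn (fun t => qk t k) (Set.Ici 0) := by
  unfold qk
  apply continuousOn_of_dominated (bound := fun _ => 1)
  · intro t _
    exact Measurable.aestronglyMeasurable (by fun_prop)
  · intro t ht
    refine Eventually.of_forall fun θ => ?_
    rw [Real.norm_eq_abs, abs_mul, abs_of_pos (Real.exp_pos _)]
    refine mul_le_one₀ ?_ (abs_nonneg _) (Real.abs_cos_le_one _)
    rw [Real.exp_le_one_iff]
    have := mul_nonneg (mul_nonneg zero_le_two (mem_Ici.mp ht)) (one_sub_cos_nonneg θ)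
    linarith
  · exact integrable_const _
  · exact Eventually.of_forall fun θ => Continuous.continuousOn (by fun_prop)

lemma pk_cont (m : ℕ) (x : Fin m → ℤ) : ContinuousOn (fun t => pk m t x) (Set.Ici 0) := by
  unfold pk
  exact continuousOn_finsetProd _ fun i _ => qk_cont (x i)

lemma qk_meas (k : ℤ) : Measurable (fun t => qk t k) := by
  unfold qk
  exact (StronglyMeasurable.integral_prod_right' (f := fun p : ℝ × ℝ =>
    Real.exp (-(2 * p.1 * (1 - Real.cos p.2))) * Real.cos (k * p.2))
      (Measurable.stronglyMeasurable (by fun_prop))).measurable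

lemma pk_meas (m : ℕ) (x : Fin m → ℤ) : Measurable (fun t => pk m t x) := by
  unfold pk
  exact Finset.measurable_prod _ fun i _ => qk_meas (x i)

lemma pE_meas (m : ℕ) (x : Fin m → ℤ) : Measurable (fun t => pE m t x) :=
  (pk_meas m x).ennreal_ofReal

open MeasureTheory ProbabilityTheory Filter Set

/-! ### The scenery: moments and growth -/

section scen
variable {d : ℕ} {α : ℝ} {Ωz : Type*} [MeasurableSpace Ωz] {μ : Measure Ωz}
  {z : (Fin d → ℤ) → Ωz → ℝ}

lemma scen_tail (hz : IsScenery d α μ z) (β : ℝ) (hβ0 : 0 < β) (hβ : β < α) :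
    ∃ r0 : ℝ, 1 < r0 ∧ ∀ r, r0 ≤ r → 0 < μ {ω | r < z 0 ω} ∧
      μ {ω | r < z 0 ω} ≤ ENNReal.ofReal (r ^ (-β)) := by
  have := hz.prob
  have h1 := hz.tail.eventually (gt_mem_nhds (show -α < -β by linarith))
  obtain ⟨r0, hr0⟩ := eventually_atTop.mp (h1.and (eventually_gt_atTop 1))
  refine ⟨max r0 2, by simp, fun r hr => ?_⟩
  obtain ⟨h2, h3⟩ := hr0 r (le_trans (le_max_left _ _) hr)
  have hl : 0 < Real.log r := Real.log_pos h3
  rw [div_lt_iff₀ hl] at h2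
  set F := (μ {ω | r < z 0 ω}).toReal with hF
  have hF0 : 0 < F := by
    rcases (ENNReal.toReal_nonneg (a := μ {ω | r < z 0 ω})).eq_or_lt with h | h
    · rw [hF, ← h] at h2; simp at h2; nlinarith
    · exact h
  refine ⟨(ENNReal.toReal_pos_iff.mp hF0).1, ?_⟩
  rw [← ENNReal.ofReal_toReal (measure_ne_top μ {ω | r < z 0 ω}), ← hF]
  apply ENNReal.ofReal_le_ofReal
  rw [Real.rpow_def_of_pos (by linarith), ← Real.exp_log hF0]
  apply Real.exp_le_exp.mpr
  nlinarith

lemma scen_integrable (hz : IsScenery d α μ z) (hα : 1 < α) : Integrable (z 0) μ := by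
  have := hz.prob
  obtain ⟨β, hβ1, hβ⟩ := exists_between hα
  obtain ⟨r0, hr0, h⟩ := scen_tail hz β (by linarith) hβ
  refine ⟨(hz.meas 0).aestronglyMeasurable, ?_⟩
  rw [hasFiniteIntegral_iff_ofReal (ae_of_all _ (hz.nonneg 0)),
    lintegral_eq_lintegral_meas_lt μ (ae_of_all _ (hz.nonneg 0)) (hz.meas 0).aemeasurable]
  have hu : Ioi (0:ℝ) = Ioc 0 r0 ∪ Ioi r0 := (Ioc_union_Ioi_eq_Ioi (by linarith)).symm
  rw [hu]
  refine lt_of_le_of_lt (lintegral_union_le _ _ _) (ENNReal.add_lt_top.mpr ⟨?_, ?_⟩)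
  · calc _ ≤ ∫⁻ t in Ioc 0 r0, 1 := lintegral_mono fun _ => prob_le_one
      _ < _ := by simp
  · calc _ ≤ ∫⁻ t in Ioi r0, ENNReal.ofReal (t ^ (-β)) :=
          setLIntegral_mono' measurableSet_Ioi fun t ht => (h t (le_of_lt ht)).2
      _ < _ := by
        have h1 := (integrableOn_Ioi_rpow_of_lt (a := -β) (by linarith) (show 0 < r0 by linarith)).2
        rwa [hasFiniteIntegral_iff_ofReal] at h1
        filter_upwards [self_mem_ae_restrict measurableSet_Ioi] with t ht
        exact Real.rpow_nonneg (by have : r0 < t := ht; linarith) _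

lemma scen_mean_pos (hz : IsScenery d α μ z) (hα : 1 < α) : 0 < ∫ ζ, z 0 ζ ∂μ := by
  have := hz.prob
  obtain ⟨r0, hr0, h⟩ := scen_tail hz 1 (by linarith) hα
  rw [integral_pos_iff_support_of_nonneg (hz.nonneg 0) (scen_integrable hz hα)]
  refine lt_of_lt_of_le (h r0 le_rfl).1 (measure_mono fun ω hω => ?_)
  have : r0 < z 0 ω := hω
  simp only [Function.mem_support]; linarith

lemma tsum_prod_fin (g : ℤ → ENNReal) (n : ℕ) :
    ∑' y : Fin n → ℤ, ∏ i, g (y i) = (∑' k, g k) ^ n := by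
  induction n with
  | zero => simp
  | succ n ih =>
    rw [← (Fin.consEquiv fun _ => ℤ).tsum_eq, ENNReal.tsum_prod']
    simp only [Fin.consEquiv, Equiv.coe_fn_mk, Fin.prod_univ_succ, Fin.cons_zero, Fin.cons_succ]
    simp_rw [ENNReal.tsum_mul_left, ih]
    rw [ENNReal.tsum_mul_right, pow_succ, mul_comm]

lemma int_sum_rpow (s : ℝ) (hs : 1 < s) : ∑' k : ℤ, ENNReal.ofReal ((1 + |(k:ℝ)|) ^ (-s)) ≠ ⊤ := by
  have h0 : ∀ x : ℝ, 0 ≤ (1 + |x|) ^ (-s) := fun x => Real.rpow_nonneg (by positivity) _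
  have hn : Summable fun n : ℕ => ((1:ℝ) + |(n:ℝ)|) ^ (-s) := by
    have := (summable_nat_add_iff 1).mpr (Real.summable_nat_rpow.mpr (show -s < -1 by linarith))
    refine this.congr fun n => ?_
    push_cast
    rw [abs_of_nonneg (by positivity), add_comm]
  have : Summable fun k : ℤ => (1 + |(k:ℝ)|) ^ (-s) := by
    apply Summable.of_nat_of_neg
    · simpa using hn
    · simpa using hn
  rw [← ENNReal.ofReal_tsum_of_nonneg (fun k : ℤ => h0 (k:ℝ)) this]
  exact ENNReal.ofReal_ne_top

lemma lattice_sum (hd : 1 ≤ d) (s : ℝ) (hs : (d:ℝ) < s) :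
    ∑' y : Fin d → ℤ, ENNReal.ofReal ((1 + ‖y‖) ^ (-s)) ≠ ⊤ := by
  have hd0 : (0:ℝ) < d := by exact_mod_cast hd
  refine ne_top_of_le_ne_top ?_ (b := (∑' k : ℤ, ENNReal.ofReal ((1 + |(k:ℝ)|) ^ (-(s / d)))) ^ d) ?_
  · exact ENNReal.pow_ne_top (int_sum_rpow _ (by rw [lt_div_iff₀ hd0]; linarith))
  · rw [← tsum_prod_fin]
    apply ENNReal.tsum_le_tsum
    intro y
    rw [← ENNReal.ofReal_prod_of_nonneg fun i _ => Real.rpow_nonneg (by positivity) _]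
    apply ENNReal.ofReal_le_ofReal
    calc (1 + ‖y‖) ^ (-s) = ∏ i : Fin d, (1 + ‖y‖) ^ (-(s/d)) := by
          rw [Finset.prod_const, Finset.card_univ, Fintype.card_fin, ← Real.rpow_natCast,
            ← Real.rpow_mul (by positivity)]
          congr 1; field_simp
      _ ≤ _ := by
          apply Finset.prod_le_prod (fun i _ => Real.rpow_nonneg (by positivity) _)
          intro i _
          apply Real.rpow_le_rpow_of_nonpos (by positivity)
          · have := norm_le_pi_norm y i
            rw [Int.norm_eq_abs] at this
            linarith
          · have : 0 < s / d := div_pos (by linarith) hd0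
            linarith

lemma scen_tail' (hz : IsScenery d α μ z) (y : Fin d → ℤ) (r : ℝ) :
    μ {ω | r < z y ω} = μ {ω | r < z 0 ω} :=
  (hz.ident y).measure_mem_eq measurableSet_Ioi

/-- almost sure polynomial growth of the scenery -/
lemma scen_growth (hz : IsScenery d α μ z) (hd : 1 ≤ d) (hα : 1 < α) (γ : ℝ) (hγ : (d:ℝ) / α < γ) :
    ∀ᵐ ζ ∂μ, ∃ K : ℝ, 0 < K ∧ ∀ y, z y ζ ≤ K * (1 + ‖y‖) ^ γ := by
  have hd0 : (0:ℝ) < d := by exact_mod_cast hd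
  have hγ0 : 0 < γ := lt_trans (by positivity) hγ
  rw [div_lt_iff₀ (by linarith)] at hγ
  obtain ⟨β, hβ1, hβ⟩ := exists_between (max_lt (show (d:ℝ)/γ < α by rw [div_lt_iff₀ hγ0]; linarith) hα)
  have hβd := lt_of_le_of_lt (le_max_left _ _) hβ1
  have hβ2 := lt_of_le_of_lt (le_max_right _ _) hβ1
  rw [div_lt_iff₀ hγ0] at hβd
  obtain ⟨r0, hr0, h⟩ := scen_tail hz β (by linarith) hβ
  have hsum : ∑' y : Fin d → ℤ, μ {ω | r0 * (1 + ‖y‖) ^ γ < z y ω} ≠ ⊤ := by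
    refine ne_top_of_le_ne_top (lattice_sum hd (β * γ) hβd) (ENNReal.tsum_le_tsum fun y => ?_)
    rw [scen_tail' hz]
    have h1 : 1 ≤ (1 + ‖y‖) ^ γ := Real.one_le_rpow (by linarith [norm_nonneg y]) hγ0.le
    refine le_trans (h _ (by nlinarith)).2 (ENNReal.ofReal_le_ofReal ?_)
    calc (r0 * (1 + ‖y‖) ^ γ) ^ (-β) ≤ ((1 + ‖y‖) ^ γ) ^ (-β) := by
          apply Real.rpow_le_rpow_of_nonpos (by positivity) (by nlinarith) (by linarith)
      _ = _ := by rw [← Real.rpow_mul (by positivity)]; congr 1; ring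
  have hf := ae_finite_setOfPred_mem hsum
  filter_upwards [hf] with ζ hζ
  obtain ⟨M, hM⟩ := (hζ.image fun y => z y ζ).bddAbove
  refine ⟨max r0 M, lt_of_lt_of_le (by linarith) (le_max_left _ _), fun y => ?_⟩
  have h1 : 1 ≤ (1 + ‖y‖) ^ γ := Real.one_le_rpow (by linarith [norm_nonneg y]) hγ0.le
  by_cases hy : r0 * (1 + ‖y‖) ^ γ < z y ζ
  · have : z y ζ ≤ M := hM ⟨y, hy, rfl⟩
    have h2 : z y ζ ≤ max r0 M := this.trans (le_max_right _ _)
    have h3 : 0 ≤ max r0 M := le_trans (by linarith) (le_max_left r0 M)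
    nlinarith
  · push Not at hy
    exact hy.trans (mul_le_mul_of_nonneg_right (le_max_left _ _) (by linarith))

end scen

open MeasureTheory ProbabilityTheory Filter Set

/-! ### Chernoff bounds -/

/-- the box of radius `n` -/
noncomputable def boxF (d n : ℕ) : Finset (Fin d → ℤ) := Fintype.piFinset fun _ => Finset.Icc (-(n:ℤ)) n

lemma mem_boxF (d n : ℕ) (y : Fin d → ℤ) : y ∈ boxF d n ↔ ∀ i, |(y i : ℝ)| ≤ n := by
  simp only [boxF, Fintype.mem_piFinset, Finset.mem_Icc]
  refine forall_congr' fun i => ?_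
  rw [abs_le]
  constructor
  · rintro ⟨h1, h2⟩; exact ⟨by exact_mod_cast h1, by exact_mod_cast h2⟩
  · rintro ⟨h1, h2⟩; exact ⟨by exact_mod_cast h1, by exact_mod_cast h2⟩

lemma notMem_boxF (d n : ℕ) (y : Fin d → ℤ) : y ∉ boxF d n ↔ y ∈ farSet d n := by
  rw [mem_boxF]; simp [farSet]

lemma card_boxF (d n : ℕ) : (boxF d n).card = (2 * n + 1) ^ d := by
  simp only [boxF, Fintype.card_piFinset, Int.card_Icc, Finset.prod_const, Finset.card_univ,
    Fintype.card_fin]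
  congr 1; omega

/-- split a sum into the box and the far set -/
lemma tsum_box_le (d n : ℕ) (f : (Fin d → ℤ) → ENNReal) :
    ∑' y, f y ≤ ∑ y ∈ boxF d n, f y + ∑' y, (farSet d n).indicator f y := by
  have h1 : ∑ y ∈ boxF d n, f y = ∑' y, ((boxF d n : Finset _) : Set (Fin d → ℤ)).indicator f y := by
    rw [← tsum_subtype, Finset.tsum_subtype']
  rw [h1, ← ENNReal.tsum_add]
  apply ENNReal.tsum_le_tsum
  intro y
  by_cases hy : y ∈ boxF d n
  · rw [indicator_of_mem (by exact_mod_cast hy)]; exact le_self_add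
  · rw [indicator_of_mem ((notMem_boxF d n y).mp hy)]; exact le_add_self

section scen
variable {d : ℕ} {α : ℝ} {Ωz : Type*} [MeasurableSpace Ωz] {μ : Measure Ωz}
  {z : (Fin d → ℤ) → Ωz → ℝ}

lemma exp_quad (x η : ℝ) (hx : 0 ≤ x) (hxη : x ≤ η) (hη : η ≤ 1) : Real.exp x ≤ 1 + (1 + η) * x := by
  have h := Real.abs_exp_sub_one_sub_id_le (x := x) (by rw [abs_of_nonneg hx]; linarith)
  have := (abs_le.mp h).2
  nlinarith

lemma chern (hz : IsScenery d α μ z) (f : ℝ → ℝ) (hf : Measurable f) (T m : ℝ)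
    (hf0 : ∀ x, 0 ≤ x → 0 ≤ f x) (hfT : ∀ x, 0 ≤ x → f x ≤ T) (hm : ∫ ζ, f (z 0 ζ) ∂μ ≤ m)
    (x : Fin d → ℤ) (F : Finset (Fin d → ℤ)) (w : (Fin d → ℤ) → ℝ) (hw : ∀ y, 0 ≤ w y) (W : ℝ)
    (hW : ∑ y ∈ F, w y ≤ W) (l η : ℝ) (hl : 0 ≤ l) (hη0 : 0 ≤ η) (hη1 : η ≤ 1)
    (hlw : ∀ y ∈ F, l * w y * T ≤ η) (a : ℝ) :
    μ {ζ | a ≤ ∑ v ∈ F, w v * f (z (x + v) ζ)} ≤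
      ENNReal.ofReal (Real.exp (-(l * (a - (1 + η) * m * W)))) := by
  have := hz.prob
  have hT0 : 0 ≤ T := (hf0 0 le_rfl).trans (hfT 0 le_rfl)
  have hX : ∀ v, Measurable fun ζ => w v * f (z (x + v) ζ) := fun v =>
    (hf.comp (hz.meas _)).const_mul _
  have hind : iIndepFun (fun v ζ => w v * f (z (x + v) ζ)) μ := by
    have h1 := hz.indep.precomp (g := fun v => x + v) (add_right_injective x)
    exact h1.comp (fun v r => w v * f r) fun v => hf.const_mul _
  have hfi : ∀ y, Integrable (fun ζ => f (z y ζ)) μ := fun y =>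
    integrable_bdd μ _ (hf.comp (hz.meas y)) T fun ζ => by
      rw [abs_of_nonneg (hf0 _ (hz.nonneg _ _))]; exact hfT _ (hz.nonneg _ _)
  have hmean : ∀ y, ∫ ζ, f (z y ζ) ∂μ ≤ m := fun y => by
    have := ((hz.ident y).comp hf).integral_eq
    simp only [Function.comp_def] at this
    rw [this]; exact hm
  have hm0 : 0 ≤ m := le_trans (integral_nonneg fun ζ => hf0 _ (hz.nonneg _ _)) hm
  have hmgf : ∀ v ∈ F, mgf (fun ζ => w v * f (z (x + v) ζ)) μ l ≤ Real.exp (l * (1 + η) * m * w v) := by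
    intro v hv
    unfold mgf
    calc ∫ ζ, Real.exp (l * (w v * f (z (x + v) ζ))) ∂μ
        ≤ ∫ ζ, (1 + (1 + η) * (l * w v) * f (z (x + v) ζ)) ∂μ := by
          apply integral_mono_of_nonneg (ae_of_all _ fun ζ => (Real.exp_pos _).le)
            ((integrable_const _).add ((hfi _).const_mul _))
          refine ae_of_all _ fun ζ => ?_
          have h0 := hf0 _ (hz.nonneg (x + v) ζ)
          have h1 := hfT _ (hz.nonneg (x + v) ζ)
          have h2 : 0 ≤ l * w v := mul_nonneg hl (hw v)
          have h3 := exp_quad (l * (w v * f (z (x + v) ζ))) η (by have := hw v; positivity)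
            (le_trans (by nlinarith) (hlw v hv)) hη1
          simp only [Pi.add_apply]
          linarith
      _ = 1 + (1 + η) * (l * w v) * ∫ ζ, f (z (x + v) ζ) ∂μ := by
          rw [integral_add (integrable_const _) ((hfi _).const_mul _), integral_const_mul]; simp
      _ ≤ 1 + (1 + η) * (l * w v) * m := by
          have h2 : 0 ≤ (1 + η) * (l * w v) := mul_nonneg (by linarith) (mul_nonneg hl (hw v))
          have := mul_le_mul_of_nonneg_left (hmean (x + v)) h2
          linarith
      _ ≤ _ := by
          have := Real.add_one_le_exp (l * (1 + η) * m * w v)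
          linarith
  have hE : Integrable (fun ζ => Real.exp (l * (∑ v ∈ F, fun ζ => w v * f (z (x + v) ζ)) ζ)) μ := by
    apply integrable_bdd μ _ (C := Real.exp (l * ∑ v ∈ F, w v * T))
    · apply Real.measurable_exp.comp
      apply Measurable.const_mul
      have h9 := Finset.measurable_sum F fun v _ => hX v
      convert h9 using 1; ext ζ; simp
    · intro ζ
      rw [abs_of_pos (Real.exp_pos _)]
      apply Real.exp_le_exp.mpr
      apply mul_le_mul_of_nonneg_left _ hl
      rw [Finset.sum_apply]
      exact Finset.sum_le_sum fun v _ => mul_le_mul_of_nonneg_left (hfT _ (hz.nonneg _ _)) (hw v)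
  have h := measure_ge_le_exp_mul_mgf (μ := μ) a hl hE
  rw [hind.mgf_sum hX F] at h
  have h5 : ∏ v ∈ F, mgf (fun ζ => w v * f (z (x + v) ζ)) μ l ≤ Real.exp (l * (1 + η) * m * W) := by
    refine (Finset.prod_le_prod (fun v _ => mgf_nonneg) hmgf).trans ?_
    rw [← Real.exp_sum, ← Finset.mul_sum]
    apply Real.exp_le_exp.mpr
    apply mul_le_mul_of_nonneg_left hW
    exact mul_nonneg (mul_nonneg hl (by linarith)) hm0
  have h6 : μ.real {ζ | a ≤ ∑ v ∈ F, w v * f (z (x + v) ζ)} ≤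
      Real.exp (-(l * (a - (1 + η) * m * W))) := by
    have h7 : -(l * (a - (1 + η) * m * W)) = -l * a + l * (1 + η) * m * W := by ring
    rw [h7, Real.exp_add]
    refine le_trans ?_ (mul_le_mul_of_nonneg_left h5 (Real.exp_pos _).le)
    refine le_trans (le_of_eq ?_) h
    congr 1; ext ζ; simp
  rw [← ofReal_measureReal]
  exact ENNReal.ofReal_le_ofReal h6

lemma laplace (hz : IsScenery d α μ z) (hα : 1 < α) (δ : ℝ) (hδ : 0 < δ) :
    ∃ θ > 0, ∫ ζ, Real.exp (-(θ * z 0 ζ)) ∂μ ≤ 1 - θ * ((∫ ζ, z 0 ζ ∂μ) - δ) := by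
  have := hz.prob
  have hi := scen_integrable hz hα
  have hm := hz.meas 0
  have hlim : Tendsto (fun n : ℕ => ∫ ζ, (n + 1 : ℝ) * (1 - Real.exp (-((1 / (n + 1 : ℝ)) * z 0 ζ))) ∂μ)
      atTop (nhds (∫ ζ, z 0 ζ ∂μ)) := by
    apply tendsto_integral_of_dominated_convergence (fun ζ => z 0 ζ) _ hi
    · intro n
      refine ae_of_all _ fun ζ => ?_
      have h0 := hz.nonneg 0 ζ
      have h1 := Real.add_one_le_exp (-((1 / (n + 1 : ℝ)) * z 0 ζ))
      have h2 : Real.exp (-((1 / (n + 1 : ℝ)) * z 0 ζ)) ≤ 1 := Real.exp_le_one_iff.mpr (by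
        have : 0 ≤ (1 / (n + 1 : ℝ)) * z 0 ζ := by positivity
        linarith)
      rw [Real.norm_of_nonneg (mul_nonneg (by positivity) (by linarith))]
      calc (n + 1 : ℝ) * (1 - Real.exp (-((1 / (n + 1 : ℝ)) * z 0 ζ)))
          ≤ (n + 1 : ℝ) * ((1 / (n + 1 : ℝ)) * z 0 ζ) := by gcongr; linarith
        _ = z 0 ζ := by field_simp
    · refine ae_of_all _ fun ζ => ?_
      have hd : HasDerivAt (fun x : ℝ => -Real.exp (-(x * z 0 ζ))) (z 0 ζ) 0 := by
        have h1 : HasDerivAt (fun x : ℝ => -(x * z 0 ζ)) (-(1 * z 0 ζ)) 0 :=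
          ((hasDerivAt_id (0:ℝ)).mul_const (z 0 ζ)).neg
        have := h1.exp.neg
        simp only [zero_mul, neg_zero, Real.exp_zero, one_mul, neg_neg] at this
        exact this
      have h2 := hd.tendsto_slope_zero_right
      have h3 : Tendsto (fun n : ℕ => 1 / ((n:ℝ) + 1)) atTop (nhdsWithin 0 (Ioi 0)) :=
        tendsto_nhdsWithin_iff.mpr ⟨tendsto_one_div_add_atTop_nhds_zero_nat,
          Eventually.of_forall fun n => by simp only [mem_Ioi]; positivity⟩
      refine (h2.comp h3).congr fun n => ?_
      simp only [Function.comp, zero_add, one_div, inv_inv, smul_eq_mul, zero_mul, neg_zero, Real.exp_zero]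
      ring
    · intro n
      apply Measurable.aestronglyMeasurable
      fun_prop
  obtain ⟨n, hn⟩ := (hlim.eventually (lt_mem_nhds (show (∫ ζ, z 0 ζ ∂μ) - δ < ∫ ζ, z 0 ζ ∂μ by linarith))).exists
  refine ⟨1 / (n + 1 : ℝ), by positivity, ?_⟩
  have hei : Integrable (fun ζ => Real.exp (-((1 / (n + 1 : ℝ)) * z 0 ζ))) μ := by
    apply integrable_bdd μ _ (C := 1)
    · fun_prop
    · intro ζ
      rw [abs_of_pos (Real.exp_pos _)]
      have := hz.nonneg 0 ζ
      exact Real.exp_le_one_iff.mpr (by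
        have : 0 ≤ (1 / (n + 1 : ℝ)) * z 0 ζ := by positivity
        linarith)
  rw [integral_const_mul, integral_sub (integrable_const _) hei] at hn
  simp only [integral_const, probReal_univ, smul_eq_mul, mul_one] at hn
  set I := ∫ ζ, Real.exp (-((1 / (n + 1 : ℝ)) * z 0 ζ)) ∂μ
  have hp : (0:ℝ) < n + 1 := by positivity
  have : (1 / (n + 1 : ℝ)) * ((∫ ζ, z 0 ζ ∂μ) - δ) ≤ 1 - I := by
    rw [one_div, inv_mul_le_iff₀ hp]; linarith
  linarith

end scen

open MeasureTheory ProbabilityTheory Filter Set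

lemma summ_exp (k : ℝ) (c κ : ℝ) (hc : 0 < c) (hκ : 0 < κ) :
    Summable fun n : ℕ => (n:ℝ) ^ k * Real.exp (-(c * (n:ℝ) ^ κ)) := by
  have h1 := (isLittleO_exp_neg_mul_rpow_atTop hc (-((k + 2) / κ)))
  have h2 : Tendsto (fun n : ℕ => (n:ℝ) ^ κ) atTop atTop :=
    (tendsto_rpow_atTop hκ).comp tendsto_natCast_atTop_atTop
  have h3 := (h1.comp_tendsto h2).bound (show (0:ℝ) < 1 by norm_num)
  refine Summable.of_norm_bounded_eventually_nat (g := fun n : ℕ => (n:ℝ) ^ (-2 : ℝ))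
    (Real.summable_nat_rpow.mpr (by norm_num)) ?_
  filter_upwards [h3, eventually_ge_atTop 1] with n hn hn1
  have hn0 : (0:ℝ) < n := by exact_mod_cast hn1
  simp only [Function.comp, one_mul] at hn
  rw [Real.norm_of_nonneg (Real.exp_pos _).le, Real.norm_of_nonneg (by positivity),
    ← Real.rpow_mul hn0.le] at hn
  rw [Real.norm_of_nonneg (by positivity)]
  calc (n:ℝ) ^ k * Real.exp (-(c * (n:ℝ) ^ κ)) ≤ (n:ℝ) ^ k * (n:ℝ) ^ (κ * -((k + 2) / κ)) := by
        gcongr; rw [← neg_mul]; exact hn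
    _ = _ := by
        rw [← Real.rpow_add hn0]; congr 1; field_simp; ring

lemma bor_can {Ω : Type*} [MeasurableSpace Ω] (μ : Measure Ω) [IsFiniteMeasure μ]
    (bad : ℕ → Set Ω) (f : ℕ → ℝ)
    (hf : Summable f) (h : ∀ᶠ n in atTop, μ (bad n) ≤ ENNReal.ofReal (f n)) :
    ∀ᵐ ω ∂μ, ∀ᶠ n in atTop, ω ∉ bad n := by
  obtain ⟨n0, hn0⟩ := eventually_atTop.mp h
  have h1 : ∑' n, μ (bad (n + n0)) ≠ ⊤ := by
    refine ne_top_of_le_ne_top (b := ∑' n, ENNReal.ofReal (|f (n + n0)|)) ?_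
      (ENNReal.tsum_le_tsum fun n => (hn0 _ (by omega)).trans (ENNReal.ofReal_le_ofReal (le_abs_self _)))
    rw [← ENNReal.ofReal_tsum_of_nonneg (fun n => abs_nonneg _)]
    · exact ENNReal.ofReal_ne_top
    · exact (summable_nat_add_iff n0).mpr hf.abs
  filter_upwards [ae_eventually_notMem h1] with ω hω
  obtain ⟨n1, hn1⟩ := eventually_atTop.mp hω
  refine eventually_atTop.mpr ⟨n1 + n0, fun n hn => ?_⟩
  have := hn1 (n - n0) (by omega)
  rwa [Nat.sub_add_cancel (by omega)] at this

section scen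
variable {d : ℕ} {α : ℝ} {Ωz : Type*} [MeasurableSpace Ωz] {μ : Measure Ωz}
  {z : (Fin d → ℤ) → Ωz → ℝ}

lemma propI (hz : IsScenery d α μ z) (hd : 1 ≤ d) (θ ε : ℝ) (hθ : 0 < θ) (hε : 0 < ε) :
    ∀ᵐ ζ ∂μ, ∀ᶠ s : ℕ in atTop, ∀ x ∈ boxF d (s ^ 2),
      ∑' y, pE d s (y - x) * ENNReal.ofReal (Real.exp (-(θ * z y ζ)))
        ≤ ENNReal.ofReal ((∫ ζ, Real.exp (-(θ * z 0 ζ)) ∂μ) + ε) := by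
  have := hz.prob
  set m := ∫ ζ, Real.exp (-(θ * z 0 ζ)) ∂μ with hm
  have hexp1 : ∀ x : ℝ, 0 ≤ x → Real.exp (-(θ * x)) ≤ 1 := fun x hx =>
    Real.exp_le_one_iff.mpr (by have : 0 ≤ θ * x := by positivity
                                linarith)
  have hm0 : 0 ≤ m := integral_nonneg fun ζ => (Real.exp_pos _).le
  have hm1 : m ≤ 1 := by
    have := integral_mono_of_nonneg (μ := μ) (f := fun ζ => Real.exp (-(θ * z 0 ζ))) (g := fun _ => 1)
      (ae_of_all _ fun ζ => (Real.exp_pos _).le) (integrable_const _)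
      (ae_of_all _ fun ζ => hexp1 _ (hz.nonneg _ _))
    simpa using this
  set η := min 1 (ε / 4) with hη
  have hη0 : 0 < η := lt_min one_pos (by linarith)
  set bad : ℕ → Set Ωz := fun s => ⋃ x ∈ boxF d (s ^ 2),
    {ζ | m + ε / 2 ≤ ∑ v ∈ boxF d s, pk d s v * Real.exp (-(θ * z (x + v) ζ))} with hbad
  have hb : ∀ᶠ s : ℕ in atTop, μ (bad s) ≤
      ENNReal.ofReal (3 ^ d * ((s:ℝ) ^ (2 * d : ℝ) * Real.exp (-(η * (ε / 4) * (s:ℝ) ^ (1/2 : ℝ))))) := by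
    filter_upwards [eventually_ge_atTop 1] with s hs
    have hs1 : (1:ℝ) ≤ s := by exact_mod_cast hs
    have hsq : 1 ≤ Real.sqrt s := Real.one_le_sqrt.mpr hs1
    have hx : ∀ x, μ {ζ | m + ε / 2 ≤ ∑ v ∈ boxF d s, pk d s v * Real.exp (-(θ * z (x + v) ζ))}
        ≤ ENNReal.ofReal (Real.exp (-(η * (ε / 4) * (s:ℝ) ^ (1/2 : ℝ)))) := by
      intro x
      refine (chern hz (fun r => Real.exp (-(θ * r))) (by fun_prop) 1 m (fun r _ => (Real.exp_pos _).le)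
        hexp1 le_rfl x (boxF d s) (pk d s) (pk_nonneg d hd s (by linarith)) 1
        (sum_le_hasSum _ (fun y _ => pk_nonneg d hd s (by linarith) y) (pk_sum d hd s (by linarith)))
        (η * Real.sqrt s) η (by positivity) hη0.le (min_le_left _ _) (fun y _ => ?_) (m + ε / 2)).trans ?_
      · have h1 := pk_le d s (by linarith) y
        have h2 : (1 / Real.sqrt s) ^ d ≤ 1 / Real.sqrt s := by
          apply pow_le_of_le_one (by positivity) _ (by omega)
          rw [div_le_one (by linarith)]; exact hsq
        calc η * Real.sqrt s * pk d s y * 1 ≤ η * Real.sqrt s * (1 / Real.sqrt s) * 1 := by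
              gcongr; exact h1.trans h2
          _ = η := by field_simp
      · apply ENNReal.ofReal_le_ofReal
        apply Real.exp_le_exp.mpr
        rw [Real.sqrt_eq_rpow]
        have h3 : ε / 4 ≤ m + ε / 2 - (1 + η) * m * 1 := by
          have : η ≤ ε / 4 := min_le_right _ _
          nlinarith
        have h4 : 0 ≤ η * (s:ℝ) ^ (1/2:ℝ) := by positivity
        nlinarith
    refine (measure_biUnion_finset_le _ _).trans ((Finset.sum_le_sum fun x _ => hx x).trans ?_)
    rw [Finset.sum_const, card_boxF, nsmul_eq_mul, ← ENNReal.ofReal_natCast, ← ENNReal.ofReal_mul (by positivity)]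
    apply ENNReal.ofReal_le_ofReal
    rw [← mul_assoc]
    apply mul_le_mul_of_nonneg_right _ (Real.exp_pos _).le
    rw [show (2 * d : ℝ) = ((2 * d : ℕ) : ℝ) by push_cast; ring, Real.rpow_natCast, pow_mul, ← mul_pow]
    push_cast
    gcongr
    nlinarith
  have hgood := bor_can μ bad _ ((summ_exp (2 * d) (η * (ε / 4)) (1/2) (by positivity) (by norm_num)).mul_left _) hb
  have hfar : ∀ᶠ s : ℕ in atTop, 2 * d * Real.exp 2 * Real.exp (-((s:ℝ) / Real.sqrt s)) ≤ ε / 2 := by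
    have h1 : Tendsto (fun s : ℕ => (s:ℝ) / Real.sqrt s) atTop atTop := by
      simp only [Real.div_sqrt]
      exact Real.tendsto_sqrt_atTop.comp tendsto_natCast_atTop_atTop
    have h2 := (Real.tendsto_exp_neg_atTop_nhds_zero.comp h1).const_mul (2 * d * Real.exp 2)
    rw [mul_zero] at h2
    exact h2.eventually (ge_mem_nhds (by linarith))
  filter_upwards [hgood] with ζ hζ
  filter_upwards [hζ, hfar, eventually_ge_atTop 1] with s hs1 hs2 hs3 x hx
  have hs1' : (1:ℝ) ≤ s := by exact_mod_cast hs3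
  have hnb : ∑ v ∈ boxF d s, pk d s v * Real.exp (-(θ * z (x + v) ζ)) ≤ m + ε / 2 := by
    by_contra hc
    push Not at hc
    exact hs1 (mem_biUnion (by exact_mod_cast hx) hc.le)
  rw [← (Equiv.addLeft x).tsum_eq]
  simp only [Equiv.coe_addLeft, add_sub_cancel_left]
  refine (tsum_box_le d s _).trans ?_
  rw [show m + ε = (m + ε / 2) + ε / 2 by ring, ENNReal.ofReal_add (by linarith) (by linarith)]
  gcongr
  · refine le_trans (le_of_eq ?_) (ENNReal.ofReal_le_ofReal hnb)
    rw [ENNReal.ofReal_sum_of_nonneg]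
    · refine Finset.sum_congr rfl fun v _ => ?_
      rw [ENNReal.ofReal_mul (pk_nonneg d hd s (by linarith) v)]; rfl
    · intro v _; exact mul_nonneg (pk_nonneg d hd s (by linarith) v) (Real.exp_pos _).le
  · refine le_trans (ENNReal.tsum_le_tsum fun v => ?_)
      ((pE_tail d hd s s s hs1' (by linarith) le_rfl).trans (ENNReal.ofReal_le_ofReal hs2))
    by_cases hv : v ∈ farSet d s
    · rw [indicator_of_mem hv, indicator_of_mem hv]
      exact mul_le_of_le_one_right' (ENNReal.ofReal_le_one.mpr (hexp1 _ (hz.nonneg _ _)))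
    · rw [indicator_of_notMem hv, indicator_of_notMem hv]

end scen

open MeasureTheory ProbabilityTheory Filter Set

/-! ### Bridge occupation weights -/

/-- expected time spent at `y` by the walk on `[0,t]` when it ends at `x` -/
noncomputable def Wt (d : ℕ) (t : ℝ) (x y : Fin d → ℤ) : ENNReal :=
  ∫⁻ u in Ioc (0:ℝ) t, pE d u y * pE d (t - u) (x - y)

lemma Wt_meas (d : ℕ) (t : ℝ) (x y : Fin d → ℤ) :
    Measurable fun u => pE d u y * pE d (t - u) (x - y) :=
  (pE_meas d y).mul ((pE_meas d (x - y)).comp (measurable_const.sub measurable_id))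

lemma Wt_sum (d : ℕ) (hd : 1 ≤ d) (t : ℝ) (x : Fin d → ℤ) :
    ∑' y, Wt d t x y = ENNReal.ofReal t * pE d t x := by
  unfold Wt
  rw [← lintegral_tsum fun y => (Wt_meas d t x y).aemeasurable]
  have : ∫⁻ u in Ioc (0:ℝ) t, ∑' y, pE d u y * pE d (t - u) (x - y) = ∫⁻ u in Ioc (0:ℝ) t, pE d t x := by
    apply setLIntegral_congr_fun measurableSet_Ioc
    intro u hu
    simp only
    rw [pE_CK d hd u (t - u) hu.1.le (by linarith [hu.2]) x, add_sub_cancel]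
  rw [this, lintegral_const, Measure.restrict_apply MeasurableSet.univ, univ_inter, Real.volume_Ioc,
    sub_zero, mul_comm]

lemma Wt_mono (d : ℕ) (hd : 1 ≤ d) (t h : ℝ) (hh : 0 ≤ h) (x y : Fin d → ℤ) :
    Wt d t x y ≤ ENNReal.ofReal (Real.exp (2 * d * h)) * Wt d (t + h) x y := by
  unfold Wt
  rw [← lintegral_const_mul _ (Wt_meas d (t + h) x y)]
  refine le_trans ?_ (lintegral_mono_set (Ioc_subset_Ioc_right (by linarith : t ≤ t + h)))
  apply setLIntegral_mono' measurableSet_Ioc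
  intro u hu
  rw [mul_left_comm]
  gcongr
  unfold pE
  rw [← ENNReal.ofReal_mul (Real.exp_pos _).le]
  apply ENNReal.ofReal_le_ofReal
  have h1 := pk_time_ge d hd (t - u) h (by linarith [hu.2]) hh (x - y)
  have h2 : Real.exp (2 * d * h) * Real.exp (-(2 * d * h)) = 1 := by rw [← Real.exp_add]; simp
  calc pk d (t - u) (x - y) = Real.exp (2 * d * h) * (Real.exp (-(2 * d * h)) * pk d (t - u) (x - y)) := by
        rw [← mul_assoc, h2, one_mul]
    _ ≤ Real.exp (2 * d * h) * pk d (t - u + h) (x - y) := by gcongr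
    _ = _ := by congr 2; ring

lemma pk_le_rpow (d : ℕ) (hd : 1 ≤ d) (u s : ℝ) (hu : 0 < u) (hs0 : 0 ≤ s) (hs : s ≤ d / 2) (y : Fin d → ℤ) :
    pk d u y ≤ u ^ (-s) := by
  by_cases h1 : u ≤ 1
  · exact (pk_le_one d hd u hu.le y).trans (Real.one_le_rpow_of_pos_of_le_one_of_nonpos hu h1 (by linarith))
  · refine (pk_le d u hu y).trans ?_
    rw [one_div, ← Real.sqrt_inv, Real.sqrt_eq_rpow, ← Real.rpow_natCast, ← Real.rpow_mul (by positivity),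
      Real.inv_rpow hu.le, ← Real.rpow_neg hu.le]
    push Not at h1
    apply Real.rpow_le_rpow_of_exponent_le h1.le
    linarith

lemma Wt_le (d : ℕ) (hd : 1 ≤ d) (s : ℝ) (hs0 : 0 ≤ s) (hs1 : s < 1) (hs : s ≤ d / 2) :
    ∃ C > 0, ∀ t : ℝ, 0 < t → ∀ x y, Wt d t x y ≤ ENNReal.ofReal (C * t ^ (1 - s - d / 2)) := by
  refine ⟨2 ^ ((d:ℝ)/2) * (2 / (1 - s)), by have : 0 < 1 - s := by linarith
                                            positivity, fun t ht x y => ?_⟩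
  set B := (t / 2) ^ (-((d:ℝ)/2)) with hB
  have hB0 : 0 ≤ B := by positivity
  have hii : IntervalIntegrable (fun u : ℝ => u ^ (-s)) volume 0 t :=
    intervalIntegral.intervalIntegrable_rpow' (by linarith)
  have hii2 : IntervalIntegrable (fun u : ℝ => (t - u) ^ (-s)) volume 0 t := by
    have := hii.comp_sub_left t
    simp only [sub_zero, sub_self] at this
    exact this.symm
  have hii3 := (hii.add hii2).const_mul B
  have hintg : ∫ u in (0:ℝ)..t, B * (u ^ (-s) + (t - u) ^ (-s)) = B * (2 * (t ^ (1 - s) / (1 - s))) := by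
    rw [intervalIntegral.integral_const_mul, intervalIntegral.integral_add hii hii2,
      intervalIntegral.integral_comp_sub_left (fun u => u ^ (-s)) t]
    simp only [sub_zero, sub_self]
    rw [integral_rpow (Or.inl (by linarith)), Real.zero_rpow (by linarith)]
    rw [show -s + 1 = 1 - s by ring]; ring
  calc Wt d t x y ≤ ∫⁻ u in Ioc (0:ℝ) t, ENNReal.ofReal (B * (u ^ (-s) + (t - u) ^ (-s))) := by
        unfold Wt
        rw [← restrict_Ioo_eq_restrict_Ioc]
        apply setLIntegral_mono' measurableSet_Ioo
        intro u hu
        unfold pE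
        rw [← ENNReal.ofReal_mul (pk_nonneg d hd u hu.1.le y)]
        apply ENNReal.ofReal_le_ofReal
        have hu1 := hu.1
        have hu2 : 0 < t - u := by linarith [hu.2]
        have a1 := pk_le_rpow d hd u s hu1 hs0 hs y
        have a2 := pk_le_rpow d hd (t - u) s hu2 hs0 hs (x - y)
        have b1 := pk_le_rpow d hd u (d/2) hu1 (by positivity) le_rfl y
        have b2 := pk_le_rpow d hd (t - u) (d/2) hu2 (by positivity) le_rfl (x - y)
        have c1 := pk_nonneg d hd u hu1.le y
        have c2 := pk_nonneg d hd (t - u) hu2.le (x - y)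
        have e1 : 0 ≤ u ^ (-s) := by positivity
        have e2 : 0 ≤ (t - u) ^ (-s) := by positivity
        have hmn : -((d:ℝ)/2) ≤ 0 := by
          have : 0 ≤ (d:ℝ)/2 := by positivity
          linarith
        by_cases hc : t / 2 ≤ u
        · have : u ^ (-((d:ℝ)/2)) ≤ B := Real.rpow_le_rpow_of_nonpos (by linarith) hc hmn
          calc pk d u y * pk d (t - u) (x - y) ≤ B * (t - u) ^ (-s) :=
                mul_le_mul (b1.trans this) a2 c2 hB0
            _ ≤ _ := by nlinarith
        · have : (t - u) ^ (-((d:ℝ)/2)) ≤ B := Real.rpow_le_rpow_of_nonpos (by linarith) (by linarith) hmn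
          calc pk d u y * pk d (t - u) (x - y) ≤ u ^ (-s) * B :=
                mul_le_mul a1 (b2.trans this) c2 e1
            _ ≤ _ := by nlinarith
    _ = ENNReal.ofReal (∫ u in Ioc (0:ℝ) t, B * (u ^ (-s) + (t - u) ^ (-s))) := by
        rw [ofReal_integral_eq_lintegral_ofReal]
        · exact (intervalIntegrable_iff_integrableOn_Ioc_of_le ht.le).mp hii3
        · filter_upwards [self_mem_ae_restrict measurableSet_Ioc] with u hu
          have hu1 := hu.1
          have hu2 : 0 ≤ t - u := by linarith [hu.2]
          simp only [Pi.zero_apply]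
          positivity
    _ = _ := by
        rw [← intervalIntegral.integral_of_le ht.le, hintg]
        congr 1
        rw [hB, div_eq_mul_inv, Real.mul_rpow ht.le (by norm_num), Real.inv_rpow (by norm_num),
          Real.rpow_neg (by norm_num : (0:ℝ) ≤ 2), inv_inv, show 1 - s - (d:ℝ)/2 = -((d:ℝ)/2) + (1 - s) by ring,
          Real.rpow_add ht]
        ring

open MeasureTheory ProbabilityTheory Filter Set

/-- expected occupation time -/
noncomputable def Oc (d : ℕ) (t : ℝ) (y : Fin d → ℤ) : ENNReal := ∫⁻ u in Ioc (0:ℝ) t, pE d u y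

lemma Wt_le_Oc (d : ℕ) (hd : 1 ≤ d) (t : ℝ) (x y : Fin d → ℤ) : Wt d t x y ≤ Oc d t y := by
  unfold Wt Oc
  apply setLIntegral_mono' measurableSet_Ioc
  intro u hu
  exact mul_le_of_le_one_right' (pE_le_one d hd _ (by linarith [hu.2]) _)

section scen
variable {d : ℕ} {α : ℝ} {Ωz : Type*} [MeasurableSpace Ωz] {μ : Measure Ωz}
  {z : (Fin d → ℤ) → Ωz → ℝ}

lemma scen_lint (hz : IsScenery d α μ z) (hα : 1 < α) (y : Fin d → ℤ) :
    ∫⁻ ζ, ENNReal.ofReal (z y ζ) ∂μ = ENNReal.ofReal (∫ ζ, z 0 ζ ∂μ) := by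
  rw [ofReal_integral_eq_lintegral_ofReal (scen_integrable hz hα) (ae_of_all _ (hz.nonneg 0))]
  have := ((hz.ident y).comp (u := fun r => ENNReal.ofReal r) ENNReal.measurable_ofReal)
  exact this.lintegral_eq

lemma scen_set (hz : IsScenery d α μ z) (hα : 1 < α) (t : ℝ) (A : Set (Fin d → ℤ)) (b : ENNReal)
    (hb : ∀ u ∈ Ioc (0:ℝ) t, ∑' y, A.indicator (pE d u) y ≤ b) :
    ∫⁻ ζ, ∑' y, A.indicator (fun y => Oc d t y * ENNReal.ofReal (z y ζ)) y ∂μ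
      ≤ ENNReal.ofReal (∫ ζ, z 0 ζ ∂μ) * (b * ENNReal.ofReal t) := by
  have h1 : ∀ y, Measurable fun ζ => A.indicator (fun y => Oc d t y * ENNReal.ofReal (z y ζ)) y := by
    intro y
    by_cases hy : y ∈ A
    · simp only [indicator_of_mem hy]
      exact ((hz.meas y).ennreal_ofReal).const_mul _
    · simp only [indicator_of_notMem hy]; exact measurable_const
  rw [lintegral_tsum fun y => (h1 y).aemeasurable]
  have h2 : ∀ y, ∫⁻ ζ, A.indicator (fun y => Oc d t y * ENNReal.ofReal (z y ζ)) y ∂μ =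
      ENNReal.ofReal (∫ ζ, z 0 ζ ∂μ) * ∫⁻ u in Ioc (0:ℝ) t, A.indicator (pE d u) y := by
    intro y
    by_cases hy : y ∈ A
    · simp only [indicator_of_mem hy]
      rw [lintegral_const_mul _ (hz.meas y).ennreal_ofReal, scen_lint hz hα, mul_comm]; rfl
    · simp only [indicator_of_notMem hy]; simp
  simp_rw [h2]
  rw [ENNReal.tsum_mul_left, ← lintegral_tsum]
  · gcongr
    calc _ ≤ ∫⁻ u in Ioc (0:ℝ) t, b := setLIntegral_mono' measurableSet_Ioc hb
      _ = _ := by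
        rw [lintegral_const, Measure.restrict_apply MeasurableSet.univ, univ_inter, Real.volume_Ioc, sub_zero]
  · intro y
    apply Measurable.aemeasurable
    by_cases hy : y ∈ A
    · simp only [indicator_of_mem hy]; exact pE_meas d y
    · simp only [indicator_of_notMem hy]; exact measurable_const

/-- integrability of the scenery along the walk -/
lemma propIII (hz : IsScenery d α μ z) (hα : 1 < α) (hd : 1 ≤ d) :
    ∀ᵐ ζ ∂μ, ∀ t : ℝ, ∑' y, Oc d t y * ENNReal.ofReal (z y ζ) ≠ ⊤ := by
  have h1 : ∀ n : ℕ, ∀ᵐ ζ ∂μ, ∑' y, Oc d n y * ENNReal.ofReal (z y ζ) < ⊤ := by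
    intro n
    have := scen_set hz hα n univ 1 (fun u hu => by
      simp only [indicator_univ]; exact (pE_sum d hd u hu.1.le).le)
    simp only [indicator_univ] at this
    apply ae_lt_top
    · exact Measurable.tsum fun y => ((hz.meas y).ennreal_ofReal).const_mul _
    · exact ne_top_of_le_ne_top (by finiteness) this
  filter_upwards [ae_all_iff.mpr h1] with ζ hζ t
  obtain ⟨n, hn⟩ := exists_nat_ge t
  refine ne_top_of_le_ne_top (hζ n).ne (ENNReal.tsum_le_tsum fun y => ?_)
  gcongr
  exact lintegral_mono_set (Ioc_subset_Ioc_right hn)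

end scen

open MeasureTheory ProbabilityTheory Filter Set

section scen
variable {d : ℕ} {α : ℝ} {Ωz : Type*} [MeasurableSpace Ωz] {μ : Measure Ωz}
  {z : (Fin d → ℤ) → Ωz → ℝ}

lemma sqrt_pow_rpow (t : ℝ) (ht : 0 < t) (d : ℕ) : (1 / Real.sqrt t) ^ d = t ^ (-((d:ℝ)/2)) := by
  rw [one_div, ← Real.sqrt_inv, Real.sqrt_eq_rpow, ← Real.rpow_natCast, ← Real.rpow_mul (by positivity),
      Real.inv_rpow ht.le, ← Real.rpow_neg ht.le]
  congr 1; ring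

lemma Wt_ne_top (hd : 1 ≤ d) (t : ℝ) (_ht : 0 ≤ t) (x y : Fin d → ℤ) : Wt d t x y ≠ ⊤ := by
  have h := ENNReal.le_tsum (f := fun y => Wt d t x y) y
  rw [Wt_sum d hd t x] at h
  refine ne_top_of_le_ne_top (ENNReal.mul_ne_top ENNReal.ofReal_ne_top ?_) h
  exact ENNReal.ofReal_ne_top

lemma up_prob (hz : IsScenery d α μ z) (hd : 1 ≤ d) (hα : 1 < α) (s τ c₀ C δ : ℝ)
    (hc₀ : 0 < c₀) (hC : 0 < C) (hδ : 0 < δ)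
    (hW : ∀ t : ℝ, 0 < t → ∀ x y, Wt d t x y ≤ ENNReal.ofReal (C * t ^ (1 - s - d / 2))) :
    ∃ κ > 0, ∀ t : ℝ, 1 ≤ t → ∀ x, c₀ * (1 / Real.sqrt t) ^ d ≤ pk d t x → ∀ L : ℕ,
      μ {ζ | ((∫ ζ, z 0 ζ ∂μ) + δ / 2) * (t * pk d t x) ≤
        ∑ v ∈ boxF d L, (Wt d t x v).toReal * min (z v ζ) (t ^ τ)} ≤
        ENNReal.ofReal (Real.exp (-(κ * t ^ (s - τ)))) := by
  have hcpos := scen_mean_pos hz hα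
  set c := ∫ ζ, z 0 ζ ∂μ with hc
  set η := min 1 (δ / (4 * c)) with hη
  have hη0 : 0 < η := lt_min one_pos (by positivity)
  have hηc : η * c ≤ δ / 4 := by
    have : η ≤ δ / (4 * c) := min_le_right _ _
    calc η * c ≤ δ / (4 * c) * c := by gcongr
      _ = δ / 4 := by field_simp
  refine ⟨η / C * (δ / 4) * c₀, by positivity, fun t ht x hx L => ?_⟩
  have ht0 : 0 < t := by linarith
  have hT : 0 < t ^ τ := Real.rpow_pos_of_pos ht0 _
  have hp0 := pk_nonneg d hd t ht0.le x
  have hch := chern hz (fun r => min r (t ^ τ)) (by fun_prop) (t ^ τ) c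
    (fun r hr => le_min hr hT.le) (fun r _ => min_le_right _ _) (by
      rw [hc]
      apply integral_mono_of_nonneg (ae_of_all _ fun ζ => le_min (hz.nonneg _ _) hT.le)
        (scen_integrable hz hα) (ae_of_all _ fun ζ => min_le_left _ _))
    0 (boxF d L) (fun y => (Wt d t x y).toReal) (fun y => ENNReal.toReal_nonneg) (t * pk d t x) (by
      have h1 := Wt_sum d hd t x
      have h2 : ∑ y ∈ boxF d L, Wt d t x y ≤ ENNReal.ofReal (t * pk d t x) := by
        rw [ENNReal.ofReal_mul ht0.le]
        exact (ENNReal.sum_le_tsum _).trans h1.le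
      rw [← ENNReal.toReal_sum fun y _ => Wt_ne_top hd t ht0.le x y]
      exact ENNReal.toReal_le_of_le_ofReal (by positivity) h2)
    (η / (C * t ^ (1 - s - d / 2) * t ^ τ)) η (by positivity) hη0.le (min_le_left _ _) (fun y _ => by
      have h1 : (Wt d t x y).toReal ≤ C * t ^ (1 - s - d / 2) :=
        ENNReal.toReal_le_of_le_ofReal (by positivity) (hW t ht0 x y)
      calc η / (C * t ^ (1 - s - d / 2) * t ^ τ) * (Wt d t x y).toReal * t ^ τ
          ≤ η / (C * t ^ (1 - s - d / 2) * t ^ τ) * (C * t ^ (1 - s - d / 2)) * t ^ τ := by gcongr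
        _ = η := by field_simp)
    ((c + δ / 2) * (t * pk d t x))
  simp only [zero_add] at hch
  refine hch.trans (ENNReal.ofReal_le_ofReal (Real.exp_le_exp.mpr (neg_le_neg ?_)))
  have h3 : δ / 4 * (t * pk d t x) ≤ (c + δ / 2) * (t * pk d t x) - (1 + η) * c * (t * pk d t x) := by
    have : 0 ≤ t * pk d t x := by positivity
    nlinarith
  rw [sqrt_pow_rpow t ht0] at hx
  calc η / C * (δ / 4) * c₀ * t ^ (s - τ)
      = η / (C * t ^ (1 - s - d / 2) * t ^ τ) * (δ / 4 * (t * (c₀ * t ^ (-((d:ℝ)/2))))) := by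
        have e : t ^ (s - τ) = t * t ^ (-((d:ℝ)/2)) / (t ^ (1 - s - (d:ℝ) / 2) * t ^ τ) := by
          rw [eq_div_iff (by positivity), ← Real.rpow_add ht0, ← Real.rpow_add ht0]
          nth_rewrite 2 [← Real.rpow_one t]
          rw [← Real.rpow_add ht0]; congr 1; ring
        rw [e]; field_simp
    _ ≤ η / (C * t ^ (1 - s - d / 2) * t ^ τ) * (δ / 4 * (t * pk d t x)) := by gcongr
    _ ≤ _ := by gcongr

/-- growth exponent comparison -/
lemma pow_ev (K b γ τ : ℝ) (hK : 0 < K) (hb : 0 < b) (hγ : 0 < γ) (h : b * γ < τ) :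
    ∀ᶠ t : ℝ in atTop, K * (2 + t ^ b) ^ γ ≤ t ^ τ := by
  have h1 : Tendsto (fun t : ℝ => t ^ (τ - b * γ)) atTop atTop := tendsto_rpow_atTop (by linarith)
  filter_upwards [h1.eventually_ge_atTop (K * 3 ^ γ), eventually_ge_atTop 1] with t ht ht1
  have hb1 : 1 ≤ t ^ b := Real.one_le_rpow ht1 hb.le
  calc K * (2 + t ^ b) ^ γ ≤ K * (3 * t ^ b) ^ γ := by gcongr; linarith
    _ = K * 3 ^ γ * t ^ (b * γ) := by
      rw [Real.mul_rpow (by norm_num) (by positivity), ← Real.rpow_mul (by linarith)]; ring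
    _ ≤ t ^ (τ - b * γ) * t ^ (b * γ) := by gcongr
    _ = t ^ τ := by rw [← Real.rpow_add (by linarith)]; congr 1; ring

lemma sqrt_nat_rpow (k : ℕ) (a : ℝ) : (Real.sqrt k) ^ a = (k:ℝ) ^ (a / 2) := by
  rw [Real.sqrt_eq_rpow, ← Real.rpow_mul (by positivity)]; congr 1; ring

lemma sqrt_nat_tendsto : Tendsto (fun k : ℕ => Real.sqrt k) atTop atTop :=
  Real.tendsto_sqrt_atTop.comp tendsto_natCast_atTop_atTop

lemma up_seq (hz : IsScenery d α μ z) (hd : 1 ≤ d) (hα : max ((d:ℝ)/2) 1 < α) (R δ : ℝ)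
    (hδ : 0 < δ) :
    ∀ᵐ ζ ∂μ, ∀ᶠ k : ℕ in atTop, ∀ x : Fin d → ℤ, (∀ i, |(x i:ℝ)| ≤ R * Real.sqrt (Real.sqrt k)) →
      ∑' y, Wt d (Real.sqrt k) x y * ENNReal.ofReal (z y ζ) ≤
        ENNReal.ofReal (((∫ ζ, z 0 ζ ∂μ) + δ) * (Real.sqrt k * pk d (Real.sqrt k) x)) := by
  have := hz.prob
  have hα1 : 1 < α := (le_max_right _ _).trans_lt hα
  have hα2 : (d:ℝ)/2 < α := (le_max_left _ _).trans_lt hα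
  have hd0 : (0:ℝ) < d := by exact_mod_cast hd
  have hcpos := scen_mean_pos hz hα1
  set c := ∫ ζ, z 0 ζ ∂μ with hc
  obtain ⟨γ, hγ1, hγ2⟩ := exists_between (show (d:ℝ)/α < min (2:ℝ) (d:ℝ) by
    rw [lt_min_iff, div_lt_iff₀ (by linarith), div_lt_iff₀ (by linarith)]
    constructor <;> nlinarith)
  have hγ0 : 0 < γ := lt_trans (by positivity) hγ1
  obtain ⟨hγ2, hγd⟩ := lt_min_iff.mp hγ2
  obtain ⟨s, hs1, hs2⟩ := exists_between (show γ / 2 < min 1 ((d:ℝ)/2) by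
    rw [lt_min_iff]; constructor <;> linarith)
  obtain ⟨hs2, hs3⟩ := lt_min_iff.mp hs2
  obtain ⟨τ, hτ1, hτ2⟩ := exists_between hs1
  obtain ⟨b, hb1, hb2⟩ := exists_between (show 1/2 < τ / γ by rw [lt_div_iff₀ hγ0]; linarith)
  rw [lt_div_iff₀ hγ0] at hb2
  obtain ⟨C, hC, hW⟩ := Wt_le d hd s (by linarith) hs2 hs3.le
  obtain ⟨c₀, hc₀, hlow⟩ := pk_lower d R
  obtain ⟨κ, hκ, hprob⟩ := up_prob hz hd hα1 s τ c₀ C δ hc₀ hC hδ hW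
  have hlow' := sqrt_nat_tendsto.eventually hlow
  set L : ℕ → ℕ := fun k => ⌈(Real.sqrt k) ^ b⌉₊ with hL
  -- near part
  set bad : ℕ → Set Ωz := fun k => ⋃ x ∈ (boxF d k).filter
      (fun x => ∀ i, |(x i:ℝ)| ≤ R * Real.sqrt (Real.sqrt k)),
    {ζ | (c + δ / 2) * (Real.sqrt k * pk d (Real.sqrt k) x) ≤
        ∑ v ∈ boxF d (L k), (Wt d (Real.sqrt k) x v).toReal * min (z v ζ) ((Real.sqrt k) ^ τ)} with hbad
  have hb : ∀ᶠ k : ℕ in atTop, μ (bad k) ≤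
      ENNReal.ofReal (3 ^ d * ((k:ℝ) ^ (d : ℝ) * Real.exp (-(κ * (k:ℝ) ^ ((s - τ) / 2))))) := by
    filter_upwards [eventually_ge_atTop 1, hlow'] with k hk hl
    have hk1 : (1:ℝ) ≤ k := by exact_mod_cast hk
    have hsq : 1 ≤ Real.sqrt k := Real.one_le_sqrt.mpr hk1
    refine (measure_biUnion_finset_le _ _).trans ((Finset.sum_le_sum fun x hx => ?_ :
      _ ≤ ∑ x ∈ (boxF d k).filter (fun x => ∀ i, |(x i:ℝ)| ≤ R * Real.sqrt (Real.sqrt k)),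
        ENNReal.ofReal (Real.exp (-(κ * (k:ℝ) ^ ((s - τ) / 2))))).trans ?_)
    · rw [← sqrt_nat_rpow]
      exact hprob _ hsq x (hl x (Finset.mem_filter.mp hx).2) (L k)
    · rw [Finset.sum_const, nsmul_eq_mul, ← ENNReal.ofReal_natCast, ← ENNReal.ofReal_mul (by positivity)]
      apply ENNReal.ofReal_le_ofReal
      rw [← mul_assoc]
      apply mul_le_mul_of_nonneg_right _ (Real.exp_pos _).le
      have h1 : ((((boxF d k).filter
        (fun x => ∀ i, |(x i:ℝ)| ≤ R * Real.sqrt (Real.sqrt k))).card : ℕ) : ℝ) ≤ ((2 * k + 1) ^ d : ℕ) := by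
        rw [← card_boxF]; exact_mod_cast Finset.card_filter_le _ _
      refine h1.trans ?_
      rw [Real.rpow_natCast, ← mul_pow]
      push_cast
      gcongr
      linarith
  have hgood := bor_can μ bad _ ((summ_exp d κ ((s - τ) / 2) hκ (by linarith)).mul_left _) hb
  -- far part
  set FE : ℕ → Ωz → ENNReal := fun k ζ => ∑' y, (farSet d (L k)).indicator
    (fun y => Oc d (Real.sqrt k) y * ENNReal.ofReal (z y ζ)) y with hFE
  have hFEm : ∀ k, Measurable (FE k) := by
    intro k
    refine Measurable.tsum fun y => ?_
    by_cases hy : y ∈ farSet d (L k)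
    · simp only [indicator_of_mem hy]
      exact ((hz.meas y).ennreal_ofReal).const_mul _
    · simp only [indicator_of_notMem hy]; exact measurable_const
  set bad2 : ℕ → Set Ωz := fun k => {ζ | ENNReal.ofReal (δ / 2 * (Real.sqrt k *
    (c₀ * (1 / Real.sqrt (Real.sqrt k)) ^ d))) ≤ FE k ζ} with hbad2
  have hb2' : ∀ᶠ k : ℕ in atTop, μ (bad2 k) ≤
      ENNReal.ofReal ((c * (2 * d * Real.exp 2) * (2 / δ / c₀)) *
        ((k:ℝ) ^ ((d : ℝ)/4) * Real.exp (-(1 * (k:ℝ) ^ ((b - 1/2) / 2))))) := by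
    filter_upwards [eventually_ge_atTop 1] with k hk
    have hk1 : (1:ℝ) ≤ k := by exact_mod_cast hk
    have hsq : 1 ≤ Real.sqrt k := Real.one_le_sqrt.mpr hk1
    set t := Real.sqrt k with ht
    have ht0 : 0 < t := by linarith
    have hE : ∫⁻ ζ, FE k ζ ∂μ ≤ ENNReal.ofReal c *
        (ENNReal.ofReal (2 * d * Real.exp 2 * Real.exp (-(L k / Real.sqrt t))) * ENNReal.ofReal t) :=
      scen_set hz hα1 t (farSet d (L k)) _ fun u hu => pE_tail d hd t u (L k) hsq hu.1.le hu.2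
    rw [← ENNReal.ofReal_mul (by positivity), ← ENNReal.ofReal_mul hcpos.le] at hE
    have hpos : 0 < δ / 2 * (t * (c₀ * (1 / Real.sqrt t) ^ d)) := by positivity
    have hM := mul_meas_ge_le_lintegral (μ := μ) (hFEm k) (ENNReal.ofReal (δ / 2 * (t * (c₀ * (1 / Real.sqrt t) ^ d))))
    have hM2 := (ENNReal.le_div_iff_mul_le (Or.inl (ENNReal.ofReal_pos.mpr hpos).ne')
      (Or.inl ENNReal.ofReal_ne_top)).mpr ((mul_comm _ _).le.trans (hM.trans hE))
    rw [← ENNReal.ofReal_div_of_pos hpos] at hM2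
    refine hM2.trans (ENNReal.ofReal_le_ofReal ?_)
    rw [sqrt_pow_rpow t ht0, Real.rpow_neg ht0.le]
    have e1 : (k:ℝ) ^ ((d:ℝ)/4) = t ^ ((d:ℝ)/2) := by rw [ht, sqrt_nat_rpow]; congr 1; ring
    have e2 : (k:ℝ) ^ ((b - 1/2)/2) = t ^ (b - 1/2) := by rw [ht, sqrt_nat_rpow]
    rw [e1, e2, one_mul]
    have e3 : Real.exp (-(L k / Real.sqrt t)) ≤ Real.exp (-t ^ (b - 1/2)) := by
      apply Real.exp_le_exp.mpr
      apply neg_le_neg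
      rw [Real.rpow_sub ht0, ← Real.sqrt_eq_rpow]
      gcongr
      exact Nat.le_ceil _
    calc _ = (c * (2 * d * Real.exp 2) * (2 / δ / c₀)) * (t ^ ((d:ℝ)/2) * Real.exp (-(L k / Real.sqrt t))) := by
          field_simp
      _ ≤ _ := by gcongr
  have hgood2 := bor_can μ bad2 _ ((summ_exp ((d:ℝ)/4) 1 ((b - 1/2) / 2) one_pos (by linarith)).mul_left _) hb2'
  filter_upwards [hgood, hgood2, scen_growth hz hd hα1 γ hγ1] with ζ h1 h2 ⟨K, hK, hg⟩
  have hT := sqrt_nat_tendsto.eventually (pow_ev K b γ τ hK (by linarith) hγ0 hb2)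
  have hRk : ∀ᶠ k : ℕ in atTop, R * Real.sqrt (Real.sqrt k) ≤ k := by
    have : Tendsto (fun x : ℝ => x ^ (3/4 : ℝ)) atTop atTop := tendsto_rpow_atTop (by norm_num)
    filter_upwards [(this.comp tendsto_natCast_atTop_atTop).eventually_ge_atTop R, eventually_ge_atTop 1] with k hk hk1
    have hk0 : (0:ℝ) < k := by exact_mod_cast hk1
    simp only [Function.comp] at hk
    rw [Real.sqrt_eq_rpow, sqrt_nat_rpow]
    calc R * (k:ℝ) ^ ((1/2 : ℝ)/2) ≤ (k:ℝ) ^ (3/4:ℝ) * (k:ℝ) ^ ((1/2 : ℝ)/2) := by gcongr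
      _ = k := by rw [← Real.rpow_add hk0]; norm_num
  filter_upwards [h1, h2, hT, hlow', hRk, eventually_ge_atTop 1] with k hk1 hk2 hkT hkl hkR hk x hx
  have hk1' : (1:ℝ) ≤ k := by exact_mod_cast hk
  have hsq : 1 ≤ Real.sqrt k := Real.one_le_sqrt.mpr hk1'
  set t := Real.sqrt k with ht
  have ht0 : 0 < t := by linarith
  have hp := hkl x hx
  have hnear : ∑ v ∈ boxF d (L k), (Wt d t x v).toReal * z v ζ ≤ (c + δ / 2) * (t * pk d t x) := by
    by_contra hcon
    push Not at hcon
    apply hk1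
    refine mem_biUnion (x := x) ?_ ?_
    · simp only [Finset.coe_filter, mem_boxF, mem_ofPred_eq]
      exact ⟨fun i => (hx i).trans hkR, hx⟩
    · refine hcon.le.trans (Finset.sum_le_sum fun v hv => ?_)
      apply mul_le_mul_of_nonneg_left _ ENNReal.toReal_nonneg
      refine le_min le_rfl ((hg v).trans (le_trans ?_ hkT))
      have h3 : ‖v‖ ≤ L k := by
        rw [pi_norm_le_iff_of_nonneg (by positivity)]
        intro i
        rw [Int.norm_eq_abs]
        exact (mem_boxF _ _ _).mp hv i
      have h4 : (L k : ℝ) < t ^ b + 1 := Nat.ceil_lt_add_one (by positivity)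
      have h5 : 1 + ‖v‖ ≤ 2 + t ^ b := by linarith
      exact mul_le_mul_of_nonneg_left (Real.rpow_le_rpow (by positivity) h5 hγ0.le) hK.le
  have hfar : FE k ζ ≤ ENNReal.ofReal (δ / 2 * (t * pk d t x)) := by
    have : ζ ∉ bad2 k := hk2
    simp only [hbad2, mem_ofPred_eq, not_le] at this
    refine this.le.trans (ENNReal.ofReal_le_ofReal ?_)
    gcongr
  refine (tsum_box_le d (L k) _).trans ?_
  have hp0 := pk_nonneg d hd t ht0.le x
  rw [show (c + δ) * (t * pk d t x) = (c + δ / 2) * (t * pk d t x) + δ / 2 * (t * pk d t x) by ring,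
    ENNReal.ofReal_add (by positivity) (by positivity)]
  refine add_le_add ?_ (le_trans (ENNReal.tsum_le_tsum fun y => ?_) hfar)
  · refine le_trans (le_of_eq ?_) (ENNReal.ofReal_le_ofReal hnear)
    rw [ENNReal.ofReal_sum_of_nonneg fun v _ => mul_nonneg ENNReal.toReal_nonneg (hz.nonneg _ _)]
    refine Finset.sum_congr rfl fun v _ => ?_
    rw [ENNReal.ofReal_mul ENNReal.toReal_nonneg, ENNReal.ofReal_toReal (Wt_ne_top hd t ht0.le x v)]
  · by_cases hy : y ∈ farSet d (L k)
    · rw [indicator_of_mem hy, indicator_of_mem hy]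
      gcongr
      exact Wt_le_Oc d hd t x y
    · rw [indicator_of_notMem hy, indicator_of_notMem hy]

end scen

open MeasureTheory ProbabilityTheory Filter Set

section scen
variable {d : ℕ} {α : ℝ} {Ωz : Type*} [MeasurableSpace Ωz] {μ : Measure Ωz}
  {z : (Fin d → ℤ) → Ωz → ℝ}

lemma propII (hz : IsScenery d α μ z) (hd : 1 ≤ d) (hα : max ((d:ℝ)/2) 1 < α) (R δ : ℝ) (hR : 0 ≤ R)
    (hδ : 0 < δ) :
    ∀ᵐ ζ ∂μ, ∀ᶠ t : ℝ in atTop, ∀ x : Fin d → ℤ, (∀ i, |(x i:ℝ)| ≤ R * Real.sqrt t) →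
      ∑' y, Wt d t x y * ENNReal.ofReal (z y ζ) ≤
        ENNReal.ofReal (((∫ ζ, z 0 ζ ∂μ) + δ) * (t * pk d t x)) := by
  have hα1 : 1 < α := (le_max_right _ _).trans_lt hα
  have hcpos := scen_mean_pos hz hα1
  filter_upwards [up_seq hz hd hα R (δ / 2) (by linarith)] with ζ hζ
  set c := ∫ ζ, z 0 ζ ∂μ with hc
  obtain ⟨c₀, hc₀, hlow⟩ := pk_lower d R
  set φ : ℝ → ℝ := fun h => Real.exp (2 * d * h) * ((c + δ / 2) * ((1 + h) * (1 + 2 * d * h / c₀))) with hφ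
  have hφl : ∀ᶠ t : ℝ in atTop, φ t⁻¹ ≤ c + δ := by
    have h1 : Tendsto φ (nhds 0) (nhds (φ 0)) := by
      apply Continuous.tendsto; rw [hφ]; fun_prop
    have h2 : φ 0 = c + δ / 2 := by simp [hφ]
    rw [h2] at h1
    exact (h1.comp tendsto_inv_atTop_zero).eventually (ge_mem_nhds (by linarith))
  have hk : Tendsto (fun t : ℝ => ⌈t ^ 2⌉₊) atTop atTop :=
    tendsto_nat_ceil_atTop.comp (tendsto_pow_atTop (by norm_num))
  filter_upwards [hφl, hk.eventually hζ, hlow, eventually_ge_atTop 1] with t ht1 ht2 ht3 ht4 x hx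
  set T := Real.sqrt ⌈t ^ 2⌉₊ with hT
  have ht0 : 0 < t := by linarith
  have hTt : t ≤ T := by
    rw [hT]; apply Real.le_sqrt_of_sq_le; exact Nat.le_ceil _
  have hTt2 : T ≤ t + t⁻¹ := by
    rw [hT]
    apply Real.sqrt_le_iff.mpr
    refine ⟨by positivity, ?_⟩
    have h1 : ((⌈t ^ 2⌉₊ : ℕ) : ℝ) < t ^ 2 + 1 := Nat.ceil_lt_add_one (by positivity)
    have h2 : t * t⁻¹ = 1 := mul_inv_cancel₀ ht0.ne'
    nlinarith [sq_nonneg t⁻¹]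
  set h := T - t with hh
  have hh0 : 0 ≤ h := by linarith
  have hh1 : h ≤ t⁻¹ := by linarith
  have hTe : T = t + h := by ring
  have hx' : ∀ i, |(x i:ℝ)| ≤ R * Real.sqrt T := fun i => (hx i).trans (by gcongr)
  have h1 := ht2 x hx'
  have hlow1 := ht3 x hx
  have hp0 := pk_nonneg d hd t ht0.le x
  calc ∑' y, Wt d t x y * ENNReal.ofReal (z y ζ)
      ≤ ∑' y, ENNReal.ofReal (Real.exp (2 * d * h)) * (Wt d T x y * ENNReal.ofReal (z y ζ)) := by
        apply ENNReal.tsum_le_tsum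
        intro y
        rw [← mul_assoc, hTe]
        gcongr
        exact Wt_mono d hd t h hh0 x y
    _ ≤ ENNReal.ofReal (Real.exp (2 * d * h)) * ENNReal.ofReal ((c + δ / 2) * (T * pk d T x)) := by
        rw [ENNReal.tsum_mul_left]; gcongr
    _ ≤ ENNReal.ofReal ((c + δ) * (t * pk d t x)) := by
        rw [← ENNReal.ofReal_mul (Real.exp_pos _).le]
        apply ENNReal.ofReal_le_ofReal
        have h2 := pk_time_le d hd t h ht0 hh0 x
        rw [← hTe] at h2
        have h3 : pk d T x ≤ pk d t x * (1 + 2 * d * h / c₀) := by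
          refine h2.trans ?_
          have h4 : (1 / Real.sqrt t) ^ d ≤ pk d t x / c₀ := by
            rw [le_div_iff₀ hc₀]; linarith
          calc pk d t x + 2 * d * h * (1 / Real.sqrt t) ^ d ≤ pk d t x + 2 * d * h * (pk d t x / c₀) := by
                gcongr
            _ = _ := by field_simp
        have h5 : T ≤ t * (1 + h) := by nlinarith
        have hT0 : 0 ≤ T := by linarith
        have hpT := pk_nonneg d hd T hT0 x
        calc Real.exp (2 * d * h) * ((c + δ / 2) * (T * pk d T x))
            ≤ Real.exp (2 * d * h) * ((c + δ / 2) * ((t * (1 + h)) * (pk d t x * (1 + 2 * d * h / c₀)))) := by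
              gcongr
          _ = φ h * (t * pk d t x) := by rw [hφ]; ring
          _ ≤ φ t⁻¹ * (t * pk d t x) := by
              apply mul_le_mul_of_nonneg_right _ (by positivity)
              rw [hφ]; simp only; gcongr
          _ ≤ _ := by gcongr

end scen

open MeasureTheory ProbabilityTheory Filter Set

/-- countable factorisation implies independence -/
lemma indep_of_fact {Ω A B : Type*} [MeasurableSpace Ω] [MeasurableSpace A] [MeasurableSpace B]
    [Countable A] [Countable B] [MeasurableSingletonClass A] [MeasurableSingletonClass B]
    (P : Measure Ω) [IsProbabilityMeasure P] (X : Ω → A) (Y : Ω → B) (hX : Measurable X)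
    (hY : Measurable Y) (F : A → ENNReal) (G : B → ENNReal)
    (h : ∀ a b, P {ω | X ω = a ∧ Y ω = b} = F a * G b) : IndepFun X Y P := by
  have hXm : ∀ a, P {ω | X ω = a} = F a * ∑' b, G b := by
    intro a
    have : {ω | X ω = a} = ⋃ b, {ω | X ω = a ∧ Y ω = b} := by
      ext ω; simp
    rw [this, measure_iUnion, ← ENNReal.tsum_mul_left]
    · exact tsum_congr fun b => h a b
    · intro b b' hbb
      refine Set.disjoint_left.2 ?_
      rintro ω ⟨_, h1⟩ ⟨_, h2⟩
      exact hbb (h1.symm.trans h2)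
    · intro b
      exact (hX (measurableSet_singleton a)).inter (hY (measurableSet_singleton b))
  have hYm : ∀ b, P {ω | Y ω = b} = (∑' a, F a) * G b := by
    intro b
    have : {ω | Y ω = b} = ⋃ a, {ω | X ω = a ∧ Y ω = b} := by
      ext ω; simp
    rw [this, measure_iUnion, ← ENNReal.tsum_mul_right]
    · exact tsum_congr fun a => h a b
    · intro b b' hbb
      refine Set.disjoint_left.2 ?_
      rintro ω ⟨h1, _⟩ ⟨h2, _⟩
      exact hbb (h1.symm.trans h2)
    · intro a
      exact (hX (measurableSet_singleton a)).inter (hY (measurableSet_singleton b))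
  have htot : (∑' a, F a) * ∑' b, G b = 1 := by
    rw [← ENNReal.tsum_mul_right]
    simp_rw [← hXm]
    have : (Set.univ : Set Ω) = ⋃ a, {ω | X ω = a} := by ext ω; simp
    rw [← measure_univ (μ := P), this, measure_iUnion]
    · intro b b' hbb
      refine Set.disjoint_left.2 ?_
      rintro ω h1 h2
      exact hbb (h1.symm.trans h2)
    · intro a
      exact (hX (measurableSet_singleton a))
  rw [indepFun_iff_map_prod_eq_prod_map_map hX.aemeasurable hY.aemeasurable]
  refine Measure.ext_of_singleton ?_
  rintro ⟨a, b⟩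
  rw [Measure.map_apply (hX.prodMk hY) (measurableSet_singleton _), ← singleton_prod_singleton,
    Measure.prod_prod, Measure.map_apply hX (measurableSet_singleton _),
    Measure.map_apply hY (measurableSet_singleton _)]
  have e1 : (fun ω => (X ω, Y ω)) ⁻¹' ({a} ×ˢ {b}) = {ω | X ω = a ∧ Y ω = b} := by
    ext ω; simp
  have e2 : X ⁻¹' {a} = {ω | X ω = a} := rfl
  have e3 : Y ⁻¹' {b} = {ω | Y ω = b} := rfl
  rw [e1, e2, e3, h, hXm, hYm]
  calc F a * G b = F a * (((∑' a, F a) * ∑' b, G b)) * G b := by rw [htot, mul_one]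
    _ = _ := by ring

/-- one-dimensional kernel in `ENNReal` -/
noncomputable def qE (t : ℝ) (k : ℤ) : ENNReal := ENNReal.ofReal (qk t k)

lemma qE_sum (t : ℝ) (ht : 0 ≤ t) : ∑' k, qE t k = 1 := by
  have h := qk_sum t ht
  have := ENNReal.ofReal_tsum_of_nonneg (fun k => qk_nonneg t ht k) h.summable
  rw [h.tsum_eq] at this
  simpa [qE] using this.symm

lemma qE_sum_sub (t : ℝ) (ht : 0 ≤ t) (j : ℤ) : ∑' k, qE t (k - j) = 1 := by
  rw [← qE_sum t ht]
  exact (Equiv.subRight j).tsum_eq (qE t)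

lemma pE_succ (d : ℕ) (t : ℝ) (ht : 0 ≤ t) (x : Fin (d + 1) → ℤ) :
    pE (d + 1) t x = qE t (x 0) * pE d t (fun i => x i.succ) := by
  unfold pE qE pk
  rw [Fin.prod_univ_succ, ENNReal.ofReal_mul (qk_nonneg t ht _)]

section walk
variable {Ω : Type*} [MeasurableSpace Ω]

lemma S_meas {m : ℕ} {P : (Fin m → ℤ) → Measure Ω} {S : ℝ → Ω → (Fin m → ℤ)}
    (hS : IsCTSRW m P S) (t : ℝ) : Measurable (S t) :=
  hS.meas.comp (measurable_const.prodMk measurable_id)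

lemma fddE {m : ℕ} (hm : 1 ≤ m) {P : (Fin m → ℤ) → Measure Ω} {S : ℝ → Ω → (Fin m → ℤ)}
    (hS : IsCTSRW m P S) (n : ℕ) (t : Fin (n + 1) → ℝ) (h0 : 0 ≤ t 0)
    (ht : ∀ i : Fin n, t i.castSucc ≤ t i.succ) (y : Fin (n + 1) → (Fin m → ℤ)) :
    P 0 {ω | ∀ i, S (t i) ω = y i} = pE m (t 0) (y 0) *
      ∏ i : Fin n, pE m (t i.succ - t i.castSucc) (y i.succ - y i.castSucc) := by
  have := hS.prob 0
  have h := hS.fdd 0 n t h0 ht y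
  rw [← ENNReal.ofReal_toReal (measure_ne_top (P 0) _), h]
  simp_rw [heat_eq m hm]
  rw [ENNReal.ofReal_mul (pk_nonneg m hm _ h0 _), ENNReal.ofReal_prod_of_nonneg]
  · simp only [pE, Pi.zero_apply, sub_zero]
    rfl
  · intro i _
    exact pk_nonneg m hm _ (sub_nonneg.2 (ht i)) _

variable {d : ℕ} {P : (Fin (d + 1) → ℤ) → Measure Ω} {S : ℝ → Ω → (Fin (d + 1) → ℤ)}

lemma Y_meas (hS : IsCTSRW (d + 1) P S) (t : ℝ) : Measurable (fun ω => fun i : Fin d => S t ω i.succ) :=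
  measurable_pi_lambda _ fun i => (measurable_pi_apply _).comp (S_meas hS t)

lemma Y_jmeas (hS : IsCTSRW (d + 1) P S) :
    Measurable (fun p : ℝ × Ω => fun i : Fin d => S p.1 p.2 i.succ) :=
  measurable_pi_lambda _ fun i => (measurable_pi_apply _).comp hS.meas

lemma S1_meas (hS : IsCTSRW (d + 1) P S) (t : ℝ) : Measurable (fun ω => S t ω 0) :=
  (measurable_pi_apply _).comp (S_meas hS t)

lemma fdd_fact (hS : IsCTSRW (d + 1) P S) (n : ℕ) (t : Fin (n + 1) → ℝ) (h0 : 0 ≤ t 0)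
    (ht : ∀ i : Fin n, t i.castSucc ≤ t i.succ) (a : Fin (n + 1) → ℤ) (b : Fin (n + 1) → Fin d → ℤ) :
    P 0 {ω | (fun i => S (t i) ω 0) = a ∧ (fun i => fun j : Fin d => S (t i) ω j.succ) = b} =
      (qE (t 0) (a 0) * ∏ i : Fin n, qE (t i.succ - t i.castSucc) (a i.succ - a i.castSucc)) *
      (pE d (t 0) (b 0) * ∏ i : Fin n, pE d (t i.succ - t i.castSucc) (b i.succ - b i.castSucc)) := by
  have e : {ω | (fun i => S (t i) ω 0) = a ∧ (fun i => fun j : Fin d => S (t i) ω j.succ) = b} =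
      {ω | ∀ i, S (t i) ω = (Fin.cons (a i) (b i) : Fin (d + 1) → ℤ)} := by
    ext ω
    simp only [mem_ofPred_eq, funext_iff, Fin.forall_fin_succ (n := d), Fin.cons_zero, Fin.cons_succ,
      forall_and]
  rw [e, fddE (by omega) hS n t h0 ht, pE_succ d _ h0]
  have : ∀ i : Fin n, pE (d + 1) (t i.succ - t i.castSucc)
      ((Fin.cons (a i.succ) (b i.succ) : Fin (d + 1) → ℤ) - (Fin.cons (a i.castSucc) (b i.castSucc)))
      = qE (t i.succ - t i.castSucc) (a i.succ - a i.castSucc) *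
        pE d (t i.succ - t i.castSucc) (b i.succ - b i.castSucc) := by
    intro i
    rw [pE_succ d _ (sub_nonneg.2 (ht i))]
    rfl
  simp_rw [this, Finset.prod_mul_distrib]
  simp only [Fin.cons_zero, Fin.cons_succ]
  ring

lemma vec_indep (hS : IsCTSRW (d + 1) P S) (n : ℕ) (t : Fin (n + 1) → ℝ) (h0 : 0 ≤ t 0)
    (ht : ∀ i : Fin n, t i.castSucc ≤ t i.succ) :
    IndepFun (fun ω => fun i => S (t i) ω 0) (fun ω => fun i => fun j : Fin d => S (t i) ω j.succ)
      (P 0) := by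
  have := hS.prob 0
  exact indep_of_fact (P 0) _ _ (measurable_pi_lambda _ fun i => S1_meas hS _)
    (measurable_pi_lambda _ fun i => Y_meas hS _) _ _ (fdd_fact hS n t h0 ht)

/-- `S¹_s` is independent of the whole process `S²` -/
lemma proc_indep (hS : IsCTSRW (d + 1) P S) (s : NNReal) :
    IndepFun (fun ω => S s ω 0) (fun ω => fun u : NNReal => fun j : Fin d => S u ω j.succ) (P 0) := by
  classical
  have := hS.prob 0
  refine IndepFun.indepFun_process (Y := fun (u : NNReal) ω => fun j : Fin d => S u ω j.succ)
    (S1_meas hS s) (fun u => Y_meas hS u) ?_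
  intro J
  obtain ⟨n, hn⟩ : ∃ n, (insert s J).card = n + 1 :=
    Nat.exists_eq_succ_of_ne_zero (Finset.card_ne_zero.2 (Finset.insert_nonempty s J))
  set e := (insert s J).orderEmbOfFin hn
  have hr : Set.range e = ((insert s J : Finset NNReal) : Set NNReal) := Finset.range_orderEmbOfFin _ hn
  have hi : ∀ u ∈ insert s J, ∃ i, e i = u := by
    intro u hu
    have : u ∈ Set.range e := by rw [hr]; exact_mod_cast hu
    exact this
  obtain ⟨i0, hi0⟩ := hi s (Finset.mem_insert_self _ _)
  choose! f hf using hi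
  have hv := vec_indep hS n (fun i => (e i : ℝ)) (by positivity)
    (fun i => by exact_mod_cast e.monotone (Fin.castSucc_le_succ i))
  have m1 : Measurable (fun a : Fin (n + 1) → ℤ => a i0) := measurable_pi_apply _
  have m2 : Measurable (fun (b : Fin (n + 1) → Fin d → ℤ) (u : J) => b (f u)) :=
    measurable_pi_lambda _ fun u => measurable_pi_apply _
  have := hv.comp m1 m2
  convert this using 1
  · funext ω
    simp [hi0]
  · funext ω u
    simp [hf u (Finset.mem_insert_of_mem u.2)]

end walk

open MeasureTheory ProbabilityTheory Filter Set

lemma lint_disc {Ω A : Type*} [MeasurableSpace Ω] [MeasurableSpace A]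
    [Countable A] [MeasurableSingletonClass A] (P : Measure Ω) (X : Ω → A) (hX : Measurable X)
    (f : A → ENNReal) : ∫⁻ ω, f (X ω) ∂P = ∑' a, f a * P {ω | X ω = a} := by
  have hf : Measurable f := measurable_of_countable f
  rw [← lintegral_map hf hX, lintegral_countable']
  refine tsum_congr fun a => ?_
  rw [Measure.map_apply hX (measurableSet_singleton a)]
  rfl

lemma path_le {E : Type*} (n : ℕ) : ∀ (κ : Fin n → E → E → ENNReal) (ι g : E → ENNReal) (ρ : ENNReal)
    (_ : ∀ i x, g x ≠ 0 → ∑' y, κ i x y * g y ≤ ρ),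
    ∑' y : Fin (n + 1) → E, (ι (y 0) * ∏ i : Fin n, κ i (y i.castSucc) (y i.succ)) * ∏ i, g (y i)
      ≤ ρ ^ n * ∑' x, ι x * g x := by
  induction n with
  | zero =>
    intro κ ι g ρ h
    rw [← (Equiv.funUnique (Fin 1) E).symm.tsum_eq]
    simp
  | succ n ih =>
    intro κ ι g ρ h
    have h1 := ih (fun i => κ i.castSucc) ι g ρ (fun i x hx => h _ x hx)
    rw [← (Fin.snocEquiv (fun _ : Fin (n + 2) => E)).tsum_eq, ENNReal.tsum_prod',
      ENNReal.tsum_comm]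
    calc _ = ∑' y : Fin (n + 1) → E, ∑' x : E,
          ((ι (y 0) * ∏ i : Fin n, κ i.castSucc (y i.castSucc) (y i.succ)) * ∏ i, g (y i)) *
            (κ (Fin.last n) (y (Fin.last n)) x * g x) := by
          refine tsum_congr fun y => tsum_congr fun x => ?_
          have e0 : (Fin.snocEquiv (fun _ : Fin (n + 2) => E)) (x, y) = (Fin.snoc y x : Fin (n + 2) → E) := rfl
          rw [e0, Fin.prod_univ_castSucc (n := n), Fin.prod_univ_castSucc (n := n + 1)]
          have e1 : (Fin.snoc y x : Fin (n + 2) → E) 0 = y 0 := by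
            have : (0 : Fin (n + 2)) = Fin.castSucc (0 : Fin (n + 1)) := rfl
            rw [this, Fin.snoc_castSucc (α := fun _ => E)]
          have e2 : ∀ i : Fin (n + 1), (Fin.snoc y x : Fin (n + 2) → E) i.castSucc = y i :=
            fun i => Fin.snoc_castSucc (α := fun _ => E) _ _ _
          have e3 : (Fin.snoc y x : Fin (n + 2) → E) (Fin.last (n + 1)) = x :=
            Fin.snoc_last (α := fun _ => E) _ _
          have e4 : ∀ i : Fin n, (Fin.snoc y x : Fin (n + 2) → E) i.castSucc.succ = y i.succ := by
            intro i
            rw [Fin.succ_castSucc, e2]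
          have e5 : (Fin.snoc y x : Fin (n + 2) → E) (Fin.last n).succ = x := by
            rw [Fin.succ_last, e3]
          simp only [e1, e2, e3, e4, e5]
          ring
      _ ≤ ∑' y : Fin (n + 1) → E,
          ((ι (y 0) * ∏ i : Fin n, κ i.castSucc (y i.castSucc) (y i.succ)) * ∏ i, g (y i)) * ρ := by
          refine ENNReal.tsum_le_tsum fun y => ?_
          rw [ENNReal.tsum_mul_left]
          by_cases hg : g (y (Fin.last n)) = 0
          · have : ∏ i, g (y i) = 0 := Finset.prod_eq_zero (Finset.mem_univ (Fin.last n)) hg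
            simp [this]
          · gcongr
            exact h _ _ hg
      _ ≤ _ := by
          rw [ENNReal.tsum_mul_right]
          calc _ ≤ (ρ ^ n * ∑' x, ι x * g x) * ρ := by gcongr
            _ = _ := by ring

section walk
variable {Ω : Type*} [MeasurableSpace Ω]
variable {d : ℕ} {P : (Fin (d + 1) → ℤ) → Measure Ω} {S : ℝ → Ω → (Fin (d + 1) → ℤ)}

lemma law_one (hS : IsCTSRW (d + 1) P S) (t : ℝ) (ht : 0 ≤ t) (a : ℤ) (b : Fin d → ℤ) :
    P 0 {ω | S t ω 0 = a ∧ (fun j : Fin d => S t ω j.succ) = b} = qE t a * pE d t b := by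
  have := fdd_fact hS 0 (fun _ => t) ht (fun i => i.elim0) (fun _ => a) (fun _ => b)
  simp only [Finset.univ_eq_empty, Finset.prod_empty, mul_one] at this
  rw [← this]
  congr 1
  ext ω
  simp [funext_iff]

lemma law_Y (hS : IsCTSRW (d + 1) P S) (t : ℝ) (ht : 0 ≤ t) (b : Fin d → ℤ) :
    P 0 {ω | (fun j : Fin d => S t ω j.succ) = b} = pE d t b := by
  have : {ω | (fun j : Fin d => S t ω j.succ) = b} =
      ⋃ a, {ω | S t ω 0 = a ∧ (fun j : Fin d => S t ω j.succ) = b} := by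
    ext ω; simp
  rw [this, measure_iUnion]
  · simp_rw [law_one hS t ht]
    rw [ENNReal.tsum_mul_right, qE_sum t ht, one_mul]
  · intro b b' hbb
    refine Set.disjoint_left.2 ?_
    rintro ω ⟨h1, _⟩ ⟨h2, _⟩
    exact hbb (h1.symm.trans h2)
  · intro a
    exact (S1_meas hS t (measurableSet_singleton a)).inter (Y_meas hS t (measurableSet_singleton b))

lemma law_S1 (hd : 1 ≤ d) (hS : IsCTSRW (d + 1) P S) (t : ℝ) (ht : 0 ≤ t) (a : ℤ) :
    P 0 {ω | S t ω 0 = a} = qE t a := by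
  have : {ω | S t ω 0 = a} =
      ⋃ b, {ω | S t ω 0 = a ∧ (fun j : Fin d => S t ω j.succ) = b} := by
    ext ω; simp
  rw [this, measure_iUnion]
  · simp_rw [law_one hS t ht]
    rw [ENNReal.tsum_mul_left, pE_sum d hd t ht, mul_one]
  · intro b b' hbb
    refine Set.disjoint_left.2 ?_
    rintro ω ⟨_, h1⟩ ⟨_, h2⟩
    exact hbb (h1.symm.trans h2)
  · intro b
    exact (S1_meas hS t (measurableSet_singleton a)).inter (Y_meas hS t (measurableSet_singleton b))

/-- `S¹_s` against any event of the process `S²` -/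
lemma law_mix (hd : 1 ≤ d) (hS : IsCTSRW (d + 1) P S) (s : ℝ) (hs : 0 ≤ s) (a : ℤ)
    (U : Set (NNReal → Fin d → ℤ)) (hU : MeasurableSet U) :
    P 0 {ω | S s ω 0 = a ∧ (fun u : NNReal => fun j : Fin d => S u ω j.succ) ∈ U} =
      qE s a * P 0 {ω | (fun u : NNReal => fun j : Fin d => S u ω j.succ) ∈ U} := by
  have h := (proc_indep hS ⟨s, hs⟩).measure_inter_preimage_eq_mul _ _ (measurableSet_singleton a) hU
  rw [← law_S1 hd hS s hs]
  exact h

lemma law_den (hd : 1 ≤ d) (hS : IsCTSRW (d + 1) P S) (s t : ℝ) (hs : 0 ≤ s) (ht : 0 ≤ t) (a : ℤ)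
    (b : Fin d → ℤ) :
    P 0 {ω | S s ω 0 = a ∧ (fun j : Fin d => S t ω j.succ) = b} = qE s a * pE d t b := by
  have h := law_mix hd hS s hs a ((fun f => f ⟨t, ht⟩) ⁻¹' {b})
    (measurable_pi_apply _ (measurableSet_singleton b))
  rw [← law_Y hS t ht b]
  exact h

lemma law_two (hS : IsCTSRW (d + 1) P S) (u t : ℝ) (hu : 0 ≤ u) (hut : u ≤ t)
    (y x : Fin d → ℤ) :
    P 0 {ω | (fun j : Fin d => S u ω j.succ) = y ∧ (fun j : Fin d => S t ω j.succ) = x} =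
      pE d u y * pE d (t - u) (x - y) := by
  have h2 : ∀ a b : ℤ, P 0 {ω | (S u ω 0 = a ∧ S t ω 0 = b) ∧
      (fun j : Fin d => S u ω j.succ) = y ∧ (fun j : Fin d => S t ω j.succ) = x} =
      (qE u a * qE (t - u) (b - a)) * (pE d u y * pE d (t - u) (x - y)) := by
    intro a b
    have := fdd_fact hS 1 ![u, t] hu (by intro i; fin_cases i; simpa using hut) ![a, b] ![y, x]
    simp only [Finset.univ_unique, Finset.prod_singleton] at this
    have e : (qE u a * qE (t - u) (b - a)) * (pE d u y * pE d (t - u) (x - y)) = _ := this.symm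
    rw [e]
    congr 1
    ext ω
    simp only [mem_ofPred_eq, funext_iff (f := fun i => S (![u, t] i) ω 0),
      funext_iff (f := fun (i : Fin (1 + 1)) (j : Fin d) => S (![u, t] i) ω j.succ), Fin.forall_fin_two]
    exact and_congr_right fun _ => (Fin.forall_fin_two (p := fun i : Fin 2 =>
      (fun j : Fin d => S (![u, t] i) ω j.succ) = (![y, x] : Fin 2 → Fin d → ℤ) i)).symm
  have : {ω | (fun j : Fin d => S u ω j.succ) = y ∧ (fun j : Fin d => S t ω j.succ) = x} =
      ⋃ p : ℤ × ℤ, {ω | (S u ω 0 = p.1 ∧ S t ω 0 = p.2) ∧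
      (fun j : Fin d => S u ω j.succ) = y ∧ (fun j : Fin d => S t ω j.succ) = x} := by
    ext ω; simp
  rw [this, measure_iUnion]
  · simp_rw [h2]
    rw [ENNReal.tsum_mul_right, ENNReal.tsum_prod']
    simp_rw [ENNReal.tsum_mul_left, qE_sum_sub (t - u) (by linarith), mul_one, qE_sum u hu, one_mul]
  · intro b b' hbb
    refine Set.disjoint_left.2 ?_
    rintro ω ⟨⟨h1, h1'⟩, _⟩ ⟨⟨h2, h2'⟩, _⟩
    exact hbb (Prod.ext (h1.symm.trans h2) (h1'.symm.trans h2'))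
  · intro p
    exact ((S1_meas hS u (measurableSet_singleton _)).inter (S1_meas hS t (measurableSet_singleton _))).inter
      ((Y_meas hS u (measurableSet_singleton _)).inter (Y_meas hS t (measurableSet_singleton _)))

lemma multi_le (hS : IsCTSRW (d + 1) P S) (v s : ℝ) (hv : 0 ≤ v) (hs : 0 ≤ s) (N : ℕ)
    (g : (Fin d → ℤ) → ENNReal) (hg : ∀ x, g x ≤ 1) (ρ : ENNReal)
    (hρ : ∀ x, g x ≠ 0 → ∑' y, pE d s (y - x) * g y ≤ ρ) :
    ∫⁻ ω, ∏ k : Fin (N + 1), g (fun j => S (v + k * s) ω j.succ) ∂(P 0) ≤ ρ ^ N := by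
  have hVm : Measurable (fun ω => fun k : Fin (N + 1) => S (v + k * s) ω) :=
    measurable_pi_lambda _ fun i => S_meas hS _
  have := lint_disc (P 0) _ hVm (fun y => ∏ k, g (fun j => y k j.succ))
  rw [this]
  have h1 : ∀ y : Fin (N + 1) → Fin (d + 1) → ℤ,
      P 0 {ω | (fun k : Fin (N + 1) => S (v + k * s) ω) = y} =
      pE (d + 1) v (y 0) * ∏ i : Fin N, pE (d + 1) s (y i.succ - y i.castSucc) := by
    intro y
    have := fddE (by omega) hS N (fun k => v + k * s) (by simpa using hv)
      (by intro i; simp; nlinarith) y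
    simp only [Fin.val_zero, Nat.cast_zero, zero_mul, add_zero, Fin.val_succ, Fin.val_castSucc, 
      Nat.cast_add, Nat.cast_one] at this
    convert this using 4
    · rw [funext_iff]
    · ring
  simp_rw [h1]
  have h2 := path_le N (fun _ x y => pE (d + 1) s (y - x)) (pE (d + 1) v)
    (fun y => g (fun j => y j.succ)) ρ ?_
  · calc _ = _ := tsum_congr fun y => mul_comm _ _
      _ ≤ _ := h2
      _ ≤ ρ ^ N * ∑' x, pE (d + 1) v x := by
        gcongr with x
        exact mul_le_of_le_one_right' (hg _)
      _ = ρ ^ N := by rw [pE_sum _ (by omega) v hv, mul_one]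
  · intro i x hx
    refine le_trans (le_of_eq ?_) (hρ _ hx)
    rw [← (Fin.consEquiv (fun _ : Fin (d + 1) => ℤ)).tsum_eq, ENNReal.tsum_prod', ENNReal.tsum_comm]
    refine tsum_congr fun y => ?_
    calc _ = ∑' a : ℤ, qE s (a - x 0) * (pE d s (y - fun j => x j.succ) * g y) := by
          refine tsum_congr fun a => ?_
          rw [pE_succ d s hs, ← mul_assoc]
          rfl
      _ = _ := by rw [ENNReal.tsum_mul_right, qE_sum_sub s hs, one_mul]

end walk

open MeasureTheory ProbabilityTheory Filter Set

section walk
variable {Ω : Type*} [MeasurableSpace Ω]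
variable {d : ℕ} {P : (Fin (d + 1) → ℤ) → Measure Ω} {S : ℝ → Ω → (Fin (d + 1) → ℤ)}

/-- the second component as a process -/
def Yp (d : ℕ) (S : ℝ → Ω → (Fin (d + 1) → ℤ)) (ω : Ω) : NNReal → Fin d → ℤ :=
  fun u => fun j => S u ω j.succ

lemma Yp_meas (hS : IsCTSRW (d + 1) P S) : Measurable (Yp d S) :=
  measurable_pi_lambda _ fun u => Y_meas hS u

/-- extended clock -/
noncomputable def AE (S : ℝ → Ω → (Fin (d + 1) → ℤ)) (w : (Fin d → ℤ) → ℝ) (t : ℝ) (ω : Ω) : ENNReal :=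
  ∫⁻ u in Ioc 0 t, ENNReal.ofReal (w (fun j => S u ω j.succ))

lemma wY_meas (hS : IsCTSRW (d + 1) P S) {B : Type*} [MeasurableSpace B] (w : (Fin d → ℤ) → B) :
    Measurable (fun p : ℝ × Ω => w (fun j : Fin d => S p.1 p.2 j.succ)) :=
  (measurable_of_countable w).comp (Y_jmeas hS)

lemma AE_meas (hS : IsCTSRW (d + 1) P S) (w : (Fin d → ℤ) → ℝ) (t : ℝ) : Measurable (AE S w t) := by
  unfold AE
  exact Measurable.lintegral_prod_left' (f := fun p : ℝ × Ω =>
    ENNReal.ofReal (w (fun j : Fin d => S p.1 p.2 j.succ))) (wY_meas hS fun y => ENNReal.ofReal (w y))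

lemma clock_eq {Ωz : Type*} (hS : IsCTSRW (d + 1) P S) (z : (Fin d → ℤ) → Ωz → ℝ)
    (hz : ∀ x ζ, 0 ≤ z x ζ) (t : ℝ) (ζ : Ωz) (ω : Ω) :
    clock d z S t ζ ω = (AE S (fun y => z y ζ) t ω).toReal := by
  unfold clock AE
  rw [integral_eq_lintegral_of_nonneg_ae (ae_of_all _ fun u => hz _ _)]
  have := (wY_meas hS (fun y => z y ζ)).comp (measurable_id.prodMk (measurable_const (a := ω)))
  exact this.aestronglyMeasurable

lemma AE_on (hS : IsCTSRW (d + 1) P S) (w : (Fin d → ℤ) → ℝ) (t : ℝ) (x : Fin d → ℤ) :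
    ∫⁻ ω in {ω | (fun j : Fin d => S t ω j.succ) = x}, AE S w t ω ∂(P 0) =
      ∑' y, Wt d t x y * ENNReal.ofReal (w y) := by
  have := hS.prob 0
  unfold AE
  rw [lintegral_lintegral_swap]
  · unfold Wt
    simp_rw [← fun y => lintegral_mul_const'' (μ := volume.restrict (Ioc 0 t)) (ENNReal.ofReal (w y))
      (f := fun u => pE d u y * pE d (t - u) (x - y))
      (((pE_meas d y).mul ((pE_meas d (x - y)).comp (measurable_const.sub measurable_id))).aemeasurable)]
    rw [← lintegral_tsum]
    · refine setLIntegral_congr_fun measurableSet_Ioc ?_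
      intro u hu
      have := lint_disc ((P 0).restrict {ω | (fun j : Fin d => S t ω j.succ) = x})
        (fun ω => fun j : Fin d => S u ω j.succ) (Y_meas hS u) (fun y => ENNReal.ofReal (w y))
      simp only
      rw [this]
      refine tsum_congr fun y => ?_
      have hme : MeasurableSet {ω | (fun j : Fin d => S u ω j.succ) = y} :=
        Y_meas hS u (measurableSet_singleton y)
      rw [Measure.restrict_apply hme, mul_comm]
      congr 1
      exact law_two hS u t hu.1.le hu.2 y x
    · intro y
      exact (((pE_meas d y).mul ((pE_meas d (x - y)).comp
        (measurable_const.sub measurable_id))).mul_const _).aemeasurable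
  · exact ((wY_meas hS fun y => ENNReal.ofReal (w y)).comp measurable_swap).aemeasurable

lemma AE_all (hS : IsCTSRW (d + 1) P S) (w : (Fin d → ℤ) → ℝ) (t : ℝ) :
    ∫⁻ ω, AE S w t ω ∂(P 0) = ∑' y, Oc d t y * ENNReal.ofReal (w y) := by
  have := hS.prob 0
  unfold AE
  rw [lintegral_lintegral_swap]
  · unfold Oc
    simp_rw [← fun y => lintegral_mul_const'' (μ := volume.restrict (Ioc 0 t)) (ENNReal.ofReal (w y))
      (f := fun u => pE d u y) ((pE_meas d y).aemeasurable)]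
    rw [← lintegral_tsum]
    · refine setLIntegral_congr_fun measurableSet_Ioc ?_
      intro u hu
      have := lint_disc (P 0)
        (fun ω => fun j : Fin d => S u ω j.succ) (Y_meas hS u) (fun y => ENNReal.ofReal (w y))
      simp only
      rw [this]
      refine tsum_congr fun y => ?_
      rw [mul_comm, law_Y hS u hu.1.le]
    · intro y
      exact ((pE_meas d y).mul_const _).aemeasurable
  · exact ((wY_meas hS fun y => ENNReal.ofReal (w y)).comp measurable_swap).aemeasurable

lemma AE_fin (hS : IsCTSRW (d + 1) P S) (w : (Fin d → ℤ) → ℝ) (t : ℝ)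
    (h : ∑' y, Oc d t y * ENNReal.ofReal (w y) ≠ ⊤) : ∀ᵐ ω ∂(P 0), AE S w t ω < ⊤ := by
  rw [← AE_all hS w t] at h
  exact ae_lt_top (AE_meas hS w t) h

/-- discretised functional of the path -/
noncomputable def Apre (d : ℕ) (w : (Fin d → ℤ) → ℝ) (t : ℝ) (M n : ℕ) (f : NNReal → Fin d → ℤ) : ENNReal :=
  ∫⁻ u in Ioc 0 t, ENNReal.ofReal (min (w (f ((⌈u * n⌉₊ : NNReal) / n))) M)

lemma Apre_meas (d : ℕ) (w : (Fin d → ℤ) → ℝ) (t : ℝ) (M n : ℕ) : Measurable (Apre d w t M n) := by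
  unfold Apre
  have h1 : Measurable (fun p : ℕ × (NNReal → Fin d → ℤ) => p.2 ((p.1 : NNReal) / n)) :=
    measurable_from_prod_countable_right fun k => by
      have : Measurable (fun y : NNReal → Fin d → ℤ => y ((k : NNReal) / n)) := measurable_pi_apply _
      exact this
  have h2 : Measurable (fun p : ℝ × (NNReal → Fin d → ℤ) => (⌈p.1 * n⌉₊, p.2)) :=
    (Nat.measurable_ceil.comp (measurable_fst.mul_const _)).prodMk measurable_snd
  have h3 : Measurable (fun y : Fin d → ℤ => ENNReal.ofReal (min (w y) M)) := measurable_of_countable _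
  exact Measurable.lintegral_prod_left' (h3.comp (h1.comp h2))

noncomputable def Apath (d : ℕ) (w : (Fin d → ℤ) → ℝ) (t : ℝ) (f : NNReal → Fin d → ℤ) : ENNReal :=
  ⨆ M : ℕ, limsup (fun n => Apre d w t M n f) atTop

lemma Apath_meas (d : ℕ) (w : (Fin d → ℤ) → ℝ) (t : ℝ) : Measurable (Apath d w t) := by
  unfold Apath
  exact Measurable.iSup fun M => Measurable.limsup fun n => Apre_meas d w t M n

lemma ceil_approx (u : ℝ) (hu : 0 ≤ u) (n : ℕ) (hn : 0 < n) :
    u ≤ (⌈u * n⌉₊ : ℝ) / n ∧ (⌈u * n⌉₊ : ℝ) / n < u + 1 / n := by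
  have hn' : (0:ℝ) < n := by exact_mod_cast hn
  constructor
  · rw [le_div_iff₀ hn']; exact Nat.le_ceil _
  · rw [div_lt_iff₀ hn', add_mul, one_div, inv_mul_cancel₀ hn'.ne']
    exact Nat.ceil_lt_add_one (by positivity)

lemma AE_eq_path (hS : IsCTSRW (d + 1) P S) (w : (Fin d → ℤ) → ℝ) (t : ℝ) :
    ∀ᵐ ω ∂(P 0), AE S w t ω = Apath d w t (Yp d S ω) := by
  filter_upwards [hS.rightCont 0] with ω hω
  have hm : ∀ M : ℕ, Tendsto (fun n => Apre d w t M n (Yp d S ω)) atTop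
      (nhds (∫⁻ u in Ioc 0 t, ENNReal.ofReal (min (w (fun j => S u ω j.succ)) M))) := by
    intro M
    unfold Apre
    refine tendsto_lintegral_of_dominated_convergence (fun _ => ENNReal.ofReal M) ?_ ?_ ?_ ?_
    · intro n
      have h1 : Measurable (fun k : ℕ => ENNReal.ofReal (min (w (Yp d S ω ((k : NNReal) / n))) M)) :=
        measurable_of_countable _
      exact h1.comp (Nat.measurable_ceil.comp (measurable_id.mul_const _))
    · intro n
      exact ae_of_all _ fun u => ENNReal.ofReal_le_ofReal (min_le_right _ _)
    · simp [ENNReal.mul_eq_top]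
    · refine (ae_restrict_iff' measurableSet_Ioc).2 (ae_of_all _ fun u hu => ?_)
      obtain ⟨ε, hε, hc⟩ := hω u hu.1.le
      refine tendsto_const_nhds.congr' ?_
      have : ∀ᶠ n : ℕ in atTop, (1:ℝ) / n < ε :=
        (tendsto_one_div_atTop_nhds_zero_nat).eventually_lt_const hε
      filter_upwards [this, eventually_gt_atTop 0] with n h1 h2
      have h3 := ceil_approx u hu.1.le n h2
      have h4 := hc _ h3.1 (by linarith)
      have : Yp d S ω ((⌈u * n⌉₊ : NNReal) / n) = fun j => S u ω j.succ := by
        unfold Yp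
        funext j
        push_cast
        rw [h4]
      rw [this]
  unfold Apath
  simp_rw [fun M => (hm M).limsup_eq]
  unfold AE
  rw [← lintegral_iSup]
  · refine lintegral_congr fun u => ?_
    set a := w (fun j => S u ω j.succ)
    apply le_antisymm
    · obtain ⟨M, hM⟩ := exists_nat_ge a
      refine le_iSup_of_le M ?_
      rw [min_eq_left hM]
    · exact iSup_le fun M => ENNReal.ofReal_le_ofReal (min_le_left _ _)
  · intro M
    have h1 : Measurable (fun y : Fin d → ℤ => ENNReal.ofReal (min (w y) M)) := measurable_of_countable _
    exact (wY_meas hS (fun y => ENNReal.ofReal (min (w y) M))).comp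
      (measurable_id.prodMk (measurable_const (a := ω)))
  · intro M M' hMM u
    refine ENNReal.ofReal_le_ofReal (min_le_min_left _ ?_)
    exact_mod_cast hMM

end walk

open MeasureTheory ProbabilityTheory Filter Set

section walk
variable {Ω : Type*} [MeasurableSpace Ω]
variable {d : ℕ} {P : (Fin (d + 1) → ℤ) → Measure Ω} {S : ℝ → Ω → (Fin (d + 1) → ℤ)}

lemma qE_meas (a : ℤ) : Measurable (fun t => qE t a) := (qk_meas a).ennreal_ofReal

lemma qE_le_one (t : ℝ) (ht : 0 ≤ t) (a : ℤ) : qE t a ≤ 1 := by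
  rw [← qE_sum t ht]; exact ENNReal.le_tsum a

lemma floor_approx (T : ℝ) (hT : 0 ≤ T) (n : ℕ) (hn : 0 < n) :
    T ≤ (⌊T * n⌋₊ + 1 : ℝ) / n ∧ (⌊T * n⌋₊ + 1 : ℝ) / n ≤ T + 1 / n := by
  have hn' : (0:ℝ) < n := by exact_mod_cast hn
  constructor
  · rw [le_div_iff₀ hn']; exact (Nat.lt_floor_add_one _).le
  · rw [div_le_iff₀ hn', add_mul, one_div, inv_mul_cancel₀ hn'.ne']
    linarith [Nat.floor_le (show 0 ≤ T * n by positivity)]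

lemma subord_disc (hd : 1 ≤ d) (hS : IsCTSRW (d + 1) P S) (K : (NNReal → Fin d → ℤ) → ℕ)
    (hK : Measurable K) (τ : ℕ → ℝ) (hτ : ∀ k, 0 ≤ τ k) (a : ℤ)
    (U : Set (NNReal → Fin d → ℤ)) (hU : MeasurableSet U) :
    P 0 {ω | S (τ (K (Yp d S ω))) ω 0 = a ∧ Yp d S ω ∈ U} =
      ∫⁻ ω in {ω | Yp d S ω ∈ U}, qE (τ (K (Yp d S ω))) a ∂(P 0) := by
  have hKm : Measurable (fun ω => K (Yp d S ω)) := hK.comp (Yp_meas hS)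
  have hUm : MeasurableSet {ω | Yp d S ω ∈ U} := Yp_meas hS hU
  have := lint_disc ((P 0).restrict {ω | Yp d S ω ∈ U}) _ hKm (fun k => qE (τ k) a)
  rw [this]
  have e : {ω | S (τ (K (Yp d S ω))) ω 0 = a ∧ Yp d S ω ∈ U} =
      ⋃ k, {ω | S (τ k) ω 0 = a ∧ Yp d S ω ∈ (K ⁻¹' {k} ∩ U)} := by
    ext ω
    simp only [mem_ofPred_eq, mem_iUnion, mem_inter_iff, mem_preimage, mem_singleton_iff]
    constructor
    · rintro ⟨h1, h2⟩; exact ⟨_, h1, rfl, h2⟩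
    · rintro ⟨k, h1, h2, h3⟩; rw [h2]; exact ⟨h1, h3⟩
  rw [e, measure_iUnion]
  · refine tsum_congr fun k => ?_
    have hk : MeasurableSet {ω | K (Yp d S ω) = k} := hKm (measurableSet_singleton k)
    have h1 := law_mix hd hS (τ k) (hτ k) a (K ⁻¹' {k} ∩ U) ((hK (measurableSet_singleton k)).inter hU)
    rw [Measure.restrict_apply hk]
    exact h1
  · intro b b' hbb
    refine Set.disjoint_left.2 ?_
    rintro ω ⟨_, h1, _⟩ ⟨_, h2, _⟩
    exact hbb (h1.symm.trans h2)
  · intro k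
    exact (S1_meas hS _ (measurableSet_singleton a)).inter
      (Yp_meas hS ((hK (measurableSet_singleton k)).inter hU))

lemma subord (hd : 1 ≤ d) (hS : IsCTSRW (d + 1) P S) (T : (NNReal → Fin d → ℤ) → ℝ)
    (hT : Measurable T) (hT0 : ∀ f, 0 ≤ T f) (a : ℤ)
    (U : Set (NNReal → Fin d → ℤ)) (hU : MeasurableSet U) :
    P 0 {ω | S (T (Yp d S ω)) ω 0 = a ∧ Yp d S ω ∈ U} =
      ∫⁻ ω in {ω | Yp d S ω ∈ U}, qE (T (Yp d S ω)) a ∂(P 0) := by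
  have := hS.prob 0
  have hUm : MeasurableSet {ω | Yp d S ω ∈ U} := Yp_meas hS hU
  have hTm : Measurable (fun ω => T (Yp d S ω)) := hT.comp (Yp_meas hS)
  set Tn : ℕ → Ω → ℝ := fun n ω => (⌊T (Yp d S ω) * n⌋₊ + 1 : ℝ) / n
  have hTn : ∀ n, Measurable (Tn n) := by
    intro n
    have h1 : Measurable (fun k : ℕ => (k + 1 : ℝ) / n) := measurable_of_countable _
    exact h1.comp (Nat.measurable_floor.comp (hTm.mul_const _))
  have hTn0 : ∀ n ω, 0 ≤ Tn n ω := fun n ω => by positivity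
  have hset : ∀ τ : Ω → ℝ, Measurable τ → MeasurableSet {ω | S (τ ω) ω 0 = a ∧ Yp d S ω ∈ U} := by
    intro τ hτ
    have h1 : Measurable (fun ω => S (τ ω) ω 0) :=
      (measurable_pi_apply _).comp (hS.meas.comp (hτ.prodMk measurable_id))
    exact (h1 (measurableSet_singleton a)).inter hUm
  have hdis : ∀ n, P 0 {ω | S (Tn n ω) ω 0 = a ∧ Yp d S ω ∈ U} =
      ∫⁻ ω in {ω | Yp d S ω ∈ U}, qE (Tn n ω) a ∂(P 0) := by
    intro n
    exact subord_disc hd hS (fun f => ⌊T f * n⌋₊) (Nat.measurable_floor.comp (hT.mul_const _))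
      (fun k => (k + 1 : ℝ) / n) (fun k => by positivity) a U hU
  have hlim : ∀ ω, Tendsto (fun n => Tn n ω) atTop (nhds (T (Yp d S ω))) := by
    intro ω
    have h1 : Tendsto (fun n : ℕ => T (Yp d S ω) + 1 / (n : ℝ)) atTop (nhds (T (Yp d S ω) + 0)) :=
      tendsto_const_nhds.add tendsto_one_div_atTop_nhds_zero_nat
    rw [add_zero] at h1
    refine tendsto_of_tendsto_of_tendsto_of_le_of_le' tendsto_const_nhds h1 ?_ ?_
    · filter_upwards [eventually_gt_atTop 0] with n hn using (floor_approx _ (hT0 _) n hn).1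
    · filter_upwards [eventually_gt_atTop 0] with n hn using (floor_approx _ (hT0 _) n hn).2
  have h1 : Tendsto (fun n => ∫⁻ ω in {ω | Yp d S ω ∈ U}, qE (Tn n ω) a ∂(P 0)) atTop
      (nhds (∫⁻ ω in {ω | Yp d S ω ∈ U}, qE (T (Yp d S ω)) a ∂(P 0))) := by
    refine tendsto_lintegral_of_dominated_convergence (fun _ => 1) ?_ ?_ ?_ ?_
    · exact fun n => (qE_meas a).comp (hTn n)
    · exact fun n => ae_of_all _ fun ω => qE_le_one _ (hTn0 n ω) a
    · simp
    · refine ae_of_all _ fun ω => ?_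
      unfold qE
      refine ENNReal.tendsto_ofReal ?_
      have := (qk_cont a) (T (Yp d S ω)) (hT0 _)
      exact this.tendsto.comp (tendsto_nhdsWithin_iff.2 ⟨hlim ω, Eventually.of_forall fun n => hTn0 n ω⟩)
  have h2 : Tendsto (fun n => P 0 {ω | S (Tn n ω) ω 0 = a ∧ Yp d S ω ∈ U}) atTop
      (nhds (P 0 {ω | S (T (Yp d S ω)) ω 0 = a ∧ Yp d S ω ∈ U})) := by
    simp_rw [← fun n => lintegral_indicator_one (μ := P 0) (hset (Tn n) (hTn n)),
      ← lintegral_indicator_one (μ := P 0) (hset _ hTm)]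
    refine tendsto_lintegral_of_dominated_convergence (fun _ => 1) ?_ ?_ ?_ ?_
    · exact fun n => measurable_one.indicator (hset _ (hTn n))
    · exact fun n => ae_of_all _ fun ω => indicator_le_self' (fun _ _ => zero_le) ω
    · simp
    · filter_upwards [hS.rightCont 0] with ω hω
      obtain ⟨ε, hε, hc⟩ := hω _ (hT0 (Yp d S ω))
      refine tendsto_const_nhds.congr' ?_
      filter_upwards [(hlim ω).eventually_lt_const (show T (Yp d S ω) < T (Yp d S ω) + ε by linarith),
        eventually_gt_atTop 0] with n hn h0
      have := hc (Tn n ω) (floor_approx _ (hT0 _) n h0).1 hn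
      have h5 : S (Tn n ω) ω 0 = S (T (Yp d S ω)) ω 0 := congrFun this 0
      by_cases hq : S (T (Yp d S ω)) ω 0 = a ∧ Yp d S ω ∈ U
      · rw [indicator_of_mem (by exact hq), indicator_of_mem (by exact ⟨h5.trans hq.1, hq.2⟩)]
      · rw [indicator_of_notMem (by exact hq),
          indicator_of_notMem (by exact fun h => hq ⟨h5.symm.trans h.1, h.2⟩)]
  simp_rw [hdis] at h2
  exact tendsto_nhds_unique h2 h1

/-- the quenched law -/
lemma num_eq (hd : 1 ≤ d) (hS : IsCTSRW (d + 1) P S) {Ωz : Type*} (z : (Fin d → ℤ) → Ωz → ℝ)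
    (hz : ∀ x ζ, 0 ≤ z x ζ) (t : ℝ) (ht : 0 ≤ t) (ζ : Ωz) (x : ℤ × (Fin d → ℤ)) :
    P 0 {ω | layeredWalk d z S t ζ ω = x} =
      ∫⁻ ω in {ω | (fun j : Fin d => S t ω j.succ) = x.2},
        qE ((AE S (fun y => z y ζ) t ω).toReal) x.1 ∂(P 0) := by
  have h := subord hd hS (fun f => (Apath d (fun y => z y ζ) t f).toReal)
    ((Apath_meas d _ t).ennreal_toReal) (fun _ => ENNReal.toReal_nonneg) x.1
    ((fun f => f ⟨t, ht⟩) ⁻¹' {x.2}) (measurable_pi_apply _ (measurableSet_singleton x.2))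
  have hae := AE_eq_path hS (fun y => z y ζ) t
  have e1 : P 0 {ω | layeredWalk d z S t ζ ω = x} =
      P 0 {ω | S ((Apath d (fun y => z y ζ) t (Yp d S ω)).toReal) ω 0 = x.1 ∧
        Yp d S ω ∈ (fun f : NNReal → Fin d → ℤ => f ⟨t, ht⟩) ⁻¹' {x.2}} := by
    refine measure_congr ?_
    filter_upwards [hae] with ω hω
    refine propext ?_
    change layeredWalk d z S t ζ ω = x ↔ (S ((Apath d (fun y => z y ζ) t (Yp d S ω)).toReal) ω 0 = x.1 ∧
        Yp d S ω ∈ (fun f : NNReal → Fin d → ℤ => f ⟨t, ht⟩) ⁻¹' {x.2})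
    rw [← hω, ← clock_eq hS z hz t ζ ω]
    unfold layeredWalk
    rw [Prod.ext_iff]
    rfl
  rw [e1, h]
  refine lintegral_congr_ae (ae_restrict_of_ae ?_)
  filter_upwards [hae] with ω hω
  rw [hω]

end walk

open MeasureTheory ProbabilityTheory Filter Set

lemma lint_split (f : ℝ → ENNReal) (s : ℝ) (hs : 0 ≤ s) (n : ℕ) :
    ∫⁻ u in Ioc 0 (n * s), f u = ∑ k ∈ Finset.range n, ∫⁻ v in Ioc 0 s, f (v + k * s) := by
  induction n with
  | zero => simp
  | succ n ih =>
    rw [Finset.sum_range_succ, ← ih]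
    have e : Ioc (0:ℝ) ((n + 1 : ℕ) * s) = Ioc 0 (n * s) ∪ Ioc (n * s) ((n + 1 : ℕ) * s) := by
      rw [Ioc_union_Ioc_eq_Ioc]
      · positivity
      · push_cast; nlinarith
    rw [e, lintegral_union measurableSet_Ioc]
    · congr 1
      rw [← lintegral_indicator measurableSet_Ioc, ← lintegral_indicator measurableSet_Ioc,
        ← lintegral_add_right_eq_self _ (n * s)]
      refine lintegral_congr fun v => ?_
      simp only [indicator, mem_Ioc]
      have : (↑n * s < v + ↑n * s ∧ v + ↑n * s ≤ ↑(n + 1) * s) ↔ (0 < v ∧ v ≤ s) := by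
        push_cast
        constructor
        · rintro ⟨h1, h2⟩; constructor <;> linarith
        · rintro ⟨h1, h2⟩; constructor <;> linarith
      by_cases h : 0 < v ∧ v ≤ s
      · rw [if_pos h, if_pos (this.2 h)]
      · rw [if_neg h, if_neg (fun h' => h (this.1 h'))]
    · refine Set.disjoint_left.2 ?_
      rintro x ⟨_, h1⟩ ⟨h2, _⟩
      linarith

section walk
variable {Ω : Type*} [MeasurableSpace Ω]
variable {d : ℕ} {P : (Fin (d + 1) → ℤ) → Measure Ω} {S : ℝ → Ω → (Fin (d + 1) → ℤ)}

lemma Y_tail (hd : 1 ≤ d) (hS : IsCTSRW (d + 1) P S) (t u L : ℝ) (ht : 1 ≤ t) (hu : 0 ≤ u) (hut : u ≤ t) :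
    P 0 {ω | (fun j : Fin d => S u ω j.succ) ∈ farSet d L} ≤
      ENNReal.ofReal (2 * d * Real.exp 2 * Real.exp (-(L / √t))) := by
  have hm : MeasurableSet (farSet d L) := MeasurableSet.of_discrete
  refine le_trans (le_of_eq ?_) (pE_tail d hd t u L ht hu hut)
  have := lint_disc (P 0) _ (Y_meas hS u) ((farSet d L).indicator 1)
  have h2 : P 0 {ω | (fun j : Fin d => S u ω j.succ) ∈ farSet d L} =
      ∫⁻ ω, (farSet d L).indicator 1 (fun j : Fin d => S u ω j.succ) ∂(P 0) := by
    exact (lintegral_indicator_one (Y_meas hS u hm)).symm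
  rw [h2, this]
  refine tsum_congr fun y => ?_
  rw [law_Y hS u hu]
  by_cases h : y ∈ farSet d L
  · simp [h]
  · simp [h]

lemma prod_cut {E : Type*} (n : ℕ) (B : Set E) (f : E → ENNReal) (hf : ∀ x, f x ≤ 1) (y : Fin n → E) :
    ∏ k, f (y k) ≤ ∏ k, B.indicator f (y k) + ∑ k, Bᶜ.indicator 1 (y k) := by
  by_cases h : ∀ k, y k ∈ B
  · refine le_add_right (le_of_eq ?_)
    exact Finset.prod_congr rfl fun k _ => (indicator_of_mem (h k) f).symm
  · push Not at h
    obtain ⟨k, hk⟩ := h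
    refine le_add_left ?_
    calc ∏ k, f (y k) ≤ 1 := Finset.prod_le_one' fun k _ => hf _
      _ = Bᶜ.indicator (1 : E → ENNReal) (y k) := by
        rw [indicator_of_mem (by exact hk)]; rfl
      _ ≤ _ := Finset.single_le_sum (f := fun k => Bᶜ.indicator (1 : E → ENNReal) (y k))
        (fun _ _ => zero_le) (Finset.mem_univ k)

set_option maxHeartbeats 2000000 in
lemma lower_core (hd : 1 ≤ d) (hS : IsCTSRW (d + 1) P S) (w : (Fin d → ℤ) → ℝ) (hw : ∀ y, 0 ≤ w y)
    (θ a : ℝ) (hθ : 0 < θ) (ha : 0 ≤ a) (N : ℕ) (s : ℕ) (hs : s = (N + 1) ^ 2) (ρ : ENNReal)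
    (hI : ∀ x ∈ boxF d (s ^ 2), ∑' y, pE d s (y - x) * ENNReal.ofReal (Real.exp (-(θ * w y))) ≤ ρ) :
    P 0 {ω | AE S w ((N + 1 : ℕ) * s) ω ≤ ENNReal.ofReal (a * ((N + 1 : ℕ) * s))} ≤
      ENNReal.ofReal (Real.exp (θ * a * (N + 1))) *
        (ρ ^ N + (N + 1) * ENNReal.ofReal (2 * d * Real.exp 2 * Real.exp (-((N + 1 : ℝ) ^ 2)))) := by
  have := hS.prob 0
  set f : (Fin d → ℤ) → ENNReal := fun y => ENNReal.ofReal (Real.exp (-(θ * w y))) with hf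
  have hf1 : ∀ y, f y ≤ 1 := by
    intro y
    rw [hf]
    refine ENNReal.ofReal_le_one.2 (Real.exp_le_one_iff.2 ?_)
    have := mul_nonneg hθ.le (hw y)
    linarith
  set m : ℝ := θ * a * (N + 1) with hm
  have hm0 : 0 ≤ m := by positivity
  have hs0 : (0:ℝ) < s := by rw [hs]; positivity
  set tail := ENNReal.ofReal (2 * d * Real.exp 2 * Real.exp (-((N + 1 : ℝ) ^ 2))) with htail
  set J : Ω → ENNReal := fun ω => ∫⁻ v in Ioc (0:ℝ) s, ∏ k : Fin (N + 1), f (fun j => S (v + k * s) ω j.succ)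
    with hJ
  have hjm : Measurable (fun p : ℝ × Ω => ∏ k : Fin (N + 1), f (fun j => S (p.1 + k * s) p.2 j.succ)) := by
    refine Finset.measurable_fun_prod _ fun k _ => ?_
    exact (wY_meas hS f).comp ((measurable_fst.add_const _).prodMk measurable_snd)
  have hJm : Measurable J := Measurable.lintegral_prod_left' hjm
  have hB : ∀ ω, AE S w ((N + 1 : ℕ) * s) ω ≤ ENNReal.ofReal (a * ((N + 1 : ℕ) * s)) →
      ENNReal.ofReal (Real.exp (-m) * s) ≤ J ω := by
    intro ω hω
    have hpt : ∀ v : ℝ, ENNReal.ofReal (Real.exp (-m) * (1 + m)) ≤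
        ∏ k : Fin (N + 1), f (fun j => S (v + k * s) ω j.succ) +
        ENNReal.ofReal (Real.exp (-m) * θ) * ∑ k : Fin (N + 1),
          ENNReal.ofReal (w (fun j => S (v + k * s) ω j.succ)) := by
      intro v
      rw [← ENNReal.ofReal_sum_of_nonneg (fun k _ => hw _), ← ENNReal.ofReal_mul (by positivity), hf,
        ← ENNReal.ofReal_prod_of_nonneg (fun k _ => (Real.exp_pos _).le), ← Real.exp_sum,
        ← ENNReal.ofReal_add (Real.exp_pos _).le
          (mul_nonneg (by positivity) (Finset.sum_nonneg fun k _ => hw _))]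
      refine ENNReal.ofReal_le_ofReal ?_
      rw [Finset.sum_neg_distrib, ← Finset.mul_sum]
      set W := ∑ k : Fin (N + 1), w (fun j => S (v + k * s) ω j.succ)
      have h1 := Real.add_one_le_exp (m - θ * W)
      have h2 : Real.exp (-(θ * W)) = Real.exp (-m) * Real.exp (m - θ * W) := by
        rw [← Real.exp_add]; congr 1; ring
      rw [h2]
      have := mul_le_mul_of_nonneg_left h1 (Real.exp_pos (-m)).le
      nlinarith
    have hintg : ENNReal.ofReal (Real.exp (-m) * (1 + m)) * ENNReal.ofReal s ≤ J ω +
        ENNReal.ofReal (Real.exp (-m) * θ) * AE S w ((N + 1 : ℕ) * s) ω := by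
      have hwm : ∀ k : Fin (N + 1), Measurable
          (fun v : ℝ => ENNReal.ofReal (w (fun j => S (v + k * s) ω j.succ))) := fun k =>
        (wY_meas hS fun y => ENNReal.ofReal (w y)).comp
          ((measurable_id.add_const _).prodMk (measurable_const (a := ω)))
      have e1 : AE S w ((N + 1 : ℕ) * s) ω = ∫⁻ v in Ioc (0:ℝ) s, ∑ k : Fin (N + 1),
          ENNReal.ofReal (w (fun j => S (v + k * s) ω j.succ)) := by
        unfold AE
        rw [lint_split _ _ hs0.le, lintegral_finsetSum _ fun k _ => hwm k, Finset.sum_range]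
      rw [e1, hJ, ← lintegral_const_mul _ (Finset.measurable_fun_sum _ fun k _ => hwm k),
        ← lintegral_add_left]
      · calc _ = ∫⁻ v in Ioc (0:ℝ) s, ENNReal.ofReal (Real.exp (-m) * (1 + m)) := by
              simp
          _ ≤ _ := lintegral_mono fun v => hpt v
      · exact hjm.comp (measurable_id.prodMk (measurable_const (a := ω)))
    have h3 : ENNReal.ofReal (Real.exp (-m) * θ) * AE S w ((N + 1 : ℕ) * s) ω ≤
        ENNReal.ofReal (Real.exp (-m) * (m * s)) := by
      calc _ ≤ ENNReal.ofReal (Real.exp (-m) * θ) * ENNReal.ofReal (a * ((N + 1 : ℕ) * s)) := by gcongr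
        _ = _ := by
          rw [← ENNReal.ofReal_mul (by positivity)]
          congr 1
          rw [hm]; push_cast; ring
    have h4 : ENNReal.ofReal (Real.exp (-m) * s) + ENNReal.ofReal (Real.exp (-m) * (m * s)) ≤
        J ω + ENNReal.ofReal (Real.exp (-m) * (m * s)) := by
      calc _ = ENNReal.ofReal (Real.exp (-m) * (1 + m)) * ENNReal.ofReal s := by
            rw [← ENNReal.ofReal_add (by positivity) (by positivity), ← ENNReal.ofReal_mul (by positivity)]
            congr 1; ring
        _ ≤ _ := hintg
        _ ≤ _ := by gcongr
    exact (ENNReal.add_le_add_iff_right ENNReal.ofReal_ne_top).1 h4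
  -- step D
  have hD : ∀ v ∈ Ioc (0:ℝ) s, ∫⁻ ω, ∏ k : Fin (N + 1), f (fun j => S (v + k * s) ω j.succ) ∂(P 0) ≤
      ρ ^ N + (N + 1) * tail := by
    intro v hv
    set B : Set (Fin d → ℤ) := (boxF d (s ^ 2) : Set (Fin d → ℤ))
    calc _ ≤ ∫⁻ ω, (∏ k : Fin (N + 1), B.indicator f (fun j => S (v + k * s) ω j.succ) +
          ∑ k : Fin (N + 1), Bᶜ.indicator 1 (fun j => S (v + k * s) ω j.succ)) ∂(P 0) :=
          lintegral_mono fun ω => prod_cut (N + 1) B f hf1 _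
      _ = ∫⁻ ω, (∏ k : Fin (N + 1), B.indicator f (fun j => S (v + k * s) ω j.succ)) ∂(P 0) +
          ∑ k : Fin (N + 1), ∫⁻ ω, Bᶜ.indicator 1 (fun j => S (v + k * s) ω j.succ) ∂(P 0) := by
          have hmm : ∀ (g : (Fin d → ℤ) → ENNReal) (k : Fin (N + 1)),
            Measurable (fun ω => g (fun j => S (v + k * s) ω j.succ)) := fun g k =>
              (measurable_of_countable g).comp (Y_meas hS _)
          rw [lintegral_add_left, lintegral_finsetSum]
          · exact fun k _ => hmm _ k
          · exact Finset.measurable_fun_prod _ fun k _ => hmm _ k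
      _ ≤ ρ ^ N + ∑ k : Fin (N + 1), tail := by
          refine add_le_add ?_ (Finset.sum_le_sum fun k _ => ?_)
          · refine multi_le hS v s hv.1.le hs0.le N (B.indicator f) ?_ ρ ?_
            · intro x
              exact (indicator_le_self' (fun _ _ => zero_le) x).trans (hf1 x)
            · intro x hx
              have hxB : x ∈ boxF d (s ^ 2) := by
                by_contra h
                exact hx (indicator_of_notMem (by exact_mod_cast h) f)
              refine le_trans (ENNReal.tsum_le_tsum fun y => ?_) (hI x hxB)
              gcongr
              exact indicator_le_self' (fun _ _ => zero_le) y
          · have hk : (k : ℝ) ≤ N := by exact_mod_cast Nat.lt_succ_iff.1 k.2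
            have hN : (1:ℝ) ≤ (N + 1 : ℝ) := by linarith [(Nat.cast_nonneg N : (0:ℝ) ≤ N)]
            have hsr : (s:ℝ) = (N + 1 : ℝ) ^ 2 := by rw [hs]; push_cast; ring
            have hle : v + k * s ≤ (N + 1 : ℝ) ^ 4 := by
              have h1 : v + k * s ≤ (N + 1) * s := by nlinarith [hv.2]
              refine h1.trans ?_
              rw [hsr]
              nlinarith [pow_nonneg (by linarith : (0:ℝ) ≤ (N + 1 : ℝ)) 3]
            have ht := Y_tail hd hS ((N + 1 : ℝ) ^ 4) (v + k * s) ((s ^ 2 : ℕ) : ℝ) (one_le_pow₀ hN)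
              (by have := hv.1; positivity) hle
            have hsq : √((N + 1 : ℝ) ^ 4) = (N + 1 : ℝ) ^ 2 := by
              rw [show (N + 1 : ℝ) ^ 4 = ((N + 1 : ℝ) ^ 2) ^ 2 by ring, Real.sqrt_sq (by positivity)]
            have hdiv : ((s ^ 2 : ℕ) : ℝ) / (N + 1 : ℝ) ^ 2 = (N + 1 : ℝ) ^ 2 := by
              push_cast; rw [hsr]; field_simp
            rw [hsq, hdiv] at ht
            refine le_trans (le_of_eq ?_) ht
            have hc : Bᶜ = farSet d ((s ^ 2 : ℕ) : ℝ) := by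
              ext y
              rw [← notMem_boxF]
              simp [B]
            have hmF : MeasurableSet (farSet d ((s ^ 2 : ℕ) : ℝ)) := MeasurableSet.of_discrete
            rw [hc]
            exact lintegral_indicator_one (Y_meas hS _ hmF)
      _ = _ := by simp
  have hEJ : ∫⁻ ω, J ω ∂(P 0) ≤ ENNReal.ofReal s * (ρ ^ N + (N + 1) * tail) := by
    rw [hJ, lintegral_lintegral_swap]
    · calc _ ≤ ∫⁻ v in Ioc (0:ℝ) s, (ρ ^ N + (N + 1) * tail) :=
            setLIntegral_mono' measurableSet_Ioc hD
        _ = _ := by simp [mul_comm]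
    · exact (hjm.comp measurable_swap).aemeasurable
  have hmk := mul_meas_ge_le_lintegral (μ := P 0) hJm (ENNReal.ofReal (Real.exp (-m) * s))
  have hpos : (0:ℝ) < Real.exp (-m) * s := by positivity
  calc _ ≤ P 0 {ω | ENNReal.ofReal (Real.exp (-m) * s) ≤ J ω} := measure_mono fun ω hω => hB ω hω
    _ = (ENNReal.ofReal (Real.exp m) * ENNReal.ofReal (s:ℝ)⁻¹) * (ENNReal.ofReal (Real.exp (-m) * s) *
        P 0 {ω | ENNReal.ofReal (Real.exp (-m) * s) ≤ J ω}) := by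
        rw [← mul_assoc, ← ENNReal.ofReal_mul (by positivity), ← ENNReal.ofReal_mul (by positivity)]
        have : Real.exp m * (s:ℝ)⁻¹ * (Real.exp (-m) * s) = 1 := by
          rw [Real.exp_neg]; field_simp
        rw [this]; simp
    _ ≤ (ENNReal.ofReal (Real.exp m) * ENNReal.ofReal (s:ℝ)⁻¹) *
        (ENNReal.ofReal s * (ρ ^ N + (N + 1) * tail)) := by
        exact mul_le_mul' le_rfl (hmk.trans hEJ)
    _ = ENNReal.ofReal (Real.exp m) * (ENNReal.ofReal (s:ℝ)⁻¹ * ENNReal.ofReal s) * (ρ ^ N + (N + 1) * tail) := by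
        ring
    _ = _ := by
        rw [← ENNReal.ofReal_mul (by positivity), inv_mul_cancel₀ hs0.ne']
        simp

end walk

open MeasureTheory ProbabilityTheory Filter Set

lemma decay_bound (θa κ C : ℝ) (hC : 0 < C) (hκ : 0 < κ) (hκ1 : κ < 1) (p : ℕ) :
    ∀ᶠ N : ℕ in atTop, Real.exp θa * κ ^ N + Real.exp (θa * (N + 1)) * ((N + 1) *
      (C * Real.exp (-((N + 1 : ℝ) ^ 2)))) ≤ (((N : ℝ) + 2) ^ p)⁻¹ := by
  have h1 := tendsto_pow_const_mul_const_pow_of_abs_lt_one p (r := κ) (by rw [abs_of_pos hκ]; exact hκ1)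
  have he : Real.exp (-1) < 1 := by rw [Real.exp_lt_one_iff]; norm_num
  have h2 := tendsto_pow_const_mul_const_pow_of_abs_lt_one (p + 1) (r := Real.exp (-1))
    (by rw [abs_of_pos (Real.exp_pos _)]; exact he)
  have h1' := (tendsto_add_atTop_iff_nat 2).2 h1
  have h2' := (tendsto_add_atTop_iff_nat 2).2 h2
  filter_upwards [h1'.eventually_le_const (show (0:ℝ) < κ ^ 2 / (2 * Real.exp θa) by positivity),
    h2'.eventually_le_const (show (0:ℝ) < 1 / (2 * C * Real.exp 1) by positivity),
    eventually_ge_atTop ⌈θa⌉₊] with N hN1 hN2 hN3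
  have hNθ : θa ≤ N := (Nat.le_ceil _).trans (by exact_mod_cast hN3)
  push_cast at hN1 hN2
  set q : ℝ := (N : ℝ) + 2 with hq
  have hq0 : 0 < q := by positivity
  have hq1 : 0 < q ^ p := by positivity
  have b1 : Real.exp θa * κ ^ N ≤ (q ^ p)⁻¹ / 2 := by
    have : q ^ p * (κ ^ N * κ ^ 2) ≤ κ ^ 2 / (2 * Real.exp θa) := by rw [← pow_add]; exact hN1
    rw [le_div_iff₀ (by positivity)] at this
    rw [le_div_iff₀ (by norm_num), inv_eq_one_div, le_div_iff₀ hq1]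
    have hk2 : 0 < κ ^ 2 := by positivity
    refine le_of_mul_le_mul_right ?_ hk2
    linarith
  have b2 : Real.exp (θa * (N + 1)) * ((N + 1) * (C * Real.exp (-((N + 1 : ℝ) ^ 2)))) ≤ (q ^ p)⁻¹ / 2 := by
    have e1 : Real.exp (θa * (N + 1)) * Real.exp (-((N + 1 : ℝ) ^ 2)) ≤ Real.exp (-1) ^ (N + 2) * Real.exp 1 := by
      rw [← Real.exp_nat_mul, ← Real.exp_add, ← Real.exp_add]
      refine Real.exp_le_exp.2 ?_
      push_cast
      have : (0:ℝ) ≤ N := Nat.cast_nonneg N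
      nlinarith
    have e2 : Real.exp (θa * (N + 1)) * ((N + 1) * (C * Real.exp (-((N + 1 : ℝ) ^ 2)))) ≤
        C * q * (Real.exp (-1) ^ (N + 2) * Real.exp 1) := by
      calc _ = C * (N + 1) * (Real.exp (θa * (N + 1)) * Real.exp (-((N + 1 : ℝ) ^ 2))) := by ring
        _ ≤ _ := by
          gcongr
          rw [hq]; linarith
    refine e2.trans ?_
    rw [le_div_iff₀ (by positivity)] at hN2
    rw [le_div_iff₀ (by norm_num), inv_eq_one_div, le_div_iff₀ hq1]
    calc _ = q ^ (p + 1) * Real.exp (-1) ^ (N + 2) * (2 * C * Real.exp 1) := by rw [pow_succ]; ring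
      _ ≤ 1 := hN2
  linarith

section walk
variable {Ω : Type*} [MeasurableSpace Ω]
variable {d : ℕ} {P : (Fin (d + 1) → ℤ) → Measure Ω} {S : ℝ → Ω → (Fin (d + 1) → ℤ)}

lemma AE_mono (w : (Fin d → ℤ) → ℝ) (t t' : ℝ) (h : t ≤ t') (ω : Ω) : AE S w t ω ≤ AE S w t' ω := by
  unfold AE
  exact lintegral_mono_set (Ioc_subset_Ioc_right h)

lemma propLT {α : ℝ} {Ωz : Type*} [MeasurableSpace Ωz] {μ : Measure Ωz} {z : (Fin d → ℤ) → Ωz → ℝ}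
    (hz : IsScenery d α μ z) (hd : 1 ≤ d) (hα : 1 < α) (hS : IsCTSRW (d + 1) P S)
    (δ : ℝ) (hδ : 0 < δ) (hδc : δ < ∫ ζ, z 0 ζ ∂μ) (K : ℕ) :
    ∀ᵐ ζ ∂μ, ∀ᶠ t : ℝ in atTop,
      P 0 {ω | AE S (fun y => z y ζ) t ω ≤ ENNReal.ofReal (((∫ ζ, z 0 ζ ∂μ) - δ) * t)} ≤
        ENNReal.ofReal (t ^ K)⁻¹ := by
  set c := ∫ ζ, z 0 ζ ∂μ with hc
  obtain ⟨θ, hθ, hL⟩ := laplace hz hα (δ / 4) (by positivity)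
  rw [← hc] at hL
  set φ := ∫ ζ, Real.exp (-(θ * z 0 ζ)) ∂μ with hφ
  have hφ0 : 0 ≤ φ := integral_nonneg fun ζ => (Real.exp_pos _).le
  set a := c - δ / 2 with ha
  have ha0 : 0 < a := by linarith
  set η := Real.exp (-(θ * (δ / 4))) with hη
  have hη1 : η < 1 := by
    rw [hη, Real.exp_lt_one_iff]
    have : 0 < θ * (δ / 4) := by positivity
    linarith
  have hη0 : 0 < η := Real.exp_pos _
  set ε := (1 - η) / 2 * Real.exp (-(θ * a)) with hε
  have hε0 : 0 < ε := mul_pos (by linarith) (Real.exp_pos _)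
  set κ := (1 + η) / 2 with hκ
  have hκb : Real.exp (θ * a) * (φ + ε) ≤ κ := by
    have h1 : φ ≤ Real.exp (-(θ * (c - δ / 4))) := by
      have := Real.add_one_le_exp (-(θ * (c - δ / 4)))
      linarith
    have h2 : Real.exp (θ * a) * φ ≤ η := by
      calc _ ≤ Real.exp (θ * a) * Real.exp (-(θ * (c - δ / 4))) := by gcongr
        _ = η := by rw [← Real.exp_add, hη]; congr 1; rw [ha]; ring
    have h3 : Real.exp (θ * a) * ε = (1 - η) / 2 := by
      rw [hε, Real.exp_neg]; field_simp
    rw [mul_add, h3, hκ]; linarith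
  set C : ℝ := 2 * d * Real.exp 2 with hC
  have hC0 : 0 < C := by
    have : (0:ℝ) < d := by exact_mod_cast hd
    positivity
  filter_upwards [propI hz hd θ ε hθ hε0] with ζ hI
  have hN : ∀ᶠ N : ℕ in atTop, P 0 {ω | AE S (fun y => z y ζ) ((N + 1 : ℝ) ^ 3) ω ≤
      ENNReal.ofReal (a * (N + 1 : ℝ) ^ 3)} ≤ ENNReal.ofReal (((N : ℝ) + 2) ^ (3 * K))⁻¹ := by
    have hsq : Tendsto (fun N : ℕ => (N + 1) ^ 2) atTop atTop :=
      tendsto_atTop_mono (fun N => by show N ≤ (N + 1) ^ 2; nlinarith) tendsto_id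
    filter_upwards [hsq.eventually hI, decay_bound (θ * a) κ C hC0 (by linarith) (by linarith) (3 * K)]
      with N hN1 hN2
    have h := lower_core hd hS (fun y => z y ζ) (fun y => hz.nonneg y ζ) θ a hθ ha0.le N ((N + 1) ^ 2) rfl
      _ hN1
    have e : ((N + 1 : ℕ) : ℝ) * (((N + 1) ^ 2 : ℕ) : ℝ) = (N + 1 : ℝ) ^ 3 := by push_cast; ring
    rw [e] at h
    refine h.trans (le_trans (le_of_eq ?_) (ENNReal.ofReal_le_ofReal
      (le_trans (add_le_add_left (show Real.exp (θ * a * (N + 1)) * (φ + ε) ^ N ≤ 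
        Real.exp (θ * a) * κ ^ N from ?_) _) hN2)))
    · rw [ENNReal.ofReal_add (p := Real.exp (θ * a * (N + 1)) * (φ + ε) ^ N) (by positivity) (by positivity), mul_add,
        ENNReal.ofReal_mul (p := Real.exp (θ * a * (N + 1))) (Real.exp_pos _).le,
        ENNReal.ofReal_pow (by positivity)]
      congr 1
      rw [ENNReal.ofReal_mul (p := Real.exp (θ * a * (N + 1))) (Real.exp_pos _).le,
        ENNReal.ofReal_mul (p := (N : ℝ) + 1) (by positivity)]
      have e3 : ENNReal.ofReal ((N : ℝ) + 1) = N + 1 := by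
        rw [ENNReal.ofReal_add (by positivity) (by norm_num)]
        simp
      rw [e3]
    · calc _ = Real.exp (θ * a) * (Real.exp (θ * a) * (φ + ε)) ^ N := by
            rw [mul_pow, ← Real.exp_nat_mul, ← mul_assoc, ← Real.exp_add]
            congr 2; ring
        _ ≤ _ := by gcongr
  have hratio : ∀ᶠ N : ℕ in atTop, (c - δ) * (N + 2 : ℝ) ^ 3 ≤ a * (N + 1 : ℝ) ^ 3 := by
    have h0 : Tendsto (fun N : ℕ => (1 + 1 / ((N : ℝ) + 1)) ^ 3) atTop (nhds ((1 + 0) ^ 3)) :=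
      (tendsto_const_nhds.add tendsto_one_div_add_atTop_nhds_zero_nat).pow 3
    have h1 : (1 + (0:ℝ)) ^ 3 < a / (c - δ) := by
      rw [lt_div_iff₀ (by linarith)]; rw [ha]; linarith
    filter_upwards [h0.eventually_lt_const h1] with N hN
    rw [lt_div_iff₀ (by linarith)] at hN
    have hp : (0:ℝ) < (N + 1 : ℝ) ^ 3 := by positivity
    have e : (N + 2 : ℝ) ^ 3 = (1 + 1 / ((N : ℝ) + 1)) ^ 3 * (N + 1 : ℝ) ^ 3 := by
      rw [← mul_pow]; congr 1; field_simp; ring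
    rw [e]
    nlinarith
  have hfl : Tendsto (fun t : ℝ => ⌊t ^ (1 / 3 : ℝ)⌋₊) atTop atTop :=
    tendsto_nat_floor_atTop.comp (tendsto_rpow_atTop (by norm_num))
  have hfl1 : Tendsto (fun t : ℝ => ⌊t ^ (1 / 3 : ℝ)⌋₊ - 1) atTop atTop :=
    (tendsto_sub_atTop_nat 1).comp hfl
  filter_upwards [hfl1.eventually hN, hfl1.eventually hratio, hfl.eventually_ge_atTop 1,
    eventually_gt_atTop 0] with t h1 h2 h3 h4
  obtain ⟨N, hNr⟩ : ∃ N, ⌊t ^ (1 / 3 : ℝ)⌋₊ = N + 1 := Nat.exists_eq_succ_of_ne_zero (by omega)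
  rw [hNr, Nat.add_sub_cancel] at h1 h2
  have hr0 : 0 ≤ t ^ (1 / 3 : ℝ) := by positivity
  have ht3 : (t ^ (1 / 3 : ℝ)) ^ 3 = t := by
    rw [← Real.rpow_natCast, ← Real.rpow_mul h4.le]; norm_num
  have hlo : (N + 1 : ℝ) ≤ t ^ (1 / 3 : ℝ) := by
    have := Nat.floor_le hr0; rw [hNr] at this; exact_mod_cast this
  have hhi : t ^ (1 / 3 : ℝ) ≤ (N + 2 : ℝ) := by
    have := Nat.lt_floor_add_one (t ^ (1 / 3 : ℝ)); rw [hNr] at this; push_cast at this; linarith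
  have hlo3 : (N + 1 : ℝ) ^ 3 ≤ t := by rw [← ht3]; gcongr
  have hhi3 : t ≤ (N + 2 : ℝ) ^ 3 := by
    calc t = (t ^ (1 / 3 : ℝ)) ^ 3 := ht3.symm
      _ ≤ _ := by gcongr
  refine le_trans (measure_mono ?_) (h1.trans (ENNReal.ofReal_le_ofReal ?_))
  · intro ω hω
    refine (AE_mono _ _ _ hlo3 ω).trans (le_trans hω (ENNReal.ofReal_le_ofReal ?_))
    refine le_trans ?_ h2
    exact mul_le_mul_of_nonneg_left hhi3 (by linarith)
  · rw [pow_mul]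
    gcongr

end walk

open MeasureTheory ProbabilityTheory Filter Set

lemma core_bound {Ω : Type*} [MeasurableSpace Ω] (P : Measure Ω) [IsProbabilityMeasure P]
    (E : Set Ω) (hE : MeasurableSet E) (A : Ω → ENNReal) (hA : Measurable A) (hfin : ∀ᵐ ω ∂P, A ω < ⊤)
    (c t δ p π : ℝ) (hc : 0 < c) (ht : 0 < t) (hδ : 0 < δ) (hδc : δ ≤ c / 2) (hp : 0 ≤ p) (hπ : 0 ≤ π)
    (hPE : P E = ENNReal.ofReal p) (h1 : ∫⁻ ω in E, A ω ∂P ≤ ENNReal.ofReal ((c + δ) * (t * p)))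
    (h2 : P {ω | A ω ≤ ENNReal.ofReal ((c - δ) * t)} ≤ ENNReal.ofReal π) (k : ℤ) :
    |(∫⁻ ω in E, qE (A ω).toReal k ∂P).toReal - qk (c * t) k * p| ≤
      4 / ((c * t / 2) * √(c * t / 2)) * (3 * δ * t * p + 2 * (c * t) * π) + π := by
  set L := 4 / ((c * t / 2) * √(c * t / 2)) with hL
  have hct : 0 < c * t := by positivity
  have hL0 : 0 ≤ L := by positivity
  set B := {ω | A ω ≤ ENNReal.ofReal ((c - δ) * t)} with hB
  have hBm : MeasurableSet B := measurableSet_le hA measurable_const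
  set a : Ω → ℝ := fun ω => (A ω).toReal with ha
  have ham : Measurable a := hA.ennreal_toReal
  have ha0 : ∀ ω, 0 ≤ a ω := fun ω => ENNReal.toReal_nonneg
  have hqm : Measurable fun ω => qk (a ω) k := (qk_meas k).comp ham
  have hq0 : ∀ ω, 0 ≤ qk (a ω) k := fun ω => qk_nonneg _ (ha0 ω) _
  have hq1 : ∀ ω, qk (a ω) k ≤ 1 := fun ω => qk_le_one _ (ha0 ω) _
  have hqi : Integrable (fun ω => qk (a ω) k) (P.restrict E) :=
    Integrable.of_bound hqm.aestronglyMeasurable 1 (Eventually.of_forall fun ω => by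
      rw [Real.norm_eq_abs, abs_of_nonneg (hq0 ω)]; exact hq1 ω)
  have hnum : (∫⁻ ω in E, qE (A ω).toReal k ∂P).toReal = ∫ ω in E, qk (a ω) k ∂P := by
    rw [integral_eq_lintegral_of_nonneg_ae (Eventually.of_forall hq0) hqm.aestronglyMeasurable]
    rfl
  have hPEr : (P.restrict E).real univ = p := by
    rw [Measure.real, Measure.restrict_apply_univ, hPE, ENNReal.toReal_ofReal hp]
  have hden : qk (c * t) k * p = ∫ ω in E, qk (c * t) k ∂P := by
    rw [integral_const, hPEr, smul_eq_mul, mul_comm]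
  have hAi : ∫⁻ ω in E, A ω ∂P ≠ ⊤ := ne_top_of_le_ne_top ENNReal.ofReal_ne_top h1
  have hai : Integrable a (P.restrict E) := integrable_toReal_of_lintegral_ne_top hA.aemeasurable hAi
  have haI : ∫ ω in E, a ω ∂P ≤ (c + δ) * (t * p) := by
    rw [ha, integral_toReal hA.aemeasurable (ae_restrict_of_ae hfin)]
    exact ENNReal.toReal_le_of_le_ofReal (by positivity) h1
  set b : Ω → ℝ := B.indicator (fun _ => (1:ℝ)) with hb
  have hbi : Integrable b (P.restrict E) := (integrable_const (1:ℝ)).indicator hBm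
  have hbI : ∫ ω in E, b ω ∂P ≤ π := by
    rw [hb, integral_indicator_const _ hBm, smul_eq_mul, mul_one, Measure.real]
    exact ENNReal.toReal_le_of_le_ofReal hπ ((Measure.restrict_apply_le _ _).trans h2)
  rw [hnum, hden, ← integral_sub hqi (integrable_const _)]
  have hpt : ∀ᵐ ω ∂(P.restrict E), ‖qk (a ω) k - qk (c * t) k‖ ≤
      L * (a ω + (2 * δ * t - c * t) + 2 * (c * t) * b ω) + b ω := by
    filter_upwards [ae_restrict_of_ae hfin] with ω hω
    rw [Real.norm_eq_abs]
    have hbdef : (b ω = 1) ∨ (b ω = 0 ∧ (c - δ) * t < a ω) := by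
      by_cases h : ω ∈ B
      · left; rw [hb, indicator_of_mem h]
      · right
        refine ⟨by rw [hb, indicator_of_notMem h], ?_⟩
        have h' : ENNReal.ofReal ((c - δ) * t) < A ω := not_le.1 h
        exact (ENNReal.ofReal_lt_iff_lt_toReal (mul_nonneg (by linarith) ht.le) hω.ne).1 h'
    have hb0 : 0 ≤ b ω := by rcases hbdef with h | h <;> [rw [h]; rw [h.1]]; norm_num
    have habs : |a ω - c * t| ≤ a ω + (2 * δ * t - c * t) + 2 * (c * t) * b ω := by
      rw [abs_le]
      have := ha0 ω
      have hdt : 0 < δ * t := by positivity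
      rcases hbdef with h | h
      · rw [h]; constructor <;> nlinarith
      · rw [h.1]; constructor <;> nlinarith [h.2]
    by_cases hlow : c * t / 2 ≤ a ω
    · have : |qk (a ω) k - qk (c * t) k| ≤ L * |a ω - c * t| := by
        have key : ∀ s s' : ℝ, c * t / 2 ≤ s → s ≤ s' → |qk s' k - qk s k| ≤ L * (s' - s) := by
          intro s s' hs hss
          have hs0 : 0 < c * t / 2 := by positivity
          refine (qk_lip s s' (hs0.trans_le hs) hss k).trans ?_
          have : 0 < s := hs0.trans_le hs
          rw [hL, div_mul_eq_mul_div]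
          have : 0 ≤ s' - s := by linarith
          gcongr
        rcases le_total (a ω) (c * t) with h | h
        · have := key _ _ hlow h
          rw [abs_sub_comm, abs_sub_comm (a ω), abs_of_nonneg (sub_nonneg.2 h)]; exact this
        · have := key (c * t) _ (by linarith) h
          rw [abs_of_nonneg (sub_nonneg.2 h)]; exact this
      nlinarith [mul_le_mul_of_nonneg_left habs hL0]
    · push Not at hlow
      have hb1 : b ω = 1 := by
        rcases hbdef with h | h
        · exact h
        · exfalso
          have := h.2
          nlinarith
      have h3 : |qk (a ω) k - qk (c * t) k| ≤ 1 := by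
        rw [abs_le]
        have := hq0 ω; have := hq1 ω; have := qk_nonneg (c * t) hct.le k; have := qk_le_one (c * t) hct.le k
        constructor <;> linarith
      have := mul_nonneg hL0 ((abs_nonneg _).trans habs)
      linarith
  have hi1 : Integrable (fun ω => a ω + (2 * δ * t - c * t)) (P.restrict E) := hai.add (integrable_const _)
  have hi2 : Integrable (fun ω => 2 * (c * t) * b ω) (P.restrict E) := hbi.const_mul _
  have hi3 : Integrable (fun ω => L * (a ω + (2 * δ * t - c * t) + 2 * (c * t) * b ω)) (P.restrict E) :=
    (hi1.add hi2).const_mul _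
  have hfinal := norm_integral_le_of_norm_le (hi3.add hbi) hpt
  rw [Real.norm_eq_abs] at hfinal
  refine hfinal.trans ?_
  have e : ∫ ω in E, (L * (a ω + (2 * δ * t - c * t) + 2 * (c * t) * b ω) + b ω) ∂P =
      L * ((∫ ω in E, a ω ∂P) + (2 * δ * t - c * t) * p + 2 * (c * t) * ∫ ω in E, b ω ∂P) + ∫ ω in E, b ω ∂P := by
    rw [integral_add hi3 hbi, integral_const_mul, integral_add hi1 hi2, integral_const_mul,
      integral_add hai (integrable_const _), integral_const, hPEr, smul_eq_mul, mul_comm p]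
  have e2 : ∫ ω, ((fun ω => L * (a ω + (2 * δ * t - c * t) + 2 * (c * t) * b ω)) + b) ω ∂(P.restrict E) = _ := e
  rw [e2]
  gcongr
  have := mul_le_mul_of_nonneg_left hbI (show 0 ≤ 2 * (c * t) by positivity)
  nlinarith

open MeasureTheory ProbabilityTheory Filter Set

lemma final_algebra (c t u δ ε c1 c2 p π : ℝ) (d : ℕ) (hc : 0 < c) (ht : 1 ≤ t) (hu : u = √(c * t))
    (hc1 : 0 < c1) (hc2 : 0 < c2) (hδ : 0 < δ) (hδ1 : δ ≤ ε * c * c1 / 72)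
    (hp : c2 * (1 / √t) ^ d ≤ p) (hπ : π = (t ^ (d + 1))⁻¹) (hε : 0 < ε)
    (hlast : (24 + u) / t ≤ ε * c1 * c2 / 2) :
    4 / ((c * t / 2) * √(c * t / 2)) * (3 * δ * t * p + 2 * (c * t) * π) + π ≤ ε * (c1 / u * p) := by
  have ht0 : 0 < t := by linarith
  have hct : 0 < c * t := by positivity
  have hu0 : 0 < u := by rw [hu]; exact Real.sqrt_pos.2 hct
  have hu2 : c * t = u ^ 2 := by rw [hu, Real.sq_sqrt hct.le]
  have hst : 0 < √t := Real.sqrt_pos.2 ht0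
  have hp0 : 0 < p := lt_of_lt_of_le (by positivity) hp
  have hπ0 : 0 < π := by rw [hπ]; positivity
  have hsl : 2 * u / 3 ≤ √(c * t / 2) := by
    refine Real.le_sqrt_of_sq_le ?_
    rw [hu2]; nlinarith
  have hL : 4 / ((c * t / 2) * √(c * t / 2)) ≤ 12 / u ^ 3 := by
    rw [div_le_div_iff₀ (by positivity) (by positivity), hu2]
    rw [hu2] at hsl
    have := mul_le_mul_of_nonneg_left hsl (show 0 ≤ 6 * u ^ 2 by positivity)
    nlinarith
  have hπp : π * (c2 * t) ≤ p := by
    refine le_trans ?_ hp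
    have h1 : √t ≤ t := by
      rw [Real.sqrt_le_left ht0.le]; nlinarith
    have h2 : (t ^ d)⁻¹ ≤ (1 / √t) ^ d := by
      rw [one_div, inv_pow]
      gcongr
    rw [hπ]
    calc _ = c2 * (t ^ d)⁻¹ := by rw [pow_succ]; field_simp
      _ ≤ _ := by gcongr
  have e1 : 12 / u ^ 3 * (3 * δ * t * p + 2 * (c * t) * π) + π = (36 * δ * p / c + (24 + u) * π) / u := by
    have : t = u ^ 2 / c := by rw [← hu2]; field_simp
    rw [hu2, this]; field_simp; ring
  have b1 : 36 * δ * p / c ≤ ε * c1 * p / 2 := by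
    rw [div_le_iff₀ hc]
    have := mul_le_mul_of_nonneg_left hδ1 (show 0 ≤ 36 * p by positivity)
    nlinarith
  have b2 : (24 + u) * π ≤ ε * c1 * p / 2 := by
    rw [div_le_iff₀ ht0] at hlast
    calc _ ≤ ε * c1 * c2 / 2 * t * π := by gcongr
      _ = ε * c1 / 2 * (π * (c2 * t)) := by ring
      _ ≤ ε * c1 / 2 * p := by gcongr
      _ = _ := by ring
  calc _ ≤ 12 / u ^ 3 * (3 * δ * t * p + 2 * (c * t) * π) + π := by gcongr
    _ = _ := e1
    _ ≤ (ε * c1 * p) / u := by gcongr; linarith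
    _ = _ := by ring

lemma eucl_bounds (d : ℕ) (x : ℤ × (Fin d → ℤ)) (r : ℝ) (h : euclNormProd d x ≤ r) :
    |(x.1 : ℝ)| ≤ r ∧ ∀ i, |(x.2 i : ℝ)| ≤ r := by
  unfold euclNormProd at h
  have hs : ∀ i, (x.2 i : ℝ) ^ 2 ≤ ∑ i, (x.2 i : ℝ) ^ 2 := fun i =>
    Finset.single_le_sum (f := fun i => (x.2 i : ℝ) ^ 2) (fun j _ => sq_nonneg _) (Finset.mem_univ i)
  have hs0 : 0 ≤ ∑ i, (x.2 i : ℝ) ^ 2 := Finset.sum_nonneg fun j _ => sq_nonneg _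
  refine ⟨(Real.abs_le_sqrt ?_).trans h, fun i => (Real.abs_le_sqrt ?_).trans h⟩
  · linarith
  · have := hs i; nlinarith [sq_nonneg (x.1 : ℝ)]

lemma fixed_eps (d : ℕ) (hd : 1 ≤ d) (α : ℝ) (hα : max ((d : ℝ) / 2) 1 < α)
    {Ωz Ωw : Type*} [MeasurableSpace Ωz] [MeasurableSpace Ωw]
    (μ : Measure Ωz) (z : (Fin d → ℤ) → Ωz → ℝ) (hz : IsScenery d α μ z)
    (P : (Fin (d + 1) → ℤ) → Measure Ωw) (S : ℝ → Ωw → (Fin (d + 1) → ℤ))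
    (hS : IsCTSRW (d + 1) P S) (R : ℝ) (hR : 0 < R) (ε : ℝ) (hε : 0 < ε) :
    ∀ᵐ ζ ∂ μ, ∀ᶠ t in (atTop : Filter ℝ),
      ∀ x : ℤ × (Fin d → ℤ), euclNormProd d x ≤ R * t ^ ((1 : ℝ) / 2) →
        |((P 0) {ω | layeredWalk d z S t ζ ω = x}).toReal
            / ((P 0) {ω | (S ((∫ ζ', z 0 ζ' ∂ μ) * t) ω 0, fun i => S t ω i.succ) = x}).toReal
          - 1| ≤ ε := by
  have hα1 : 1 < α := lt_of_le_of_lt (le_max_right _ _) hα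
  have hc : 0 < ∫ ζ, z 0 ζ ∂μ := scen_mean_pos hz hα1
  set c := ∫ ζ, z 0 ζ ∂μ with hcdef
  have := hS.prob 0
  obtain ⟨c1, hc1, hq⟩ := qk_lower (R / √c)
  obtain ⟨c2, hc2, hpl⟩ := pk_lower d R
  set δ := min (c / 2) (ε * c * c1 / 72) with hδd
  have hδ : 0 < δ := lt_min (by positivity) (by positivity)
  have hδc : δ ≤ c / 2 := min_le_left _ _
  have hδ1 : δ ≤ ε * c * c1 / 72 := min_le_right _ _
  have htc : Tendsto (fun t : ℝ => c * t) atTop atTop := tendsto_id.const_mul_atTop hc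
  have hlim : Tendsto (fun t : ℝ => (24 + √(c * t)) / t) atTop (nhds 0) := by
    have h1 : Tendsto (fun t : ℝ => 24 / t) atTop (nhds 0) := tendsto_const_nhds.div_atTop tendsto_id
    have h2 : Tendsto (fun t : ℝ => √c / √t) atTop (nhds 0) :=
      tendsto_const_nhds.div_atTop Real.tendsto_sqrt_atTop
    have h3 := h1.add h2
    rw [add_zero] at h3
    refine h3.congr' ?_
    filter_upwards [eventually_gt_atTop 0] with t ht
    rw [Real.sqrt_mul hc.le, add_div]
    congr 1
    have hst : 0 < √t := Real.sqrt_pos.2 ht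
    rw [div_eq_div_iff hst.ne' ht.ne', mul_assoc, Real.mul_self_sqrt ht.le]
  filter_upwards [propII hz hd hα R δ hR.le hδ, propLT hz hd hα1 hS δ hδ (by linarith) (d + 1),
    propIII hz hα1 hd] with ζ hII hLT hIII
  filter_upwards [hII, hLT, htc.eventually hq, hpl, eventually_ge_atTop 1,
    hlim.eventually_le_const (show 0 < ε * c1 * c2 / 2 by positivity)] with t h2 hL hq hpl ht hlast
  intro x hx
  have ht0 : 0 < t := by linarith
  rw [← Real.sqrt_eq_rpow] at hx
  obtain ⟨hx1, hx2⟩ := eucl_bounds d x _ hx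
  have hct : 0 < c * t := by positivity
  have hE : MeasurableSet {ω | (fun j : Fin d => S t ω j.succ) = x.2} :=
    (Y_meas hS t) (measurableSet_singleton x.2)
  set p := pk d t x.2 with hp
  have hp0 : 0 ≤ p := pk_nonneg d hd t ht0.le _
  have hpc := hpl x.2 hx2
  have hpp : 0 < p := lt_of_lt_of_le (by positivity) hpc
  have hqc : c1 / √(c * t) ≤ qk (c * t) x.1 := by
    refine hq x.1 ?_
    rw [Real.sqrt_mul hc.le, ← mul_assoc, div_mul_cancel₀ _ (Real.sqrt_pos.2 hc).ne']
    exact hx1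
  have hqp : 0 < qk (c * t) x.1 := lt_of_lt_of_le (by positivity) hqc
  have hcore := core_bound (P 0) _ hE (AE S (fun y => z y ζ) t) (AE_meas hS _ t)
    (AE_fin hS _ t (hIII t)) c t δ p ((t ^ (d + 1))⁻¹) hc ht0 hδ hδc hp0 (by positivity)
    (law_Y hS t ht0.le x.2) (by rw [AE_on hS]; exact h2 x.2 hx2) hL x.1
  have hden : ((P 0) {ω | (S (c * t) ω 0, fun i : Fin d => S t ω i.succ) = x}).toReal = qk (c * t) x.1 * p := by
    have e : {ω | (S (c * t) ω 0, fun i : Fin d => S t ω i.succ) = x} =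
        {ω | S (c * t) ω 0 = x.1 ∧ (fun j : Fin d => S t ω j.succ) = x.2} := by
      ext ω; exact Prod.ext_iff
    rw [e, law_den hd hS _ _ hct.le ht0.le, ENNReal.toReal_mul]
    rw [qE, pE, ENNReal.toReal_ofReal hqp.le, ENNReal.toReal_ofReal hp0]
  rw [num_eq hd hS z hz.nonneg t ht0.le ζ x, hden]
  have halg := final_algebra c t (√(c * t)) δ ε c1 c2 p _ d hc ht rfl hc1 hc2 hδ hδ1 hpc rfl hε hlast
  have hD : 0 < qk (c * t) x.1 * p := mul_pos hqp hpp
  rw [div_sub_one hD.ne', abs_div, abs_of_pos hD, div_le_iff₀ hD]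
  refine hcore.trans (halg.trans ?_)
  gcongr

/-- Proposition (quenched local CLT, `α > max(d/2,1)`): for every `R > 0`, ℙ-a.s.,
`sup_{|x| ≤ R√t} |P₀^ω(X_t = x)/P̄₀(X_t = x) − 1| → 0` as `t → ∞`, where
`P̄₀(X_t = x) = P₀((S¹_{𝔼[z(0)]t}, S²_t) = x)` is the averaged-conductance kernel. -/
theorem stmt8 (d : ℕ) (hd : 1 ≤ d) (α : ℝ) (hα : max ((d : ℝ) / 2) 1 < α)
    {Ωz Ωw : Type*} [MeasurableSpace Ωz] [MeasurableSpace Ωw]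
    (μ : Measure Ωz) (z : (Fin d → ℤ) → Ωz → ℝ) (hz : IsScenery d α μ z)
    (P : (Fin (d + 1) → ℤ) → Measure Ωw) (S : ℝ → Ωw → (Fin (d + 1) → ℤ))
    (hS : IsCTSRW (d + 1) P S) :
    ∀ R > (0 : ℝ), ∀ᵐ ζ ∂ μ, ∀ ε > (0 : ℝ), ∀ᶠ t in (atTop : Filter ℝ),
      ∀ x : ℤ × (Fin d → ℤ), euclNormProd d x ≤ R * t ^ ((1 : ℝ) / 2) →
        |((P 0) {ω | layeredWalk d z S t ζ ω = x}).toReal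
            / ((P 0) {ω | (S ((∫ ζ', z 0 ζ' ∂ μ) * t) ω 0, fun i => S t ω i.succ) = x}).toReal
          - 1| ≤ ε := by
  intro R hR
  have h : ∀ᵐ ζ ∂ μ, ∀ n : ℕ, _ := ae_all_iff.2 fun n : ℕ =>
    fixed_eps d hd α hα μ z hz P S hS R hR (1 / ((n : ℝ) + 1)) (by positivity)
  filter_upwards [h] with ζ hζ ε hε
  obtain ⟨n, hn⟩ := exists_nat_one_div_lt hε
  filter_upwards [hζ n] with t ht x hx
  exact (ht x hx).trans hn.le
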